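/- Let r = p^ν be a prime power, d ≥ 1, k = ⌈(r-1)d/r⌉, s = (r-1)d - r(k-1), m = (2r-1)(k+1), and let [m] = C_1 ⊎ ... ⊎ C_{k+1} with |C_i| = 2r-1 be a coloring of the vertices of the simplex on m vertices. Then for every continuous map f from the (m-1)-simplex to R^d there exist r pairwise disjoint rainbow faces Δ_1, ..., Δ_r with f(Δ_1) ∩ ... ∩ f(Δ_r) ≠ ∅, such that |Δ_i| ≤ k+1 for i ≤ s and |Δ_i| ≤ k for i > s. -/

import Mathlib

open scoped Classical

/-- The geometric face of the standard `(m-1)`-simplex spanned by the vertex set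
`Δ ⊆ [m]`. -/
def simplexFace (m : ℕ) (Δ : Finset (Fin m)) : Set (Fin m → ℝ) :=
  {x ∈ stdSimplex ℝ (Fin m) | ∀ v, v ∉ Δ → x v = 0}

/-!
Call a pair (vertex, face index) a piece, with the indices ranging over `G = (ℤ/p)^ν`. The families
of disjoint rainbow faces in question form a complex of sets of pieces, a balanced chessboard
complex, on which `G` acts freely by translation and which is acyclic below `(r - 1)(d + 1) + 1`.
A point of its realization yields `r` points in the cone over the simplex, hence `r` values in
`ℝ^(d+1)`, and all these values have to be made equal. Arranging the indices in a `p`-ary tree of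
depth `ν`, they are equal as soon as certain imbalances vanish, one for each internal node of the
tree, child, and coordinate.

If the imbalances never vanished simultaneously, then a fine barycentric subdivision, each vertex of
which is labelled by a large imbalance, would give an equivariant chain map into a join of
boundaries of simplices. By acyclicity, the complex of pieces receives an equivariant map (a
*system*) from the tensor product of the periodic resolutions of `ℤ/p`, so the join would receive a
system one degree longer than its dimension. The obstruction to that lengthening can be read off
from the coefficients of the facets and does not depend on the system, and for one explicit system
it is a power of `((p - 1) / 2)!` up to sign, hence nonzero modulo `p`.
-/

namespace BalancedTverberg

open Finset (card_le_card mem_filter mem_erase mem_sdiff)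

/-! ### Ordered chains -/

section Chains

variable {R : Type*} [CommRing R] {V V' V'' : Type*} {M : Type*} [AddCommGroup M] [Module R M]

/-- Ordered simplicial chains: linear combinations of finite lists of vertices. Lists may repeat
vertices, the empty list is the augmentation degree, and a list of length `n` has dimension
`n - 1`; all degrees below are lengths. -/
abbrev Chain (R : Type*) [CommRing R] (V : Type*) := List V →₀ R

/-- The ordered simplex with the given list of vertices, as a chain. -/
noncomputable abbrev simplex (l : List V) : Chain R V := Finsupp.single l 1

/-- The cone operator with apex `v`, which prepends `v` to every simplex. -/
noncomputable def cone (v : V) : Chain R V →ₗ[R] Chain R V := Finsupp.lmapDomain R R (List.cons v)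

/-- The map of chains induced by a map of vertices. -/
noncomputable def mapChain (g : V → V') : Chain R V →ₗ[R] Chain R V' :=
  Finsupp.lmapDomain R R (List.map g)

/-- The value of `contract φ` on the simplex with the given vertices. -/
noncomputable def contractList (φ : V → R) : List V → Chain R V
  | [] => 0
  | v :: l => φ v • simplex l - cone v (contractList φ l)

/-- Contraction with a function `φ` on the vertices: the antiderivation sending a vertex `v` to the
scalar `φ v`. The simplicial boundary is the case `φ = 1`. -/
noncomputable def contract (φ : V → R) : Chain R V →ₗ[R] Chain R V :=
  Finsupp.linearCombination R (contractList φ)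

/-- The augmented simplicial boundary operator. -/
noncomputable def boundary : Chain R V →ₗ[R] Chain R V := contract fun _ => 1

@[simp] lemma cone_simplex (v : V) (l : List V) :
    cone v (simplex l : Chain R V) = simplex (v :: l) := by
  simp [cone]

@[simp] lemma mapChain_simplex (g : V → V') (l : List V) :
    mapChain g (simplex l : Chain R V) = simplex (l.map g) := by
  simp [mapChain]

lemma contract_simplex (φ : V → R) (l : List V) : contract φ (simplex l) = contractList φ l := by
  simp [contract]

@[simp] lemma contract_simplex_nil (φ : V → R) : contract φ (simplex ([] : List V)) = 0 := by
  simp [contract_simplex, contractList]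

@[simp] lemma boundary_simplex_nil : boundary (simplex [] : Chain R V) = 0 := by simp [boundary]

lemma linearMap_ext_simplex {f g : Chain R V →ₗ[R] M} (h : ∀ l, f (simplex l) = g (simplex l)) :
    f = g :=
  Finsupp.lhom_ext' fun l => LinearMap.ext_ring (by simpa using h l)

lemma linearMap_ext_cone {f g : Chain R V →ₗ[R] M} (h_nil : f (simplex []) = g (simplex []))
    (h_cone : ∀ v x, f x = g x → f (cone v x) = g (cone v x)) : f = g := by
  refine linearMap_ext_simplex fun l => ?_
  induction l with
  | nil => exact h_nil
  | cons v l ih => simpa using h_cone v _ ih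

lemma contract_cone (φ : V → R) (v : V) (x : Chain R V) :
    contract φ (cone v x) = φ v • x - cone v (contract φ x) := by
  have : contract φ ∘ₗ cone v = φ v • LinearMap.id - cone v ∘ₗ contract φ :=
    linearMap_ext_simplex fun l => by
      simp only [LinearMap.comp_apply, cone_simplex, contract_simplex, contractList,
        LinearMap.sub_apply, LinearMap.smul_apply, LinearMap.id_apply]
  simpa using LinearMap.congr_fun this x

lemma boundary_cone (v : V) (x : Chain R V) : boundary (cone v x) = x - cone v (boundary x) := by
  simp [boundary, contract_cone]

lemma contract_anticomm (φ ψ : V → R) (x : Chain R V) :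
    contract φ (contract ψ x) = -contract ψ (contract φ x) := by
  have : contract φ ∘ₗ contract ψ = -(contract ψ ∘ₗ contract φ) := by
    refine linearMap_ext_cone (by simp) fun v x ih => ?_
    simp only [LinearMap.comp_apply, LinearMap.neg_apply, contract_cone, map_sub, map_smul] at ih ⊢
    rw [ih, map_neg]
    abel
  simpa using LinearMap.congr_fun this x

lemma contract_contract (φ : V → R) (x : Chain R V) : contract φ (contract φ x) = 0 := by
  have : contract φ ∘ₗ contract φ = 0 := by
    refine linearMap_ext_cone (by simp) fun v x ih => ?_
    simp only [LinearMap.comp_apply, LinearMap.zero_apply, contract_cone, map_sub, map_smul] at ih ⊢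
    rw [ih, map_zero]
    abel
  simpa using LinearMap.congr_fun this x

lemma boundary_boundary (x : Chain R V) : boundary (boundary x) = 0 := contract_contract _ x

lemma mapChain_cone (g : V → V') (v : V) (x : Chain R V) :
    mapChain g (cone v x) = cone (g v) (mapChain g x) := by
  have : mapChain g ∘ₗ cone v = cone (R := R) (g v) ∘ₗ mapChain g :=
    linearMap_ext_simplex fun l => by simp
  simpa using LinearMap.congr_fun this x

lemma mapChain_contract (g : V → V') (φ : V' → R) (x : Chain R V) :
    mapChain g (contract (φ ∘ g) x) = contract φ (mapChain g x) := by
  have : mapChain g ∘ₗ contract (φ ∘ g) = contract φ ∘ₗ mapChain g := by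
    refine linearMap_ext_cone (by simp) fun v x ih => ?_
    simp only [LinearMap.comp_apply, contract_cone, map_sub, map_smul, mapChain_cone,
      Function.comp_apply] at ih ⊢
    rw [ih]
  simpa using LinearMap.congr_fun this x

lemma mapChain_boundary (g : V → V') (x : Chain R V) :
    mapChain g (boundary x) = boundary (mapChain g x) :=
  mapChain_contract g (fun _ => (1 : R)) x

lemma mapChain_mapChain (g : V → V') (h : V' → V'') (x : Chain R V) :
    mapChain h (mapChain g x) = mapChain (h ∘ g) x := by
  have : mapChain h ∘ₗ mapChain g = mapChain (R := R) (h ∘ g) :=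
    linearMap_ext_simplex fun l => by simp
  simpa using LinearMap.congr_fun this x

lemma mapChain_id : mapChain id = (LinearMap.id : Chain R V →ₗ[R] Chain R V) :=
  linearMap_ext_simplex fun l => by simp

lemma mapChain_pow (g : V → V) (n : ℕ) :
    (mapChain g : Module.End R (Chain R V)) ^ n = mapChain g^[n] := by
  induction n with
  | zero => exact mapChain_id.symm
  | succ n ih =>
    ext1 l
    rw [pow_succ', ih, Function.iterate_succ']
    exact LinearMap.ext fun c => mapChain_mapChain _ _ _

end Chains

section Support

variable {R : Type*} [CommRing R] {V V' : Type*} {M : Type*} [AddCommGroup M] [Module R M]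
  {P Q : List V → Prop}

/-- Chains all of whose simplices satisfy `P`. -/
abbrev supportedOn (R : Type*) [CommRing R] {V : Type*} (P : List V → Prop) :
    Submodule R (Chain R V) :=
  Finsupp.supported R R {l | P l}

lemma simplex_mem_supportedOn {l : List V} (h : P l) : (simplex l : Chain R V) ∈ supportedOn R P :=
  Finsupp.single_mem_supported R 1 h

lemma map_mem_of_mem_supportedOn (f : Chain R V →ₗ[R] M) (N : Submodule R M)
    (h : ∀ l, P l → f (simplex l) ∈ N) {x : Chain R V} (hx : x ∈ supportedOn R P) : f x ∈ N := by
  have : supportedOn R P ≤ N.comap f := by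
    rw [supportedOn, Finsupp.supported_eq_span_single, Submodule.span_le]
    rintro _ ⟨l, hl, rfl⟩
    exact h l hl
  exact this hx

lemma map_eq_of_mem_supportedOn (f g : Chain R V →ₗ[R] M)
    (h : ∀ l, P l → f (simplex l) = g (simplex l)) {x : Chain R V} (hx : x ∈ supportedOn R P) :
    f x = g x := by
  have := map_mem_of_mem_supportedOn (f - g) ⊥ (fun l hl => by simp [h l hl]) hx
  rwa [Submodule.mem_bot, LinearMap.sub_apply, sub_eq_zero] at this

lemma supportedOn_mono (h : ∀ l, P l → Q l) : supportedOn R P ≤ supportedOn R Q :=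
  Finsupp.supported_mono fun l hl => h l hl

lemma supportedOn_inf : supportedOn R P ⊓ supportedOn R Q = supportedOn R fun l => P l ∧ Q l :=
  (Finsupp.supported_inter (R := R) {l | P l} {l | Q l}).symm

lemma contractList_mem (φ : V → R) (l : List V) :
    contractList φ l ∈
      supportedOn R fun l' => ∃ v, l.Perm (v :: l') ∧ l'.Sublist l ∧ φ v ≠ 0 := by
  induction l with
  | nil => exact Submodule.zero_mem _
  | cons v l ih =>
    refine Submodule.sub_mem _ ?_ (map_mem_of_mem_supportedOn (cone v) _ ?_ ih)
    · by_cases h : φ v = 0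
      · simp [h]
      · exact Submodule.smul_mem _ _
          (simplex_mem_supportedOn ⟨v, List.Perm.refl _, List.sublist_cons_self v l, h⟩)
    · rintro l' ⟨w, hperm, hsub, hw⟩
      rw [cone_simplex]
      exact simplex_mem_supportedOn
        ⟨w, (hperm.cons v).trans (List.Perm.swap _ _ _), hsub.cons_cons v, hw⟩

end Support

/-! ### Acyclicity of simplicial complexes -/

section Acyclic

variable {R : Type*} [CommRing R] {V V' : Type*} {K K' : Set (Set V)} {m n : ℕ} {v : V}

/-- The ordered chains of length `m` in the complex `K`. Complexes are lower sets of sets of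
vertices; `m` counts vertices, so `chainsIn R K m` are the `(m - 1)`-dimensional chains. -/
abbrev chainsIn (R : Type*) [CommRing R] {V : Type*} (K : Set (Set V)) (m : ℕ) :
    Submodule R (Chain R V) :=
  supportedOn R fun l => l.length = m ∧ {v | v ∈ l} ∈ K

/-- Vanishing of the reduced homology of `K` with coefficients in `R` in dimensions below
`n - 1`. -/
def IsAcyclicBelow (R : Type*) [CommRing R] {V : Type*} (K : Set (Set V)) (n : ℕ) : Prop :=
  ∀ m < n, ∀ z ∈ chainsIn R K m, boundary z = 0 → ∃ y ∈ chainsIn R K (m + 1), boundary y = z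

/-- The link of a vertex. -/
def link (K : Set (Set V)) (v : V) : Set (Set V) := {σ | v ∉ σ ∧ insert v σ ∈ K}

/-- The closed star of a vertex. -/
def closedStar (K : Set (Set V)) (v : V) : Set (Set V) := {σ | insert v σ ∈ K}

/-- The complex obtained by deleting a set of vertices. -/
def deletion (K : Set (Set V)) (W : Set V) : Set (Set V) := {σ | σ ∈ K ∧ Disjoint σ W}

lemma isLowerSet_deletion (hK : IsLowerSet K) (W : Set V) : IsLowerSet (deletion K W) :=
  fun _ _ hle h => ⟨hK hle h.1, h.2.mono_left hle⟩

lemma isLowerSet_closedStar (hK : IsLowerSet K) (v : V) : IsLowerSet (closedStar K v) :=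
  fun _ _ hle h => hK (Set.insert_subset_insert hle) h

lemma closedStar_subset (hK : IsLowerSet K) (v : V) : closedStar K v ⊆ K :=
  fun σ h => hK (Set.subset_insert v σ) h

lemma deletion_empty : deletion K ∅ = K := by simp [deletion]

lemma deletion_deletion (W W' : Set V) : deletion (deletion K W) W' = deletion K (W ∪ W') := by
  ext σ
  simp [deletion, and_assoc]

lemma chainsIn_mono (h : K ⊆ K') : chainsIn R K m ≤ chainsIn R K' m :=
  supportedOn_mono fun _ hl => ⟨hl.1, h hl.2⟩

lemma chainsIn_inf : chainsIn R K m ⊓ chainsIn R K' m = chainsIn R (K ∩ K') m := by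
  rw [supportedOn_inf]
  congr 1
  ext l
  simp only [Set.mem_inter_iff]
  tauto

lemma simplex_nil_mem_chainsIn (h : ∅ ∈ K) : (simplex [] : Chain R V) ∈ chainsIn R K 0 :=
  simplex_mem_supportedOn ⟨rfl, by simpa using h⟩

lemma boundary_mem_chainsIn (hK : IsLowerSet K) {x : Chain R V}
    (hx : x ∈ chainsIn R K (m + 1)) : boundary x ∈ chainsIn R K m := by
  refine map_mem_of_mem_supportedOn boundary _ ?_ hx
  rintro l ⟨hl, hlK⟩
  rw [boundary, contract_simplex]
  refine supportedOn_mono ?_ (contractList_mem _ l)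
  rintro l' ⟨v, hperm, hsub, -⟩
  exact ⟨by simpa [hl] using hperm.length_eq.symm, hK (fun w hw => hsub.subset hw) hlK⟩

lemma cone_mem_chainsIn (h : ∀ σ ∈ K, insert v σ ∈ K) {x : Chain R V}
    (hx : x ∈ chainsIn R K m) : cone v x ∈ chainsIn R K (m + 1) := by
  refine map_mem_of_mem_supportedOn (cone v) _ ?_ hx
  rintro l ⟨hl, hlK⟩
  have hset : {w | w ∈ v :: l} = insert v {w | w ∈ l} := by ext; simp
  rw [cone_simplex]
  exact simplex_mem_supportedOn ⟨by simp [hl], hset ▸ h _ hlK⟩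

lemma mapChain_mem_chainsIn {L : Set (Set V')} {g : V → V'} (h : ∀ σ ∈ K, g '' σ ∈ L)
    {x : Chain R V} (hx : x ∈ chainsIn R K m) : mapChain g x ∈ chainsIn R L m := by
  refine map_mem_of_mem_supportedOn (mapChain g) _ ?_ hx
  rintro l ⟨hl, hlK⟩
  have hset : {v | v ∈ l.map g} = g '' {v | v ∈ l} := by ext; simp
  rw [mapChain_simplex]
  exact simplex_mem_supportedOn ⟨by simp [hl], hset ▸ h _ hlK⟩

lemma mapChain_congr_of_mem_chainsIn {g g' : V → V'} (h : ∀ σ ∈ K, Set.EqOn g g' σ)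
    {x : Chain R V} (hx : x ∈ chainsIn R K m) : mapChain g x = mapChain g' x := by
  refine map_eq_of_mem_supportedOn _ _ ?_ hx
  rintro l ⟨-, hlK⟩
  rw [mapChain_simplex, mapChain_simplex, List.map_congr_left fun v hv => h _ hlK hv]

lemma isAcyclicBelow_of_cone (h : ∀ σ ∈ K, insert v σ ∈ K) (n : ℕ) : IsAcyclicBelow R K n :=
  fun _ _ z hz hbz => ⟨cone v z, cone_mem_chainsIn h hz, by simp [boundary_cone, hbz]⟩

lemma exists_deletion_add_closedStar {z : Chain R V} (hz : z ∈ chainsIn R K m) (v : V) :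
    ∃ z₁ ∈ chainsIn R (deletion K {v}) m, ∃ z₂ ∈ chainsIn R (closedStar K v) m, z₁ + z₂ = z := by
  refine ⟨z.filter fun l => v ∉ l, fun l hl => ?_, z.filter fun l => ¬v ∉ l, fun l hl => ?_,
    Finsupp.filter_add_filter_not _ _⟩ <;>
  rw [Finsupp.support_filter, Finset.coe_filter] at hl
  · exact ⟨(hz hl.1).1, (hz hl.1).2, by simpa using hl.2⟩
  · refine ⟨(hz hl.1).1, ?_⟩
    have : insert v {w | w ∈ l} = {w | w ∈ l} := Set.insert_eq_of_mem (not_not.1 hl.2)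
    rw [closedStar, Set.mem_ofPred_eq, this]
    exact (hz hl.1).2

lemma deletion_inter_closedStar_subset (v : V) : deletion K {v} ∩ closedStar K v ⊆ link K v :=
  fun _ h => ⟨Set.disjoint_singleton_right.1 h.1.2, h.2⟩

lemma link_subset_deletion (hK : IsLowerSet K) (v : V) : link K v ⊆ deletion K {v} :=
  fun _ h => ⟨closedStar_subset hK v h.2, Set.disjoint_singleton_right.2 h.1⟩

-- Mayer–Vietoris for `K = deletion ∪ star`, whose intersection is the link.
lemma isAcyclicBelow_of_deletion_of_link (hK : IsLowerSet K) (v : V)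
    (hdel : IsAcyclicBelow R (deletion K {v}) n) (hlink : IsAcyclicBelow R (link K v) (n - 1)) :
    IsAcyclicBelow R K n := by
  intro m hm z hz hbz
  rcases m with _ | m
  · have hz' : z ∈ chainsIn R (deletion K {v}) 0 := by
      refine supportedOn_mono ?_ hz
      rintro l ⟨hl, hlK⟩
      exact ⟨hl, hlK, by simp [List.length_eq_zero_iff.1 hl]⟩
    obtain ⟨y, hy, hyz⟩ := hdel 0 hm z hz' hbz
    exact ⟨y, chainsIn_mono (fun _ h => h.1) hy, hyz⟩
  obtain ⟨z₁, hz₁, z₂, hz₂, rfl⟩ := exists_deletion_add_closedStar hz v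
  have hb : boundary z₁ = -boundary z₂ := eq_neg_of_add_eq_zero_left (by rw [← map_add, hbz])
  have hb_star : boundary z₁ ∈ chainsIn R (closedStar K v) m := by
    rw [hb]
    exact Submodule.neg_mem _ (boundary_mem_chainsIn (isLowerSet_closedStar hK v) hz₂)
  have hb_link : boundary z₁ ∈ chainsIn R (link K v) m := by
    refine chainsIn_mono (deletion_inter_closedStar_subset v) ?_
    rw [← chainsIn_inf]
    exact ⟨boundary_mem_chainsIn (isLowerSet_deletion hK {v}) hz₁, hb_star⟩
  obtain ⟨w, hw, hwz⟩ := hlink m (by omega) _ hb_link (boundary_boundary _)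
  obtain ⟨y₁, hy₁, hyz₁⟩ := hdel (m + 1) hm (z₁ - w)
    (Submodule.sub_mem _ hz₁ (chainsIn_mono (link_subset_deletion hK v) hw)) (by simp [hwz])
  have hstar : ∀ σ ∈ closedStar K v, insert v σ ∈ closedStar K v := fun σ h => by
    simpa [closedStar] using h
  obtain ⟨y₂, hy₂, hyz₂⟩ := isAcyclicBelow_of_cone hstar (m + 2) (m + 1) (by omega) (z₂ + w)
    (Submodule.add_mem _ hz₂ (chainsIn_mono (fun _ h => h.2) hw)) (by simp [hwz, hb])
  refine ⟨y₁ + y₂, Submodule.add_mem _ (chainsIn_mono (fun _ h => h.1) hy₁)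
    (chainsIn_mono (closedStar_subset hK v) hy₂), ?_⟩
  rw [map_add, hyz₁, hyz₂]
  abel

lemma isAcyclicBelow_of_deletion_of_links (hK : IsLowerSet K) (W : Finset V)
    (hdel : IsAcyclicBelow R (deletion K W) n)
    (hlink : ∀ W' ⊆ W, ∀ v ∈ W, v ∉ W' → IsAcyclicBelow R (link (deletion K W') v) (n - 1)) :
    IsAcyclicBelow R K n := by
  induction W using Finset.induction_on with
  | empty => rwa [Finset.coe_empty, deletion_empty] at hdel
  | insert v W hv ih =>
    have hsub := Finset.subset_insert v W
    refine ih ?_ fun W' hW' w hw hw' => hlink W' (hW'.trans hsub) w (hsub hw) hw'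
    refine isAcyclicBelow_of_deletion_of_link (isLowerSet_deletion hK _) v ?_
      (hlink W hsub v (Finset.mem_insert_self _ _) hv)
    rwa [deletion_deletion, Set.union_singleton, ← Finset.coe_insert]

end Acyclic

/-! ### Balanced chessboard complexes -/

/-- Data of a generalized chessboard: every piece `w : W` sits on a cell and carries a value; cells
are grouped into colors and into columns. -/
structure Board (W E X Γ I : Type*) where
  /-- The cell occupied by a piece. -/
  cell : W → E
  /-- The value carried by a piece. -/
  value : W → X
  /-- The color of a cell. -/
  color : E → Γ
  /-- The column of a cell. -/
  column : E → I
  eq_of_cell_of_value : ∀ x y, cell x = cell y → value x = value y → x = y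

namespace Board

variable {W E X Γ I : Type*} (B : Board W E X Γ I) {C : Finset E} {D : Finset I} {s : ℕ}
  {U U' : Finset W} {σ τ : Set W} {w : W}

/-- The token of a piece: its value, together with the color of its cell. -/
def token (w : W) : Γ × X := (B.color (B.cell w), B.value w)

/-- The columns in `D` all of whose cells in `C` are occupied by pieces of `σ`. -/
noncomputable def fullColumns (C : Finset E) (D : Finset I) (σ : Set W) : Finset I :=
  D.filter fun i => ∀ e ∈ C, B.column e = i → e ∈ B.cell '' σ

/-- The balanced chessboard complex: sets of pieces from `U` on the cells `C`, no two on the same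
cell and no two with the same token, which fill at most `s` of the columns in `D`. -/
def complex (C : Finset E) (D : Finset I) (s : ℕ) (U : Finset W) : Set (Set W) :=
  {σ | (∀ x ∈ σ, x ∈ U ∧ B.cell x ∈ C) ∧ Set.InjOn B.cell σ ∧ Set.InjOn B.token σ ∧
    (B.fullColumns C D σ).card ≤ s}

/-- The cell `e` has room: the number of pieces of `U` on it is at least `2t - 1`, where `t` is the
number of cells in `C` of its color. -/
def HasRoom (C : Finset E) (U : Finset W) (e : E) : Prop :=
  2 * (C.filter fun e' => B.color e' = B.color e).card ≤ (U.filter fun w => B.cell w = e).card + 1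

lemma hasRoom_of_color_injective (hB : B.color.Injective) {e : E} (he : ∃ w ∈ U, B.cell w = e) :
    B.HasRoom C U e := by
  obtain ⟨w, hw, hwe⟩ := he
  have hcolor : (C.filter fun e' => B.color e' = B.color e).card ≤ 1 :=
    Finset.card_le_one.2 fun a ha b hb =>
      hB ((mem_filter.1 ha).2.trans (mem_filter.1 hb).2.symm)
  have hcell : 0 < (U.filter fun w => B.cell w = e).card :=
    Finset.card_pos.2 ⟨w, mem_filter.2 ⟨hw, hwe⟩⟩
  rw [HasRoom]
  lia

lemma fullColumns_mono (h : σ ⊆ τ) : B.fullColumns C D σ ⊆ B.fullColumns C D τ :=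
  Finset.monotone_filter_right _ fun _ _ hi e he hc => Set.image_mono h (hi e he hc)

lemma isLowerSet_complex : IsLowerSet (B.complex C D s U) := by
  rintro τ σ hle ⟨hU, hcell, htoken, hfull⟩
  exact ⟨fun x hx => hU x (hle hx), hcell.mono hle, htoken.mono hle,
    (card_le_card (B.fullColumns_mono hle)).trans hfull⟩

lemma deletion_complex (U' : Finset W) :
    deletion (B.complex C D s U) U' = B.complex C D s (U \ U') := by
  ext σ
  simp only [deletion, complex, Set.mem_ofPred_eq, mem_sdiff, Set.disjoint_left, Finset.mem_coe]
  grind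

lemma fullColumns_insert :
    B.fullColumns C D (insert w σ) = B.fullColumns (C.erase (B.cell w)) D σ := by
  refine Finset.filter_congr fun i _ => ?_
  simp only [Set.image_insert_eq, Set.mem_insert_iff, mem_erase]
  grind

lemma link_complex (hU : w ∈ U) (hC : B.cell w ∈ C) :
    link (B.complex C D s U) w =
      B.complex (C.erase (B.cell w)) D s (U.filter fun y => B.token y ≠ B.token w) := by
  ext σ
  simp only [link, complex, Set.mem_ofPred_eq, B.fullColumns_insert, Set.forall_mem_insert,
    mem_filter, mem_erase]
  constructor
  · rintro ⟨hw, hσ, hcell, htoken, hfull⟩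
    rw [Set.injOn_insert hw] at hcell htoken
    exact ⟨fun x hx => ⟨⟨(hσ.2 x hx).1, fun h => htoken.2 ⟨x, hx, h⟩⟩,
      fun h => hcell.2 ⟨x, hx, h⟩, (hσ.2 x hx).2⟩, hcell.1, htoken.1, hfull⟩
  · rintro ⟨hσ, hcell, htoken, hfull⟩
    have hw : w ∉ σ := fun h => (hσ w h).2.1 rfl
    rw [Set.injOn_insert hw, Set.injOn_insert hw]
    refine ⟨hw, ⟨⟨hU, hC⟩, fun x hx => ⟨(hσ x hx).1.1, (hσ x hx).2.2⟩⟩, ⟨hcell, ?_⟩,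
      ⟨htoken, ?_⟩, hfull⟩
    · rintro ⟨x, hx, h⟩
      exact (hσ x hx).2.1 h
    · rintro ⟨x, hx, h⟩
      exact (hσ x hx).1.2 h

variable {B}

lemma HasRoom.mono {e : E} (h : B.HasRoom C U e) {C' : Finset E} (hC : C' ⊆ C)
    (hU : ∀ u ∈ U, B.cell u = e → u ∈ U') : B.HasRoom C' U' e := by
  have hC' := card_le_card (Finset.filter_subset_filter (fun e' => B.color e' = B.color e) hC)
  have hU' : U.filter (fun w => B.cell w = e) ⊆ U'.filter fun w => B.cell w = e :=
    fun u hu => by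
      rw [mem_filter] at hu ⊢
      exact ⟨hU u hu.1 hu.2, hu.2⟩
  have := card_le_card hU'
  unfold HasRoom at *
  omega

-- Losing one cell of the color of `e` makes up for losing two pieces on `e`.
lemma HasRoom.erase {c e : E} (h : B.HasRoom C U e) (hc : c ∈ C) (a b : X)
    (hU : ∀ u ∈ U, B.cell u = e → ¬(B.color e = B.color c ∧ (B.value u = a ∨ B.value u = b)) →
      u ∈ U') :
    B.HasRoom (C.erase c) U' e := by
  by_cases hce : B.color c = B.color e
  · have hC : (C.filter fun e' => B.color e' = B.color e).card =
        ((C.erase c).filter fun e' => B.color e' = B.color e).card + 1 := by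
      rw [← Finset.card_erase_add_one (mem_filter.2 ⟨hc, hce⟩), Finset.filter_erase]
    have hlost : ((U.filter fun w => B.cell w = e) \ U'.filter fun w => B.cell w = e).card ≤ 2 := by
      refine (Finset.card_le_card_of_injOn B.value (t := {a, b}) (fun u hu => ?_)
        fun x hx y hy => B.eq_of_cell_of_value x y ?_).trans Finset.card_le_two
      · simp only [Finset.mem_coe, mem_sdiff, mem_filter, not_and] at hu
        by_contra hab
        exact hu.2 (hU u hu.1.1 hu.1.2 fun h => hab (by simpa using h.2)) hu.1.2
      · simp only [Finset.mem_coe, mem_sdiff, mem_filter] at hx hy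
        rw [hx.1.2, hy.1.2]
    have := Finset.card_le_card_sdiff_add_card (s := U.filter fun w => B.cell w = e)
      (t := U'.filter fun w => B.cell w = e)
    unfold HasRoom at *
    omega
  · exact h.mono (Finset.erase_subset _ _) fun u hu hue => hU u hu hue fun h => hce h.1.symm

lemma HasRoom.exists_piece {e : E} (h : B.HasRoom C U e) (he : e ∈ C) :
    ∃ w ∈ U, B.cell w = e := by
  have hpos : 0 < (C.filter fun e' => B.color e' = B.color e).card :=
    Finset.card_pos.2 ⟨e, mem_filter.2 ⟨he, rfl⟩⟩
  obtain ⟨w, hw⟩ := Finset.card_pos.1 (show 0 < (U.filter fun w => B.cell w = e).card by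
    unfold HasRoom at h; omega)
  exact ⟨w, mem_filter.1 hw⟩

variable (B) in
/-- The connectivity bound of `isAcyclicBelow_complex` for boards with `n` cells, isolated as the
induction hypothesis of its proof. -/
def AcyclicBound (R : Type*) [CommRing R] (n : ℕ) : Prop :=
  ∀ (C : Finset E) (D : Finset I) (s : ℕ) (U : Finset W), C.card = n → s ≤ D.card →
    (∀ e ∈ C, B.HasRoom C U e) → IsAcyclicBelow R (B.complex C D s U) (n + s - D.card)

variable {R : Type*} [CommRing R] {n : ℕ}

lemma AcyclicBound.link (hB : B.AcyclicBound R n) (hC : C.card = n + 1) (hs : s ≤ D.card)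
    (hroom : ∀ e ∈ C, B.HasRoom C U e) (hw : w ∈ U') (hwC : B.cell w ∈ C) (b : X)
    (hU : ∀ u ∈ U, B.cell u ≠ B.cell w →
      ¬(B.color (B.cell u) = B.color (B.cell w) ∧ (B.value u = B.value w ∨ B.value u = b)) →
      u ∈ U') :
    IsAcyclicBelow R (link (B.complex C D s U') w) (n + 1 + s - D.card - 1) := by
  rw [B.link_complex hw hwC, show n + 1 + s - D.card - 1 = n + s - D.card by omega]
  refine hB _ _ _ _ (by rw [Finset.card_erase_of_mem hwC, hC, Nat.add_sub_cancel]) hs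
    fun e he => ?_
  rw [mem_erase] at he
  refine (hroom e he.2).erase hwC (B.value w) b fun u hu hue h => ?_
  subst hue
  exact mem_filter.2 ⟨hU u hu he.1 h, fun ht =>
    h ⟨congrArg Prod.fst ht, Or.inl (congrArg Prod.snd ht)⟩⟩

lemma insert_mem_complex (hU : w ∈ U) (hC : B.cell w ∈ C) (hD : B.column (B.cell w) ∉ D)
    (hcell : ∀ y ∈ U, B.cell y = B.cell w → y = w)
    (htoken : ∀ y ∈ U, B.cell y ∈ C → B.token y = B.token w → y = w)
    (hσ : σ ∈ B.complex C D s U) : insert w σ ∈ B.complex C D s U := by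
  obtain ⟨hσU, hσcell, hσtoken, hσfull⟩ := hσ
  by_cases hw : w ∈ σ
  · rw [Set.insert_eq_of_mem hw]
    exact ⟨hσU, hσcell, hσtoken, hσfull⟩
  refine ⟨Set.forall_mem_insert.2 ⟨⟨hU, hC⟩, hσU⟩, (Set.injOn_insert hw).2 ⟨hσcell, ?_⟩,
    (Set.injOn_insert hw).2 ⟨hσtoken, ?_⟩, (card_le_card fun i hi => ?_).trans hσfull⟩
  · rintro ⟨y, hy, h⟩
    exact hw (hcell y (hσU y hy).1 h ▸ hy)
  · rintro ⟨y, hy, h⟩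
    exact hw (htoken y (hσU y hy).1 (hσU y hy).2 h ▸ hy)
  · rw [fullColumns, mem_filter] at hi ⊢
    refine ⟨hi.1, fun e he hei => ?_⟩
    rcases Set.image_insert_eq ▸ hi.2 e he hei with rfl | h
    · exact absurd (hei ▸ hi.1) hD
    · exact h

/-- The pieces of `U` off the cell of `w` which share the token of `w`. -/
noncomputable def rivals (B : Board W E X Γ I) (C : Finset E) (U : Finset W) (w : W) : Finset W :=
  U.filter fun y => B.cell y ∈ C ∧ B.cell y ≠ B.cell w ∧ B.token y = B.token w

/-- The pieces of `U` other than `w` on the cell of `w`. -/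
noncomputable def cellmates (B : Board W E X Γ I) (U : Finset W) (w : W) : Finset W :=
  U.filter fun y => B.cell y = B.cell w ∧ y ≠ w

-- Once the rivals and the cellmates of `w` are deleted, the complex is a cone with apex `w`.
lemma isAcyclicBelow_complex_sdiff (hU : w ∈ U) (hC : B.cell w ∈ C)
    (hD : B.column (B.cell w) ∉ D) (N : ℕ) :
    IsAcyclicBelow R (B.complex C D s ((U \ B.rivals C U w) \ B.cellmates U w)) N := by
  have hcell : ∀ y ∈ (U \ B.rivals C U w) \ B.cellmates U w, B.cell y = B.cell w → y = w := by
    simp only [rivals, cellmates, mem_sdiff, mem_filter]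
    grind
  refine isAcyclicBelow_of_cone (v := w)
    (fun σ hσ => insert_mem_complex ?_ hC hD hcell ?_ hσ) N
  · simp [rivals, cellmates, hU]
  · intro y hy hyC ht
    by_contra hyw
    simp only [rivals, mem_sdiff, mem_filter] at hy
    exact hy.1.2 ⟨hy.1.1, hyC, fun h => hyw (hcell y (by simpa [rivals] using hy) h), ht⟩

lemma AcyclicBound.step_of_column_notMem (hB : B.AcyclicBound R n) (hC : C.card = n + 1)
    (hs : s ≤ D.card) (hroom : ∀ e ∈ C, B.HasRoom C U e) (hwU : w ∈ U) (hwC : B.cell w ∈ C)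
    (hD : B.column (B.cell w) ∉ D) :
    IsAcyclicBelow R (B.complex C D s U) (n + 1 + s - D.card) := by
  have token_iff (y v : W) : B.token y = B.token v ↔
      B.color (B.cell y) = B.color (B.cell v) ∧ B.value y = B.value v := Prod.mk_inj
  refine isAcyclicBelow_of_deletion_of_links B.isLowerSet_complex (B.rivals C U w) ?_ ?_
  · rw [B.deletion_complex]
    refine isAcyclicBelow_of_deletion_of_links B.isLowerSet_complex (B.cellmates U w) ?_ ?_
    · rw [B.deletion_complex]
      exact isAcyclicBelow_complex_sdiff hwU hwC hD _
    · intro W' hW' v hv hv'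
      have hvw := mem_filter.1 hv
      rw [B.deletion_complex]
      refine hB.link hC hs hroom ?_ (hvw.2.1 ▸ hwC) (B.value w) fun u hu hne hval => ?_
      · simp [rivals, hvw, hv']
      · have hu' : u ∉ W' := fun h => hne ((mem_filter.1 (hW' h)).2.1.trans hvw.2.1.symm)
        have hval' : B.token u ≠ B.token w := fun h =>
          hval (hvw.2.1 ▸ ⟨((token_iff _ _).1 h).1, Or.inr ((token_iff _ _).1 h).2⟩)
        simp [rivals, hu, hu', hval']
  · intro W' hW' v hv hv'
    have hvw := mem_filter.1 hv
    rw [B.deletion_complex]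
    refine hB.link hC hs hroom (mem_sdiff.2 ⟨hvw.1, hv'⟩) hvw.2.1 (B.value w)
      fun u hu _ hval => mem_sdiff.2 ⟨hu, fun h => hval ?_⟩
    have := (token_iff _ _).1 ((mem_filter.1 (hW' h)).2.2.2.trans hvw.2.2.2.symm)
    exact ⟨this.1, Or.inl this.2⟩

lemma fullColumns_eq_erase {e : E} (he : e ∈ C) (hσ : ∀ x ∈ σ, B.cell x ≠ e) :
    B.fullColumns C D σ = B.fullColumns (C.erase e) (D.erase (B.column e)) σ := by
  have he' : e ∉ B.cell '' σ := fun ⟨x, hx, h⟩ => hσ x hx h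
  ext i
  simp only [fullColumns, mem_filter, mem_erase]
  grind

lemma complex_eq_erase {e : E} (he : e ∈ C) (hU : ∀ y ∈ U, B.cell y ≠ e) :
    B.complex C D s U = B.complex (C.erase e) (D.erase (B.column e)) s U := by
  ext σ
  have key (hσ : ∀ x ∈ σ, x ∈ U) :=
    fullColumns_eq_erase (D := D) he fun x hx => hU x (hσ x hx)
  simp only [complex, Set.mem_ofPred_eq, mem_erase]
  grind

lemma complex_eq_of_card_le (h : D.card ≤ s) : B.complex C D s U = B.complex C ∅ 0 U := by
  ext σ
  have hfull : (B.fullColumns C D σ).card ≤ s := (Finset.card_filter_le _ _).trans h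
  have hempty : (B.fullColumns C ∅ σ).card ≤ 0 := by simp [fullColumns]
  simp only [complex, Set.mem_ofPred_eq, hfull, hempty]

lemma AcyclicBound.step_of_column_mem (hB : B.AcyclicBound R n) (hC : C.card = n + 1)
    (hs : s < D.card) (hroom : ∀ e ∈ C, B.HasRoom C U e) {e : E} (he : e ∈ C)
    (hD : B.column e ∈ D) :
    IsAcyclicBelow R (B.complex C D s U) (n + 1 + s - D.card) := by
  refine isAcyclicBelow_of_deletion_of_links B.isLowerSet_complex
    (U.filter fun y => B.cell y = e) ?_ fun W' hW' v hv hv' => ?_ <;>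
  rw [B.deletion_complex]
  · have hDe := Finset.card_erase_of_mem hD
    rw [complex_eq_erase he (by simp +contextual [mem_sdiff, mem_filter]),
      show n + 1 + s - D.card = n + s - (D.erase (B.column e)).card by omega]
    refine hB _ _ _ _ (by rw [Finset.card_erase_of_mem he, hC, Nat.add_sub_cancel]) (by omega)
      fun e' he' => (hroom e' (Finset.mem_of_mem_erase he')).mono (Finset.erase_subset _ _)
        fun u hu hue => ?_
    simp [hu, hue, Finset.ne_of_mem_erase he']
  · have hv2 := mem_filter.1 hv
    refine hB.link hC hs.le hroom (mem_sdiff.2 ⟨hv2.1, hv'⟩) (hv2.2 ▸ he) (B.value v)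
      fun u hu hne _ => mem_sdiff.2 ⟨hu, fun h => hne ?_⟩
    exact (mem_filter.1 (hW' h)).2.trans hv2.2.symm

lemma acyclicBound (B : Board W E X Γ I) (R : Type*) [CommRing R] (n : ℕ) :
    B.AcyclicBound R n := by
  induction n with
  | zero => exact fun C D s U _ hs _ m hm => by omega
  | succ n ih =>
    intro C D s U hC hs hroom
    obtain ⟨e, he⟩ : C.Nonempty := by rw [← Finset.card_pos]; omega
    obtain ⟨w, hwU, rfl⟩ := (hroom e he).exists_piece he
    by_cases heD : B.column (B.cell w) ∈ D
    · rcases hs.lt_or_eq with hlt | heq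
      · exact ih.step_of_column_mem hC hlt hroom he heD
      · rw [complex_eq_of_card_le heq.ge]
        have := ih.step_of_column_notMem (D := ∅) (s := 0) hC le_rfl hroom hwU he (by simp)
        simpa [heq, Nat.add_sub_cancel] using this
    · exact ih.step_of_column_notMem hC hs hroom hwU he heD

theorem isAcyclicBelow_complex (B : Board W E X Γ I) (R : Type*) [CommRing R] (hs : s ≤ D.card)
    (hroom : ∀ e ∈ C, B.HasRoom C U e) :
    IsAcyclicBelow R (B.complex C D s U) (C.card + s - D.card) :=
  B.acyclicBound R _ C D s U rfl hs hroom

end Board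

/-! ### Systems over tensor products of periodic resolutions -/

section Systems

variable {R M M' κ : Type*} [CommRing R] [AddCommGroup M] [Module R M] [AddCommGroup M']
  [Module R M'] (p : ℕ) {T : κ → Module.End R M} {T' : κ → Module.End R M'} {gs : List κ}

/-- The differential from degree `i` to degree `i - 1` in the periodic resolution of the cyclic
group of order `p` with generator `T`: alternately `T - 1` and the norm. -/
noncomputable def periodicDiff (T : Module.End R M) (i : ℕ) : Module.End R M :=
  if Odd i then T - 1 else ∑ t ∈ Finset.range p, T ^ t

/-- The total differential of the tensor product of the periodic resolutions of the generators
listed in `gs`, on families indexed by multidegrees (lists as long as `gs`). It is written in the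
dual form in which it appears in the equation of a system. -/
noncomputable def totalDiff (T : κ → Module.End R M) : List κ → (List ℕ → M) →ₗ[R] (List ℕ → M)
  | [] => 0
  | g :: gs => LinearMap.pi fun
    | [] => 0
    | i :: J => (if i = 0 then 0 else periodicDiff p (T g) i ∘ₗ LinearMap.proj ((i - 1) :: J)) +
        (-1 : R) ^ i • (LinearMap.proj J ∘ₗ totalDiff T gs ∘ₗ LinearMap.funLeft R M (List.cons i))

/-- The multidegree `I'` arises from `I` by lowering one entry by one. -/
def IsPredecessor (I' I : List ℕ) : Prop := List.Forall₂ (· ≤ ·) I' I ∧ I'.sum + 1 = I.sum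

variable {p}

lemma IsPredecessor.length_eq {I' I : List ℕ} (h : IsPredecessor I' I) : I'.length = I.length :=
  h.1.length_eq

lemma isPredecessor_head {i : ℕ} (hi : i ≠ 0) (J : List ℕ) :
    IsPredecessor ((i - 1) :: J) (i :: J) :=
  ⟨.cons (by omega) (List.forall₂_same.2 fun _ _ => le_rfl), by simp only [List.sum_cons]; omega⟩

lemma IsPredecessor.cons {J' J : List ℕ} (i : ℕ) (h : IsPredecessor J' J) :
    IsPredecessor (i :: J') (i :: J) :=
  ⟨.cons le_rfl h.1, by simp only [List.sum_cons, ← h.2, add_assoc]⟩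

lemma totalDiff_cons_cons (g : κ) (gs : List κ) (x : List ℕ → M) (i : ℕ) (J : List ℕ) :
    totalDiff p T (g :: gs) x (i :: J) =
      (if i = 0 then 0 else periodicDiff p (T g) i (x ((i - 1) :: J))) +
        (-1 : R) ^ i • totalDiff p T gs (fun J' => x (i :: J')) J := by
  by_cases hi : i = 0 <;> simp [totalDiff, hi] <;> rfl

lemma totalDiff_zero_cons (g : κ) (gs : List κ) (x : List ℕ → M) (J : List ℕ) :
    totalDiff p T (g :: gs) x (0 :: J) = totalDiff p T gs (fun J' => x (0 :: J')) J := by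
  simp [totalDiff_cons_cons]

lemma totalDiff_nil_right (x : List ℕ → M) : totalDiff p T gs x [] = 0 := by
  cases gs <;> rfl

lemma totalDiff_congr {x x' : List ℕ → M} {I : List ℕ}
    (h : ∀ I', IsPredecessor I' I → x I' = x' I') :
    totalDiff p T gs x I = totalDiff p T gs x' I := by
  induction gs generalizing x x' I with
  | nil => rfl
  | cons g gs ih =>
    cases I with
    | nil => rfl
    | cons i J =>
      rw [totalDiff_cons_cons, totalDiff_cons_cons,
        ih fun J' hJ' => h _ (hJ'.cons i)]
      split_ifs with hi
      · rfl
      · rw [h _ (isPredecessor_head hi J)]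

lemma totalDiff_mem (N : Submodule R M) {x : List ℕ → M} {I : List ℕ}
    (h : ∀ I', IsPredecessor I' I → ∀ g ∈ gs, ∀ i, periodicDiff p (T g) i (x I') ∈ N) :
    totalDiff p T gs x I ∈ N := by
  induction gs generalizing x I with
  | nil => exact N.zero_mem
  | cons g gs ih =>
    cases I with
    | nil => exact N.zero_mem
    | cons i J =>
      rw [totalDiff_cons_cons]
      refine N.add_mem ?_ (N.smul_mem _ (ih fun J' hJ' g' hg' => ?_))
      · split_ifs with hi
        · exact N.zero_mem
        · exact h _ (isPredecessor_head hi J) g List.mem_cons_self i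
      · exact h _ (hJ'.cons i) g' (List.mem_cons_of_mem _ hg')

lemma map_totalDiff (f : M →ₗ[R] M') {x : List ℕ → M} {I : List ℕ}
    (h : ∀ I', IsPredecessor I' I → ∀ g ∈ gs, ∀ i,
      f (periodicDiff p (T g) i (x I')) = periodicDiff p (T' g) i (f (x I'))) :
    f (totalDiff p T gs x I) = totalDiff p T' gs (fun I => f (x I)) I := by
  induction gs generalizing x I with
  | nil => exact map_zero f
  | cons g gs ih =>
    cases I with
    | nil => exact map_zero f
    | cons i J =>
      rw [totalDiff_cons_cons, totalDiff_cons_cons, map_add, map_smul,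
        ih fun J' hJ' g' hg' => h _ (hJ'.cons i) g' (List.mem_cons_of_mem _ hg')]
      congr 1
      split_ifs with hi
      · exact map_zero f
      · exact h _ (isPredecessor_head hi J) g List.mem_cons_self i

lemma totalDiff_alternating (x : List ℕ → M) (I : List ℕ) :
    totalDiff p T gs (fun I => (-1 : R) ^ I.sum • x I) I =
      -((-1 : R) ^ I.sum • totalDiff p T gs x I) := by
  rw [← neg_smul, ← Pi.smul_apply, ← map_smul]
  refine totalDiff_congr fun I' hI' => ?_
  rw [Pi.smul_apply, ← hI'.2, pow_succ, mul_neg_one, neg_neg]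

lemma map_periodicDiff {S : Module.End R M} {S' : Module.End R M'} {f : M →ₗ[R] M'}
    (h : ∀ x, f (S x) = S' (f x)) (i : ℕ) (x : M) :
    f (periodicDiff p S i x) = periodicDiff p S' i (f x) := by
  have hpow (n : ℕ) (x : M) : f ((S ^ n) x) = (S' ^ n) (f x) := by
    induction n generalizing x with
    | zero => rfl
    | succ n ih => rw [pow_succ, pow_succ, Module.End.mul_apply, Module.End.mul_apply, ih, h]
  unfold periodicDiff
  split_ifs
  · simp [h]
  · simp [hpow]

lemma coe_periodicDiff_restrict {S : Module.End R M} {N : Submodule R M} (hN : ∀ x ∈ N, S x ∈ N)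
    (i : ℕ) (x : N) : (periodicDiff p (S.restrict hN) i x : M) = periodicDiff p S i x :=
  map_periodicDiff (f := N.subtype) (fun _ => rfl) i x

lemma periodicDiff_mem {S : Module.End R M} {N : Submodule R M} (hN : ∀ x ∈ N, S x ∈ N) (i : ℕ)
    {x : M} (hx : x ∈ N) : periodicDiff p S i x ∈ N :=
  coe_periodicDiff_restrict hN i ⟨x, hx⟩ ▸ SetLike.coe_mem _

lemma map_periodicDiff_of_mem {S : Module.End R M} {S' : Module.End R M'} {f : M →ₗ[R] M'}
    {N : Submodule R M} (hN : ∀ x ∈ N, S x ∈ N) (h : ∀ x ∈ N, f (S x) = S' (f x)) (i : ℕ) {x : M}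
    (hx : x ∈ N) : f (periodicDiff p S i x) = periodicDiff p S' i (f x) := by
  rw [← coe_periodicDiff_restrict hN i ⟨x, hx⟩]
  exact map_periodicDiff (f := f ∘ₗ N.subtype) (fun y => h y y.2) i ⟨x, hx⟩

lemma periodicDiff_succ_periodicDiff {S : Module.End R M} (hS : S ^ p = 1) (i : ℕ) (x : M) :
    periodicDiff p S (i + 1) (periodicDiff p S i x) = 0 := by
  rw [← Module.End.mul_apply]
  rcases Nat.even_or_odd i with h | h
  · rw [periodicDiff, periodicDiff, if_pos h.add_one, if_neg (Nat.not_odd_iff_even.2 h),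
      mul_geom_sum, hS, sub_self, LinearMap.zero_apply]
  · rw [periodicDiff, periodicDiff, if_pos h, if_neg (Nat.not_odd_iff_even.2 h.add_one),
      geom_sum_mul, hS, sub_self, LinearMap.zero_apply]

lemma periodicDiff_add_even (S : Module.End R M) {m : ℕ} (hm : Even m) (i : ℕ) :
    periodicDiff p S (i + m) = periodicDiff p S i := by
  simp only [periodicDiff, Nat.odd_add, hm, iff_true]

lemma periodicDiff_of_fixed [CharP R p] {S : Module.End R M} {a : M} (ha : S a = a) (i : ℕ) :
    periodicDiff p S i a = 0 := by
  have hpow (n : ℕ) : (S ^ n) a = a := by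
    induction n with
    | zero => rfl
    | succ n ih => rw [pow_succ, Module.End.mul_apply, ha, ih]
  unfold periodicDiff
  split_ifs
  · simp [ha]
  · simp [hpow, ← Nat.cast_smul_eq_nsmul R]

/-- The family with value `a` in multidegree zero and zero elsewhere. -/
noncomputable def concentrated (a : M) (I : List ℕ) : M := if I.sum = 0 then a else 0

lemma concentrated_cons (a : M) (i : ℕ) (J : List ℕ) :
    concentrated a (i :: J) = if i = 0 then concentrated a J else 0 := by
  simp only [concentrated, List.sum_cons, Nat.add_eq_zero_iff, ite_and]

lemma totalDiff_concentrated [CharP R p] {a : M} (ha : ∀ g ∈ gs, T g a = a) (I : List ℕ) :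
    totalDiff p T gs (concentrated a) I = 0 := by
  rw [← Submodule.mem_bot R]
  refine totalDiff_mem ⊥ fun I' _ g hg i => ?_
  rw [Submodule.mem_bot, concentrated]
  split_ifs
  · exact periodicDiff_of_fixed (ha g hg) i
  · exact map_zero _

/-- Commuting endomorphisms `T g` of a differential module with `T g ^ p = 1`. -/
structure IsCyclicAction (p : ℕ) (d : Module.End R M) (T : κ → Module.End R M) : Prop where
  pow_eq_one : ∀ g, T g ^ p = 1
  comm : ∀ g g' x, T g (T g' x) = T g' (T g x)
  comm_differential : ∀ g x, d (T g x) = T g (d x)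

variable {d : Module.End R M} {W : ℕ → Submodule R M} {e n : ℕ} {u x x' : List ℕ → M}

lemma IsCyclicAction.totalDiff_totalDiff (hT : IsCyclicAction p d T) (x : List ℕ → M)
    (I : List ℕ) : totalDiff p T gs (totalDiff p T gs x) I = 0 := by
  induction gs generalizing x I with
  | nil => rfl
  | cons g gs ih =>
    rcases I with _ | ⟨i, J⟩
    · rfl
    rcases i with _ | j
    · simp only [totalDiff_zero_cons, ih]
    have hrow : (fun J' => totalDiff p T (g :: gs) x ((j + 1) :: J')) =
        (fun J' => periodicDiff p (T g) (j + 1) (x (j :: J'))) +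
          (-1 : R) ^ (j + 1) • totalDiff p T gs fun J' => x ((j + 1) :: J') := by
      funext J'
      simp [totalDiff_cons_cons]
    have hcross : totalDiff p T gs (fun J' => periodicDiff p (T g) (j + 1) (x (j :: J'))) J =
        periodicDiff p (T g) (j + 1) (totalDiff p T gs (fun J' => x (j :: J')) J) :=
      (map_totalDiff _ fun _ _ g' _ i => map_periodicDiff
        (fun y => (map_periodicDiff (hT.comm g' g) (j + 1) y).symm) i _).symm
    have hdouble : periodicDiff p (T g) (j + 1)
        (if j = 0 then 0 else periodicDiff p (T g) j (x ((j - 1) :: J))) = 0 := by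
      split_ifs
      · exact map_zero _
      · exact periodicDiff_succ_periodicDiff (hT.pow_eq_one g) j _
    rw [totalDiff_cons_cons, hrow, map_add, map_smul, Pi.add_apply, Pi.smul_apply, ih, hcross,
      if_neg (Nat.succ_ne_zero j), Nat.add_sub_cancel, totalDiff_cons_cons, map_add, hdouble,
      map_smul, smul_zero, add_zero, zero_add, pow_succ]
    module

/-- Below total degree `n`, the family `u` consists of elements of degree `I.sum + e` and is a cycle
for the sum of `d` and the total differential. -/
def IsTotalCycle (p : ℕ) (d : Module.End R M) (T : κ → Module.End R M) (gs : List κ)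
    (W : ℕ → Submodule R M) (e n : ℕ) (u : List ℕ → M) : Prop :=
  ∀ I, I.length = gs.length → I.sum < n →
    u I ∈ W (I.sum + e) ∧ d (u I) + totalDiff p T gs u I = 0

/-- Below total degree `n`, the family `x` consists of elements of degree `I.sum + e + 1` which
solve `d x = u + ∂ x`. For `u = concentrated a` this is a chain map from the tensor product of the
periodic resolutions. -/
def IsSystem (p : ℕ) (d : Module.End R M) (T : κ → Module.End R M) (gs : List κ)
    (W : ℕ → Submodule R M) (e n : ℕ) (u x : List ℕ → M) : Prop :=
  ∀ I, I.length = gs.length → I.sum < n →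
    x I ∈ W (I.sum + e + 1) ∧ d (x I) = u I + totalDiff p T gs x I

lemma isTotalCycle_concentrated [CharP R p] {a : M} (haT : ∀ g ∈ gs, T g a = a) (haW : a ∈ W 0)
    (had : d a = 0) : IsTotalCycle p d T gs W 0 n (concentrated a) := by
  intro I _ _
  rw [totalDiff_concentrated haT, add_zero, concentrated]
  split_ifs with hI
  · exact ⟨hI ▸ haW, (add_zero _).trans had⟩
  · exact ⟨Submodule.zero_mem _, (add_zero _).trans (map_zero d)⟩

lemma IsSystem.rhs_mem (hx : IsSystem p d T gs W e n u x)
    (hW : ∀ g ∈ gs, ∀ m, ∀ x ∈ W m, T g x ∈ W m) {I : List ℕ} (hl : I.length = gs.length)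
    (hI : I.sum ≤ n) (hu : u I ∈ W (I.sum + e)) :
    u I + totalDiff p T gs x I ∈ W (I.sum + e) := by
  refine Submodule.add_mem _ hu (totalDiff_mem _ fun I' hI' g hg i =>
    periodicDiff_mem (hW g hg _) i ?_)
  have hsum := hI'.2
  rw [show I.sum + e = I'.sum + e + 1 by omega]
  exact (hx I' (hI'.length_eq.trans hl) (by omega)).1

lemma IsSystem.differential_rhs (hx : IsSystem p d T gs W e n u x) (hT : IsCyclicAction p d T)
    {I : List ℕ} (hl : I.length = gs.length) (hI : I.sum ≤ n)
    (hu : d (u I) + totalDiff p T gs u I = 0) : d (u I + totalDiff p T gs x I) = 0 := by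
  have hdx : totalDiff p T gs (fun I => d (x I)) I =
      totalDiff p T gs (u + totalDiff p T gs x) I :=
    totalDiff_congr fun I' hI' => (hx I' (hI'.length_eq.trans hl) (by have := hI'.2; omega)).2
  rw [map_add, map_totalDiff d fun _ _ g _ i => map_periodicDiff (hT.comm_differential g) i _, hdx,
    map_add, Pi.add_apply, hT.totalDiff_totalDiff, add_zero, hu]

lemma IsSystem.exists_step (hx : IsSystem p d T gs W e n u x) (hT : IsCyclicAction p d T)
    (hW : ∀ g ∈ gs, ∀ m, ∀ x ∈ W m, T g x ∈ W m)
    (hexact : ∀ z ∈ W (n + e), d z = 0 → ∃ y ∈ W (n + e + 1), d y = z)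
    (hu : IsTotalCycle p d T gs W e (n + 1) u) :
    ∃ y : List ℕ → M, ∀ I, I.length = gs.length → I.sum = n →
      y I ∈ W (I.sum + e + 1) ∧ d (y I) = u I + totalDiff p T gs x I := by
  have (I : List ℕ) : ∃ y : M, I.length = gs.length → I.sum = n →
      y ∈ W (I.sum + e + 1) ∧ d y = u I + totalDiff p T gs x I := by
    by_cases h : I.length = gs.length ∧ I.sum = n
    · obtain ⟨hl, rfl⟩ := h
      have huI := hu I hl (Nat.lt_succ_self _)
      obtain ⟨y, hy⟩ := hexact _ (hx.rhs_mem hW hl le_rfl huI.1)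
        (hx.differential_rhs hT hl le_rfl huI.2)
      exact ⟨y, fun _ _ => hy⟩
    · exact ⟨0, fun hl hI => absurd ⟨hl, hI⟩ h⟩
  choose y hy using this
  exact ⟨y, hy⟩

theorem exists_isSystem_extending (hT : IsCyclicAction p d T)
    (hW : ∀ g ∈ gs, ∀ m, ∀ x ∈ W m, T g x ∈ W m)
    (hexact : ∀ m < n, ∀ z ∈ W (m + e), d z = 0 → ∃ y ∈ W (m + e + 1), d y = z)
    (hu : IsTotalCycle p d T gs W e n u) (Z : Set (List ℕ))
    (hZ : ∀ I' I, IsPredecessor I' I → I ∈ Z → I' ∈ Z) (x₀ : List ℕ → M)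
    (hx₀ : ∀ I ∈ Z, I.length = gs.length → I.sum < n →
      x₀ I ∈ W (I.sum + e + 1) ∧ d (x₀ I) = u I + totalDiff p T gs x₀ I) :
    ∃ x, Set.EqOn x x₀ Z ∧ IsSystem p d T gs W e n u x := by
  induction n with
  | zero => exact ⟨x₀, Set.eqOn_refl _ _, fun I _ h => absurd h (by omega)⟩
  | succ n ih =>
    obtain ⟨x, hxZ, hx⟩ := ih (fun m hm => hexact m (by omega)) (fun I hl hI => hu I hl (by omega))
      fun I hI hl hs => hx₀ I hI hl (by omega)
    obtain ⟨y, hy⟩ := hx.exists_step hT hW (hexact n (Nat.lt_succ_self n)) hu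
    refine ⟨fun I => if I ∈ Z then x₀ I else if I.sum = n then y I else x I,
      fun I hI => if_pos hI, fun I hl hI => ?_⟩
    have hdiff : totalDiff p T gs (fun I => if I ∈ Z then x₀ I else if I.sum = n then y I else x I)
        I = totalDiff p T gs x I := by
      refine totalDiff_congr fun I' hI' => ?_
      have hsum := hI'.2
      split_ifs with hz hn
      · exact (hxZ hz).symm
      · omega
      · rfl
    rw [hdiff]
    beta_reduce
    split_ifs with hz hn
    · rw [totalDiff_congr fun I' hI' => hxZ (hZ I' I hI' hz)]
      exact hx₀ I hz hl hI
    · exact hy I hl hn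
    · exact hx I hl (by omega)

theorem exists_isSystem (hT : IsCyclicAction p d T) (hW : ∀ g ∈ gs, ∀ m, ∀ x ∈ W m, T g x ∈ W m)
    (hexact : ∀ m < n, ∀ z ∈ W (m + e), d z = 0 → ∃ y ∈ W (m + e + 1), d y = z)
    (hu : IsTotalCycle p d T gs W e n u) : ∃ x, IsSystem p d T gs W e n u x := by
  obtain ⟨x, -, hx⟩ := exists_isSystem_extending hT hW hexact hu ∅ (fun _ _ _ h => h) 0
    fun _ h => absurd h (Set.notMem_empty _)
  exact ⟨x, hx⟩

lemma IsSystem.isTotalCycle_alternating (hx : IsSystem p d T gs W 0 n 0 x) :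
    IsTotalCycle p d T gs W 1 n fun I => (-1 : R) ^ I.sum • x I := by
  intro I hl hI
  refine ⟨Submodule.smul_mem _ _ (hx I hl hI).1, ?_⟩
  rw [totalDiff_alternating, map_smul, (hx I hl hI).2, Pi.zero_apply, zero_add, add_neg_cancel]

lemma IsSystem.sub (hx : IsSystem p d T gs W e n u x) (hx' : IsSystem p d T gs W e n u x') :
    IsSystem p d T gs W e n 0 (x - x') := by
  intro I hl hI
  refine ⟨Submodule.sub_mem _ (hx I hl hI).1 (hx' I hl hI).1, ?_⟩
  rw [Pi.sub_apply, map_sub, (hx I hl hI).2, (hx' I hl hI).2, map_sub]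
  simp

-- Two systems differ by the total boundary of a homotopy `y`, up to a family of top cycles.
theorem IsSystem.obstruction_eq (hx : IsSystem p d T gs W 0 n u x)
    (hx' : IsSystem p d T gs W 0 n u x') (hT : IsCyclicAction p d T)
    (hW : ∀ g ∈ gs, ∀ m, ∀ x ∈ W m, T g x ∈ W m)
    (hexact : ∀ m < n, ∀ z ∈ W m, d z = 0 → ∃ y ∈ W (m + 1), d y = z) (ω : M →ₗ[R] M')
    (hω : ∀ z ∈ W n, d z = 0 → ∀ g ∈ gs, ∀ i, ω (periodicDiff p (T g) i z) = 0)
    {I : List ℕ} (hl : I.length = gs.length) (hI : I.sum = n) :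
    ω (totalDiff p T gs x I) = ω (totalDiff p T gs x' I) := by
  set v : List ℕ → M := fun I => (-1 : R) ^ I.sum • (x - x') I with hv
  have hcycle : IsTotalCycle p d T gs W 1 n v := (hx.sub hx').isTotalCycle_alternating
  obtain ⟨y, hy⟩ := exists_isSystem (n := n - 1) hT hW (fun m hm => hexact (m + 1) (by omega))
    fun I hl hI => hcycle I hl (by omega)
  have hzero : ω (totalDiff p T gs (v + totalDiff p T gs y) I) = 0 := by
    rw [← LinearMap.mem_ker]
    refine totalDiff_mem _ fun I' hI' g hg i => ?_
    have hsum := hI'.2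
    have hl' := hI'.length_eq.trans hl
    obtain ⟨hmem, hd⟩ := hcycle I' hl' (by omega)
    refine LinearMap.mem_ker.2 (hω _ ?_ (hy.differential_rhs hT hl' (by omega) hd) g hg i)
    rw [show n = I'.sum + 1 by omega]
    exact hy.rhs_mem hW hl' (by omega) hmem
  rw [map_add, Pi.add_apply, hT.totalDiff_totalDiff, add_zero, hv, totalDiff_alternating, map_neg,
    neg_eq_zero, map_smul, (isUnit_one.neg.pow _).smul_eq_zero, map_sub, Pi.sub_apply, map_sub,
    sub_eq_zero] at hzero
  exact hzero

end Systems

/-! ### Coefficients of facets -/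

section Contraction

variable {R V : Type*} [CommRing R] {P : List V → Prop} {B : Set V}

/-- Contraction with the vertex `f`, that is, with its indicator function. -/
noncomputable def contractAt (f : V) : Chain R V →ₗ[R] Chain R V :=
  contract fun v => if v = f then 1 else 0

/-- Contraction with all the vertices in a list, the head first. -/
noncomputable def contractAll : List V → Chain R V →ₗ[R] Chain R V
  | [] => LinearMap.id
  | f :: l => contractAll l ∘ₗ contractAt f

/-- The projection of the space of chains which kills the simplices meeting `B`. -/
noncomputable def avoid (B : Set V) : Chain R V →ₗ[R] Chain R V :=
  Finsupp.linearCombination R fun l => if ∀ v ∈ l, v ∉ B then simplex l else 0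

lemma contractAll_append (l l' : List V) (x : Chain R V) :
    contractAll (l ++ l') x = contractAll l' (contractAll l x) := by
  induction l generalizing x with
  | nil => rfl
  | cons f _ ih => exact ih _

lemma contractAt_cone (f v : V) (x : Chain R V) :
    contractAt f (cone v x) = (if v = f then x else 0) - cone v (contractAt f x) := by
  rw [contractAt, contract_cone, ite_smul, one_smul, zero_smul]

lemma contractAt_mem (f : V) {x : Chain R V} (hx : x ∈ supportedOn R P) :
    contractAt f x ∈ supportedOn R fun l' => ∃ l, P l ∧ l.Perm (f :: l') := by
  refine map_mem_of_mem_supportedOn (contractAt f) _ (fun l hl => ?_) hx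
  rw [contractAt, contract_simplex]
  refine supportedOn_mono ?_ (contractList_mem _ l)
  rintro l' ⟨v, hperm, -, hv⟩
  rw [ite_ne_right_iff] at hv
  exact ⟨l, hl, hv.1 ▸ hperm⟩

lemma contractAt_eq_zero {f : V} {x : Chain R V} (hx : x ∈ supportedOn R fun l => f ∉ l) :
    contractAt f x = 0 := by
  have hmem : contractAt f x ∈ supportedOn R fun _ : List V => False :=
    supportedOn_mono (fun l' ⟨_, hf, hperm⟩ => hf (hperm.mem_iff.2 List.mem_cons_self))
      (contractAt_mem f hx)
  simpa [supportedOn] using hmem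

lemma contractAll_mem (A : List V) {x : Chain R V} (hx : x ∈ supportedOn R P) :
    contractAll A x ∈ supportedOn R fun l' => ∃ l, P l ∧ l.Perm (A ++ l') := by
  induction A generalizing P x with
  | nil => exact supportedOn_mono (fun l hl => ⟨l, hl, .refl _⟩) hx
  | cons f A ih =>
    refine supportedOn_mono ?_ (ih (contractAt_mem f hx))
    rintro l' ⟨l, ⟨l₀, hP, hperm₀⟩, hperm⟩
    exact ⟨l₀, hP, hperm₀.trans (hperm.cons f)⟩

lemma avoid_simplex (l : List V) :
    avoid B (simplex l : Chain R V) = if ∀ v ∈ l, v ∉ B then simplex l else 0 := by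
  simp [avoid]

lemma avoid_cone (v : V) (x : Chain R V) :
    avoid B (cone v x) = if v ∈ B then 0 else cone v (avoid B x) := by
  have : avoid B ∘ₗ cone v = if v ∈ B then 0 else cone (R := R) v ∘ₗ avoid B :=
    linearMap_ext_simplex fun l => by
      by_cases hv : v ∈ B <;> simp [avoid_simplex, hv, apply_ite (cone (R := R) v)]
  simpa [apply_ite (fun f : Chain R V →ₗ[R] Chain R V => f x)] using LinearMap.congr_fun this x

lemma avoid_contractAt {f : V} (hf : f ∉ B) (x : Chain R V) :
    avoid B (contractAt f x) = contractAt f (avoid B x) := by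
  have : avoid B ∘ₗ contractAt f = contractAt (R := R) f ∘ₗ avoid B := by
    refine linearMap_ext_cone (by simp [contractAt, avoid_simplex]) fun v x ih => ?_
    simp only [LinearMap.comp_apply] at ih ⊢
    rw [contractAt_cone, map_sub, avoid_cone, avoid_cone, ih]
    split_ifs with hvf hv hv
    · exact absurd hv (hvf ▸ hf)
    · rw [contractAt_cone, if_pos hvf]
    · simp
    · rw [contractAt_cone, if_neg hvf, map_zero]
  simpa using LinearMap.congr_fun this x

lemma avoid_contractAll {A : List V} (hA : ∀ f ∈ A, f ∉ B) (x : Chain R V) :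
    avoid B (contractAll A x) = contractAll A (avoid B x) := by
  induction A generalizing x with
  | nil => rfl
  | cons f A ih =>
    rw [List.forall_mem_cons] at hA
    simp only [contractAll, LinearMap.comp_apply, ih hA.2, avoid_contractAt hA.1]

lemma avoid_avoid {B' : Set V} (h : B' ⊆ B) (x : Chain R V) :
    avoid B (avoid B' x) = avoid B x := by
  have : avoid B ∘ₗ avoid B' = avoid (R := R) B := linearMap_ext_simplex fun l => by
    rw [LinearMap.comp_apply, avoid_simplex (B := B')]
    split_ifs with hl
    · rfl
    · rw [map_zero, avoid_simplex, if_neg fun hlB => hl fun v hv hvB => hlB v hv (h hvB)]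
  exact LinearMap.congr_fun this x

lemma avoid_eq_self {x : Chain R V} (hx : x ∈ supportedOn R fun l => ∀ v ∈ l, v ∉ B) :
    avoid B x = x :=
  map_eq_of_mem_supportedOn (avoid B) LinearMap.id
    (fun l hl => by rw [avoid_simplex, if_pos hl, LinearMap.id_apply]) hx

lemma avoid_apply_nil (x : Chain R V) : avoid B x [] = x [] := by
  have : Finsupp.lapply [] ∘ₗ avoid B = Finsupp.lapply (R := R) ([] : List V) :=
    linearMap_ext_cone (by simp [avoid_simplex]) fun v x _ => by
      have hcone (y : Chain R V) : cone v y [] = 0 :=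
        Finsupp.mapDomain_of_notMem_range _ _ (by simp)
      simp only [LinearMap.comp_apply, avoid_cone, Finsupp.lapply_apply, hcone]
      split_ifs <;> simp [hcone]
  exact LinearMap.congr_fun this x

end Contraction

section PathForm

variable {R V V' : Type*} [CommRing R] {B : Set V} {v : ℕ → V} {q n : ℕ}

/-- Multiplication by the quadratic element `∑ vᵢ vᵢ₊₁` of a path with edges indexed by
`q ≤ i < n`. -/
noncomputable def pathForm (v : ℕ → V) (q n : ℕ) : Module.End R (Chain R V) :=
  ∑ i ∈ Finset.Ico q n, cone (v i) ∘ₗ cone (v (i + 1))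

lemma pathForm_apply (x : Chain R V) :
    pathForm v q n x = ∑ i ∈ Finset.Ico q n, cone (v i) (cone (v (i + 1)) x) := by
  simp [pathForm]

lemma contractAt_cone_cone (f a b : V) (x : Chain R V) :
    contractAt f (cone a (cone b x)) =
      ((if a = f then cone b x else 0) - if b = f then cone a x else 0) +
        cone a (cone b (contractAt f x)) := by
  rw [contractAt_cone, contractAt_cone, map_sub, apply_ite (cone a), map_zero]
  abel

lemma contractAt_pathForm (hv : Set.InjOn v (Set.Icc q n)) {k : ℕ} (hqk : q ≤ k) (hkn : k ≤ n)
    (x : Chain R V) :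
    contractAt (v k) (pathForm v q n x) =
      ((if k < n then cone (v (k + 1)) x else 0) - if q < k then cone (v (k - 1)) x else 0) +
        pathForm v q n (contractAt (v k) x) := by
  have hk : k ∈ Set.Icc q n := ⟨hqk, hkn⟩
  rw [pathForm_apply, pathForm_apply, map_sum]
  simp only [contractAt_cone_cone, Finset.sum_add_distrib, Finset.sum_sub_distrib]
  congr 2
  · rw [Finset.sum_congr rfl fun i hi => if_congr (P := v i = v k) (Q := i = k) ?_ rfl rfl]
    · simp [hqk]
    · rw [Finset.mem_Ico] at hi
      exact hv.eq_iff ⟨hi.1, hi.2.le⟩ hk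
  · rw [Finset.sum_congr rfl fun i hi =>
      if_congr (P := v (i + 1) = v k) (Q := i = k - 1 ∧ q < k) ?_ rfl rfl]
    · by_cases hlt : q < k
      · simp only [hlt, and_true, if_true, Finset.sum_ite_eq', Finset.mem_Ico]
        rw [if_pos (by omega)]
      · simp [hlt]
    · rw [Finset.mem_Ico] at hi
      rw [hv.eq_iff ⟨by omega, hi.2⟩ hk]
      omega

lemma avoid_cone_cone (a b : V) (x : Chain R V) :
    avoid B (cone a (cone b x)) = if a ∉ B ∧ b ∉ B then cone a (cone b (avoid B x)) else 0 := by
  by_cases ha : a ∈ B <;> by_cases hb : b ∈ B <;> simp [avoid_cone, ha, hb]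

lemma semiconjBy_avoid_pathForm {q' : ℕ} (hq : q ≤ q')
    (h : ∀ i ∈ Finset.Ico q n, q' ≤ i ↔ v i ∉ B ∧ v (i + 1) ∉ B) :
    SemiconjBy (avoid B) (pathForm (R := R) v q n) (pathForm v q' n) := by
  refine LinearMap.ext fun x => ?_
  simp only [Module.End.mul_apply, pathForm_apply, map_sum, avoid_cone_cone]
  rw [← Finset.sum_filter]
  refine Finset.sum_congr (Finset.ext fun i => ?_) fun _ _ => rfl
  have := h i
  grind

lemma mem_first_edge_iff (hv : Set.InjOn v (Set.Icc q n)) (hqn : q < n) {i : ℕ}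
    (hi : i ∈ Set.Icc q n) : v i ∈ ({v q, v (q + 1)} : Set V) ↔ i < q + 2 := by
  rw [Set.mem_insert_iff, Set.mem_singleton_iff, hv.eq_iff hi ⟨le_rfl, hqn.le⟩,
    hv.eq_iff hi ⟨q.le_succ, hqn⟩]
  have := hi.1
  omega

lemma semiconjBy_avoid_first_edge (hv : Set.InjOn v (Set.Icc q n)) (hqn : q < n) :
    SemiconjBy (avoid {v q, v (q + 1)}) (pathForm (R := R) v q n) (pathForm v (q + 2) n) :=
  semiconjBy_avoid_pathForm (Nat.le_add_right q 2) fun i hi => by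
    rw [Finset.mem_Ico] at hi
    rw [mem_first_edge_iff hv hqn ⟨hi.1, hi.2.le⟩, mem_first_edge_iff hv hqn ⟨by omega, hi.2⟩]
    omega

lemma avoid_contractAt_pathForm_pow (hv : Set.InjOn v (Set.Icc q n)) (hqn : q < n)
    {y : Chain R V} (hy : contractAt (v q) y = 0) (a : ℕ) :
    avoid {v q, v (q + 1)} (contractAt (v q) ((pathForm v q n ^ a) y)) = 0 := by
  induction a with
  | zero => simp [hy]
  | succ a ih =>
    rw [pow_succ', Module.End.mul_apply, contractAt_pathForm hv le_rfl hqn.le, map_add,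
      ← Module.End.mul_apply (avoid _), (semiconjBy_avoid_first_edge hv hqn).eq,
      Module.End.mul_apply, ih, map_zero]
    simp [hqn, avoid_cone]

lemma avoid_contractAt_contractAt_pathForm_pow (hv : Set.InjOn v (Set.Icc q n)) (hqn : q < n)
    {y : Chain R V} (hy : contractAt (v q) y = 0) (hy' : avoid {v q, v (q + 1)} y = y) (a : ℕ) :
    avoid {v q, v (q + 1)}
        (contractAt (v (q + 1)) (contractAt (v q) ((pathForm v q n ^ (a + 1)) y))) =
      ((a + 1 : ℕ) : R) • (pathForm v (q + 2) n ^ a) y := by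
  have hpath := semiconjBy_avoid_first_edge (R := R) hv hqn
  have hstep (x : Chain R V) (hx : avoid {v q, v (q + 1)} (contractAt (v q) x) = 0) :
      avoid {v q, v (q + 1)} (contractAt (v (q + 1)) (contractAt (v q) (pathForm v q n x))) =
        avoid {v q, v (q + 1)} x + pathForm v (q + 2) n
          (avoid {v q, v (q + 1)} (contractAt (v (q + 1)) (contractAt (v q) x))) := by
    rw [contractAt_pathForm hv le_rfl hqn.le, map_add, contractAt_pathForm hv q.le_succ hqn,
      map_add, map_add, ← Module.End.mul_apply (avoid _) (pathForm v q n), hpath.eq,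
      Module.End.mul_apply]
    simp [hqn, contractAt_cone, avoid_cone, apply_ite (avoid (R := R) {v q, v (q + 1)}), hx]
  induction a with
  | zero =>
    rw [pow_one, hstep y (by simp [hy]), hy]
    simp [hy']
  | succ a ih =>
    rw [pow_succ', Module.End.mul_apply, hstep _ (avoid_contractAt_pathForm_pow hv hqn hy _), ih,
      ← Module.End.mul_apply (avoid _), (hpath.pow_right _).eq, Module.End.mul_apply, hy', map_smul,
      ← Module.End.mul_apply, ← pow_succ', Nat.cast_succ (a + 1), add_smul, one_smul, add_comm]

-- The only perfect matching of a path with `2 j` vertices by edges is the obvious one, and its `j`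
-- edges can be chosen in any order.
lemma avoid_contractAll_pathForm_pow {j : ℕ} (hn : n + 1 = q + 2 * j)
    (hv : Set.InjOn v (Set.Icc q n)) (hB : ∀ i ∈ Set.Icc q n, v i ∈ B) {y : Chain R V}
    (hy : y ∈ supportedOn R fun l => ∀ w ∈ l, w ∉ B) :
    avoid B (contractAll ((List.range' q (2 * j)).map v) ((pathForm v q n ^ j) y)) =
      (j.factorial : R) • y := by
  induction j generalizing q with
  | zero => simpa [contractAll] using avoid_eq_self hy
  | succ j ih =>
    have hsub : ({v q, v (q + 1)} : Set V) ⊆ B :=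
      Set.insert_subset (hB _ ⟨le_rfl, by omega⟩)
        (Set.singleton_subset_iff.2 (hB _ ⟨q.le_succ, by omega⟩))
    have hzero : contractAt (v q) y = 0 :=
      contractAt_eq_zero (supportedOn_mono (fun l hl hq => hl _ hq (hsub (by simp))) hy)
    have hself : avoid {v q, v (q + 1)} y = y :=
      avoid_eq_self (supportedOn_mono (fun l hl w hw hwv => hl w hw (hsub hwv)) hy)
    have hrest : ∀ f ∈ (List.range' (q + 2) (2 * j)).map v, f ∉ ({v q, v (q + 1)} : Set V) := by
      intro f hf
      obtain ⟨i, hi, rfl⟩ := List.mem_map.1 hf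
      rw [List.mem_range'_1] at hi
      rw [mem_first_edge_iff hv (by omega) ⟨by omega, by omega⟩]
      omega
    simp only [Nat.mul_add, Nat.mul_one, List.range'_succ, List.map_cons, contractAll,
      LinearMap.comp_apply]
    rw [← avoid_avoid hsub, avoid_contractAll hrest,
      avoid_contractAt_contractAt_pathForm_pow hv (by omega) hzero hself, map_smul, map_smul,
      ih (by omega) (hv.mono (Set.Icc_subset_Icc_left (by omega)))
        fun i hi => hB i ⟨by have := hi.1; omega, hi.2⟩, smul_smul, ← Nat.cast_mul,
      Nat.factorial_succ]

end PathForm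

/-! ### The quadratic element of a cycle -/

lemma sum_range_natCast_zmod {M : Type*} [AddCommMonoid M] {p : ℕ} [NeZero p] (f : ZMod p → M) :
    ∑ t ∈ Finset.range p, f t = ∑ c, f c :=
  Finset.sum_nbij' (↑) ZMod.val (fun _ _ => Finset.mem_univ _)
    (fun c _ => Finset.mem_range.2 c.val_lt)
    (fun _ ht => ZMod.val_natCast_of_lt (Finset.mem_range.1 ht))
    (fun c _ => ZMod.natCast_zmod_val c) fun _ _ => rfl

section CyclicForm

variable {R Φ : Type*} [CommRing R] {p : ℕ} [NeZero p] {φ : Φ} {P : List (Φ × ZMod p) → Prop}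
  {τ : Φ × ZMod p → Φ × ZMod p}

/-- Multiplication by the quadratic element `∑ vᵢ vᵢ₊₁` of the cycle formed by the labels
`vᵢ = (φ, i)`. -/
noncomputable def cyclicForm (φ : Φ) : Module.End R (Chain R (Φ × ZMod p)) :=
  ∑ c, cone (φ, c) ∘ₗ cone (φ, c + 1)

lemma cyclicForm_apply (x : Chain R (Φ × ZMod p)) :
    cyclicForm φ x = ∑ c, cone (φ, c) (cone (φ, c + 1) x) := by
  simp [cyclicForm]

lemma commute_boundary_cyclicForm :
    Commute boundary (cyclicForm φ : Module.End R (Chain R (Φ × ZMod p))) := by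
  refine LinearMap.ext fun x => ?_
  simp only [Module.End.mul_apply, cyclicForm_apply, map_sum, boundary_cone, map_sub]
  have htelescope : ∑ c : ZMod p, cone (φ, c + 1) x = ∑ c, cone (φ, c) x :=
    Equiv.sum_comp (Equiv.addRight 1) fun c => cone (φ, c) x
  simp only [Finset.sum_sub_distrib, htelescope]
  abel

lemma commute_mapChain_cyclicForm {b : ZMod p} (hτ : ∀ c, τ (φ, c) = (φ, c + b)) :
    Commute (mapChain τ) (cyclicForm φ : Module.End R (Chain R (Φ × ZMod p))) := by
  refine LinearMap.ext fun x => ?_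
  simp only [Module.End.mul_apply, cyclicForm_apply, map_sum, mapChain_cone, hτ,
    add_right_comm _ 1 b]
  exact Equiv.sum_comp (Equiv.addRight b) fun c => cone (φ, c) (cone (φ, c + 1) (mapChain τ x))

lemma boundary_cyclicForm_pow (n : ℕ) (x : Chain R (Φ × ZMod p)) :
    boundary ((cyclicForm φ ^ n) x) = (cyclicForm φ ^ n) (boundary x) := by
  rw [← Module.End.mul_apply, (commute_boundary_cyclicForm.pow_right n).eq, Module.End.mul_apply]

lemma mapChain_cyclicForm_pow {b : ZMod p} (hτ : ∀ c, τ (φ, c) = (φ, c + b)) (n : ℕ)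
    (x : Chain R (Φ × ZMod p)) :
    mapChain τ ((cyclicForm φ ^ n) x) = (cyclicForm φ ^ n) (mapChain τ x) := by
  rw [← Module.End.mul_apply, ((commute_mapChain_cyclicForm hτ).pow_right n).eq,
    Module.End.mul_apply]

lemma cyclicForm_pow_mem (n : ℕ) {x : Chain R (Φ × ZMod p)} (hx : x ∈ supportedOn R P) :
    (cyclicForm φ ^ n) x ∈ supportedOn R fun l =>
      ∃ l₁ l₂, l = l₁ ++ l₂ ∧ l₁.length = 2 * n ∧ (∀ v ∈ l₁, v.1 = φ) ∧ P l₂ := by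
  induction n with
  | zero => exact supportedOn_mono (fun l hl => ⟨[], l, rfl, rfl, by simp, hl⟩) hx
  | succ n ih =>
    rw [pow_succ', Module.End.mul_apply]
    refine map_mem_of_mem_supportedOn (cyclicForm φ) _ ?_ ih
    rintro _ ⟨l₁, l₂, rfl, hl₁, hφ, hP⟩
    rw [cyclicForm_apply]
    refine Submodule.sum_mem _ fun c _ => ?_
    rw [cone_simplex, cone_simplex]
    exact simplex_mem_supportedOn
      ⟨_ :: _ :: l₁, l₂, rfl, by simp only [List.length_cons]; omega, by simpa using hφ, hP⟩

lemma val_lt_sub_one_iff (c : ZMod p) : c.val < p - 1 ↔ c ≠ -1 := by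
  obtain ⟨n, rfl⟩ := Nat.exists_eq_succ_of_ne_zero (NeZero.ne p)
  rw [← (ZMod.val_injective _).ne_iff, ZMod.val_neg_one]
  have := c.val_lt
  omega

lemma val_lt_sub_two_iff (c : ZMod p) : c.val < p - 2 ↔ c ≠ -1 ∧ c + 1 ≠ -1 := by
  rw [← val_lt_sub_one_iff, ← val_lt_sub_one_iff]
  by_cases hc : c.val < p - 1
  · have : (c + 1).val = c.val + 1 := by
      conv_lhs => rw [← ZMod.natCast_zmod_val c]
      exact_mod_cast ZMod.val_natCast_of_lt (by omega : c.val + 1 < p)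
    omega
  · omega

lemma semiconjBy_avoid_cyclicForm :
    SemiconjBy (avoid {(φ, -1)}) (cyclicForm φ : Module.End R (Chain R (Φ × ZMod p)))
      (pathForm (fun i : ℕ => (φ, (i : ZMod p))) 0 (p - 2)) := by
  refine LinearMap.ext fun x => ?_
  simp only [Module.End.mul_apply, cyclicForm_apply, pathForm_apply, map_sum, avoid_cone_cone]
  have hcond : ∀ i ∈ Finset.range p,
      ((φ, (i : ZMod p)) ∉ ({(φ, -1)} : Set _) ∧ (φ, (i : ZMod p) + 1) ∉ ({(φ, -1)} : Set _) ↔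
        i < p - 2) := fun i hi => by
    simpa [ZMod.val_natCast_of_lt (Finset.mem_range.1 hi)] using
      (val_lt_sub_two_iff (i : ZMod p)).symm
  rw [← sum_range_natCast_zmod, Nat.Ico_zero_eq_range]
  refine (Finset.sum_subset_zero_on_sdiff (Finset.range_subset_range.2 (Nat.sub_le _ _))
    (fun i hi => ?_) fun i hi => ?_).symm
  · rw [mem_sdiff, Finset.mem_range, Finset.mem_range] at hi
    rw [if_neg (mt (hcond i (Finset.mem_range.2 hi.1)).1 hi.2)]
  · rw [Finset.mem_range] at hi
    rw [if_pos ((hcond i (Finset.mem_range.2 (by omega))).2 hi), Nat.cast_succ]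

omit [NeZero p] in
lemma injOn_natCast_zmod : Set.InjOn (fun i : ℕ => (φ, (i : ZMod p))) (Set.Iio p) := by
  intro i hi j hj h
  have := congrArg ZMod.val (Prod.mk.inj h).2
  rwa [ZMod.val_natCast_of_lt hi, ZMod.val_natCast_of_lt hj] at this

variable (p φ) in
/-- The facet of the boundary of the simplex on the labels `(φ, c)` which misses `(φ, -1)`. -/
def fiberFacet : List (Φ × ZMod p) := (List.range (p - 1)).map fun i : ℕ => (φ, (i : ZMod p))

lemma mem_fiberFacet {v : Φ × ZMod p} : v ∈ fiberFacet p φ ↔ v.1 = φ ∧ v.2 ≠ -1 := by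
  rw [← val_lt_sub_one_iff, fiberFacet, List.mem_map]
  constructor
  · rintro ⟨i, hi, rfl⟩
    rw [List.mem_range] at hi
    exact ⟨rfl, by rwa [ZMod.val_natCast_of_lt (by omega)]⟩
  · rintro ⟨rfl, hv⟩
    exact ⟨v.2.val, List.mem_range.2 hv, by rw [ZMod.natCast_zmod_val]⟩

omit [NeZero p] in
lemma nodup_fiberFacet : (fiberFacet p φ).Nodup :=
  List.nodup_range.map_on fun _ hi _ hj h => injOn_natCast_zmod
    ((List.mem_range.1 hi).trans_le (Nat.sub_le _ _))
    ((List.mem_range.1 hj).trans_le (Nat.sub_le _ _)) h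

lemma avoid_contractAll_cyclicForm_pow {h : ℕ} (hh : h ≠ 0) (hp : p = 2 * h + 1)
    {y : Chain R (Φ × ZMod p)} (hy : y ∈ supportedOn R fun l => ∀ v ∈ l, v.1 ≠ φ) :
    avoid {v | v.1 = φ} (contractAll (fiberFacet p φ) ((cyclicForm φ ^ h) y)) =
      (h.factorial : R) • y := by
  have hy' : avoid {(φ, -1)} y = y :=
    avoid_eq_self (supportedOn_mono (fun l hl v hv hvφ => hl v hv (congrArg Prod.fst hvφ)) hy)
  have hfacet : ∀ v ∈ fiberFacet p φ, v ∉ ({(φ, -1)} : Set _) := fun v hv hvφ =>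
    (mem_fiberFacet.1 hv).2 (congrArg Prod.snd hvφ)
  rw [← avoid_avoid (show {(φ, -1)} ⊆ {v : Φ × ZMod p | v.1 = φ} by simp),
    avoid_contractAll hfacet, ← Module.End.mul_apply (avoid {(φ, -1)}),
    (semiconjBy_avoid_cyclicForm.pow_right h).eq, Module.End.mul_apply, hy', fiberFacet,
    List.range_eq_range', show p - 1 = 2 * h by omega]
  exact avoid_contractAll_pathForm_pow (by omega)
    (injOn_natCast_zmod.mono fun i hi => Set.mem_Iio.2 (by have := hi.2; omega))
    (fun _ _ => rfl) hy

end CyclicForm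

section PeriodicCap

/-- An equivariant chain map from the periodic resolution of `ℤ/p`, truncated below degree `p - 1`,
to the boundary of the simplex on the labels `(φ, c)`, where a generator `τ` adds `1` to `c`. The
first obstruction to extending it is a cycle whose facet coefficient `coeff` does not vanish.
Multiplication by this cycle is `top`. -/
structure PeriodicCap {Φ : Type*} (p : ℕ) (φ : Φ) where
  /-- The image of the generator of degree `i`. -/
  chain : ℕ → Chain (ZMod p) (Φ × ZMod p)
  /-- Multiplication by the obstruction cycle. -/
  top : Module.End (ZMod p) (Chain (ZMod p) (Φ × ZMod p))
  /-- The facet coefficient of the obstruction cycle. -/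
  coeff : ZMod p
  coeff_ne_zero : coeff ≠ 0
  chain_mem : ∀ i, chain i ∈ supportedOn (ZMod p) fun l => l.length = i + 1 ∧ ∀ v ∈ l, v.1 = φ
  boundary_chain_zero : boundary (chain 0) = simplex []
  boundary_chain_succ : ∀ τ : Φ × ZMod p → Φ × ZMod p, (∀ c, τ (φ, c) = (φ, c + 1)) →
    ∀ i, i + 1 < p - 1 → boundary (chain (i + 1)) = periodicDiff p (mapChain τ) (i + 1) (chain i)
  periodicDiff_chain : ∀ τ : Φ × ZMod p → Φ × ZMod p, (∀ c, τ (φ, c) = (φ, c + 1)) →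
    periodicDiff p (mapChain τ) (p - 1) (chain (p - 2)) = top (simplex [])
  boundary_top : ∀ y, boundary (top y) = top (boundary y)
  mapChain_top : ∀ (τ : Φ × ZMod p → Φ × ZMod p) (b : ZMod p), (∀ c, τ (φ, c) = (φ, c + b)) →
    ∀ y, mapChain τ (top y) = top (mapChain τ y)
  top_mem : ∀ (P : List (Φ × ZMod p) → Prop), ∀ y ∈ supportedOn (ZMod p) P,
    top y ∈ supportedOn (ZMod p) fun l =>
      ∃ l₁ l₂, l = l₁ ++ l₂ ∧ l₁.length = p - 1 ∧ (∀ v ∈ l₁, v.1 = φ) ∧ P l₂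
  avoid_contractAll_top : ∀ y ∈ supportedOn (ZMod p) fun l => ∀ v ∈ l, v.1 ≠ φ,
    avoid {v | v.1 = φ} (contractAll (fiberFacet p φ) (top y)) = coeff • y

variable {Φ : Type*}

lemma nonempty_periodicCap_two (φ : Φ) : Nonempty (PeriodicCap 2 φ) := ⟨{
  chain i := simplex (List.replicate (i + 1) (φ, 0))
  top := ∑ c, cone (φ, c)
  coeff := 1
  coeff_ne_zero := one_ne_zero
  chain_mem i := simplex_mem_supportedOn ⟨by simp, fun v hv => by rw [List.eq_of_mem_replicate hv]⟩
  boundary_chain_zero := by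
    rw [zero_add, List.replicate_one, ← cone_simplex, boundary_cone]
    simp
  boundary_chain_succ _ _ i hi := by omega
  periodicDiff_chain τ hτ := by
    have hsum : ∑ c : ZMod 2, (simplex [(φ, c)] : Chain (ZMod 2) _) =
        simplex [(φ, 0)] + simplex [(φ, 1)] := Fin.sum_univ_two _
    simp [periodicDiff, hτ, ZModModule.sub_eq_add, add_comm, hsum]
  boundary_top y := by
    simp [boundary_cone, ZModModule.sub_eq_add, Finset.sum_add_distrib, two_nsmul,
      ZModModule.add_self]
  mapChain_top τ b hτ y := by
    simp only [LinearMap.sum_apply, map_sum, mapChain_cone, hτ]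
    exact Equiv.sum_comp (Equiv.addRight b) fun c => cone (φ, c) (mapChain τ y)
  top_mem P y hy := by
    rw [LinearMap.sum_apply]
    refine Submodule.sum_mem _ fun c _ => map_mem_of_mem_supportedOn (cone (φ, c)) _ ?_ hy
    intro l hl
    rw [cone_simplex]
    exact simplex_mem_supportedOn ⟨[(φ, c)], l, rfl, rfl, by simp, hl⟩
  avoid_contractAll_top y hy := by
    have hzero : contractAt (φ, 0) y = 0 :=
      contractAt_eq_zero (supportedOn_mono (fun l hl hmem => hl _ hmem rfl) hy)
    have hcontract : contractAll (fiberFacet 2 φ) (∑ c : ZMod 2, cone (φ, c) y) = y := by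
      simp [fiberFacet, contractAll, contractAt_cone, hzero]
    rw [LinearMap.sum_apply, hcontract, one_smul]
    exact avoid_eq_self hy }⟩

lemma sum_pow_mapChain_cyclicForm_pow {R : Type*} [CommRing R] {p : ℕ} [NeZero p] {φ : Φ}
    {τ : Φ × ZMod p → Φ × ZMod p} (hτ : ∀ c, τ (φ, c) = (φ, c + 1)) (k : ℕ) :
    (∑ t ∈ Finset.range p, (mapChain τ : Module.End R _) ^ t)
        ((cyclicForm φ ^ k) (simplex [(φ, 0), (φ, 1)])) =
      (cyclicForm φ ^ (k + 1)) (simplex []) := by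
  have hiter (t : ℕ) (c : ZMod p) : τ^[t] (φ, c) = (φ, c + t) := by
    induction t with
    | zero => simp
    | succ t ih => rw [Function.iterate_succ_apply', ih, hτ, Nat.cast_succ, add_assoc]
  have hcomm : Commute (∑ t ∈ Finset.range p, (mapChain τ : Module.End R _) ^ t)
      (cyclicForm φ ^ k) :=
    .sum_left _ _ _ fun t _ => (commute_mapChain_cyclicForm hτ).pow_pow t k
  rw [← Module.End.mul_apply, hcomm.eq, Module.End.mul_apply, pow_succ, Module.End.mul_apply,
    cyclicForm_apply, ← sum_range_natCast_zmod]
  simp [mapChain_pow, hiter, add_comm]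

/-- The chains of the periodic cap for odd `p`. -/
noncomputable def oddCapChain (R : Type*) [CommRing R] (p : ℕ) [NeZero p] (φ : Φ) (i : ℕ) :
    Chain R (Φ × ZMod p) :=
  (cyclicForm φ ^ (i / 2)) (simplex (if Odd i then [(φ, 0), (φ, 1)] else [(φ, 0)]))

section OddCapChain

variable {R : Type*} [CommRing R] {p : ℕ} [NeZero p] {φ : Φ}

lemma oddCapChain_mem (i : ℕ) :
    oddCapChain R p φ i ∈ supportedOn R fun l => l.length = i + 1 ∧ ∀ v ∈ l, v.1 = φ := by
  refine supportedOn_mono ?_ (cyclicForm_pow_mem (i / 2) (simplex_mem_supportedOn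
    (P := (· = if Odd i then [(φ, 0), (φ, 1)] else [(φ, 0)])) rfl))
  rintro _ ⟨l₁, l₂, rfl, hlen, hφ, rfl⟩
  rw [List.length_append, List.forall_mem_append]
  split_ifs with hi
  · obtain ⟨k, rfl⟩ := hi
    exact ⟨by simp only [hlen, List.length_cons, List.length_nil]; omega, hφ, by simp⟩
  · obtain ⟨k, rfl⟩ := Nat.not_odd_iff_even.1 hi
    exact ⟨by simp only [hlen, List.length_cons, List.length_nil]; omega, hφ, by simp⟩

lemma boundary_oddCapChain_succ {τ : Φ × ZMod p → Φ × ZMod p} (hτ : ∀ c, τ (φ, c) = (φ, c + 1))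
    (i : ℕ) : boundary (oddCapChain R p φ (i + 1)) =
      periodicDiff p (mapChain τ) (i + 1) (oddCapChain R p φ i) := by
  rcases i.even_or_odd with hi | hi
  · rw [oddCapChain, oddCapChain, periodicDiff, if_pos hi.add_one, if_pos hi.add_one,
      if_neg (Nat.not_odd_iff_even.2 hi), boundary_cyclicForm_pow, LinearMap.sub_apply,
      Module.End.one_apply, mapChain_cyclicForm_pow hτ,
      Nat.succ_div_of_not_dvd (by have := hi.two_dvd; omega), ← map_sub]
    simp [← cone_simplex, boundary_cone, mapChain_cone, hτ]
  · rw [oddCapChain, oddCapChain, periodicDiff, if_neg (Nat.not_odd_iff_even.2 hi.add_one),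
      if_neg (Nat.not_odd_iff_even.2 hi.add_one), if_pos hi, boundary_cyclicForm_pow,
      sum_pow_mapChain_cyclicForm_pow hτ, Nat.succ_div_of_dvd hi.add_one.two_dvd]
    simp [← cone_simplex, boundary_cone]

end OddCapChain

lemma nonempty_periodicCap_of_odd {p : ℕ} [hp : Fact p.Prime] (hodd : Odd p) (φ : Φ) :
    Nonempty (PeriodicCap p φ) := by
  obtain ⟨h, hh⟩ := hodd
  have hh0 : h ≠ 0 := by
    have := hp.out.two_le
    omega
  exact ⟨{
    chain := oddCapChain (ZMod p) p φ
    top := cyclicForm φ ^ h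
    coeff := h.factorial
    coeff_ne_zero := by
      rw [Ne, ZMod.natCast_eq_zero_iff, hp.out.dvd_factorial]
      omega
    chain_mem := oddCapChain_mem
    boundary_chain_zero := by
      simp [oddCapChain, ← cone_simplex, boundary_cone]
    boundary_chain_succ τ hτ i _ := boundary_oddCapChain_succ hτ i
    periodicDiff_chain τ hτ := by
      have hodd : Odd (p - 2) := ⟨h - 1, by omega⟩
      rw [oddCapChain, periodicDiff, if_neg (by rw [Nat.not_odd_iff_even]; exact ⟨h, by omega⟩),
        if_pos hodd, sum_pow_mapChain_cyclicForm_pow hτ, show (p - 2) / 2 + 1 = h by omega]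
    boundary_top := boundary_cyclicForm_pow h
    mapChain_top _ _ hτ := mapChain_cyclicForm_pow hτ h
    top_mem P y hy := by
      rw [show p - 1 = 2 * h by omega]
      exact cyclicForm_pow_mem h hy
    avoid_contractAll_top y hy := avoid_contractAll_cyclicForm_pow hh0 hh hy }⟩

lemma nonempty_periodicCap (p : ℕ) [hp : Fact p.Prime] (φ : Φ) : Nonempty (PeriodicCap p φ) := by
  rcases hp.out.eq_two_or_odd' with rfl | hodd
  · exact nonempty_periodicCap_two φ
  · exact nonempty_periodicCap_of_odd hodd φ

end PeriodicCap

/-! ### Joins of boundaries of simplices -/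

section FacetCoeff

variable {R V V' : Type*} [CommRing R]

/-- The signed sum of the coefficients of all the orderings of the face with vertex list `A`. -/
noncomputable def facetCoeff (A : List V) : Chain R V →ₗ[R] R := Finsupp.lapply [] ∘ₗ contractAll A

lemma facetCoeff_cons (v : V) (A : List V) (x : Chain R V) :
    facetCoeff (v :: A) x = facetCoeff A (contractAt v x) := rfl

lemma boundary_eq_sum_contractAt [Fintype V] (x : Chain R V) :
    boundary x = ∑ v : V, contractAt v x := by
  have : boundary = ∑ v : V, (contractAt v : Chain R V →ₗ[R] Chain R V) :=
    linearMap_ext_cone (by simp [contractAt]) fun v x ih => by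
      rw [LinearMap.sum_apply] at ih ⊢
      simp [boundary_cone, ih, contractAt_cone]
  simpa using LinearMap.congr_fun this x

lemma facetCoeff_boundary [Fintype V] (A : List V) (x : Chain R V) :
    facetCoeff A (boundary x) = ∑ v : V, facetCoeff (v :: A) x := by
  rw [boundary_eq_sum_contractAt, map_sum]
  rfl

lemma exists_contractAll_eq_smul_of_perm (R : Type*) [CommRing R] {A B : List V} (h : A.Perm B) :
    ∃ s : R, ∀ x : Chain R V, contractAll B x = s • contractAll A x := by
  induction h with
  | nil => exact ⟨1, fun x => (one_smul _ _).symm⟩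
  | cons v _ ih => exact ih.imp fun _ hs x => hs _
  | swap v w A =>
    refine ⟨-1, fun x => ?_⟩
    simp only [contractAll, LinearMap.comp_apply, contractAt]
    rw [contract_anticomm, map_neg, neg_one_smul]
  | trans _ _ ih ih' =>
    obtain ⟨s, hs⟩ := ih
    obtain ⟨t, ht⟩ := ih'
    exact ⟨t * s, fun x => by rw [ht, hs, smul_smul]⟩

lemma exists_facetCoeff_eq_mul_of_perm (R : Type*) [CommRing R] {A B : List V} (h : A.Perm B) :
    ∃ s : R, ∀ x : Chain R V, facetCoeff B x = s * facetCoeff A x := by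
  obtain ⟨s, hs⟩ := exists_contractAll_eq_smul_of_perm R h
  exact ⟨s, fun x => by simp [facetCoeff, hs]⟩

lemma nodup_of_facetCoeff_ne_zero {A : List V} {x : Chain R V} (h : facetCoeff A x ≠ 0) :
    A.Nodup := by
  by_contra hdup
  obtain ⟨v, hv⟩ := List.exists_duplicate_iff_not_nodup.2 hdup
  obtain ⟨B, hB⟩ := (List.duplicate_iff_sublist.1 hv).exists_perm_append
  obtain ⟨s, hs⟩ := exists_facetCoeff_eq_mul_of_perm R hB.symm
  apply h
  rw [hs, List.cons_append, List.cons_append, facetCoeff_cons, facetCoeff_cons, contractAt,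
    contract_contract, map_zero, mul_zero]

lemma mem_complex_of_facetCoeff_ne_zero {K : Set (Set V)} {m : ℕ} {x : Chain R V}
    (hx : x ∈ chainsIn R K m) {A : List V} (h : facetCoeff A x ≠ 0) : {v | v ∈ A} ∈ K := by
  obtain ⟨l, ⟨-, hl⟩, hperm⟩ := (Finsupp.mem_supported R _).1 (contractAll_mem A hx)
    (Finsupp.mem_support_iff.2 h)
  rw [List.append_nil] at hperm
  simpa only [hperm.mem_iff] using hl

lemma mapChain_contractAt {τ : V → V'} (hτ : τ.Injective) (f : V) (x : Chain R V) :
    mapChain τ (contractAt f x) = contractAt (τ f) (mapChain τ x) := by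
  have hcomp : (fun v => if v = f then (1 : R) else 0) = (fun w => if w = τ f then 1 else 0) ∘ τ :=
    funext fun v => by simp [hτ.eq_iff]
  rw [contractAt, contractAt, hcomp, mapChain_contract]

lemma facetCoeff_map {τ : V → V'} (hτ : τ.Injective) (A : List V) (x : Chain R V) :
    facetCoeff (A.map τ) (mapChain τ x) = facetCoeff A x := by
  induction A generalizing x with
  | nil =>
    have hmap : Function.Injective (List.map τ) := List.map_injective_iff.2 hτ
    exact Finsupp.mapDomain_apply hmap x []
  | cons f A ih =>
    rw [List.map_cons, facetCoeff_cons, facetCoeff_cons, ← mapChain_contractAt hτ, ih]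

end FacetCoeff

section BoundaryJoin

variable {R : Type*} [CommRing R] {Φ C : Type*} {S : Finset Φ} {m : ℕ}

/-- The join, over `φ ∈ S`, of the boundaries of the simplices with vertex sets `{φ} × C`. -/
def boundaryJoin (C : Type*) (S : Finset Φ) : Set (Set (Φ × C)) :=
  {σ | (∀ v ∈ σ, v.1 ∈ S) ∧ ∀ φ ∈ S, ¬ ∀ c, (φ, c) ∈ σ}

/-- The board with one piece per cell, whose cells all have different colors and whose columns are
the sets `{φ} × C`. -/
def joinBoard (Φ C : Type*) : Board (Φ × C) (Φ × C) Unit (Φ × C) Φ where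
  cell := id
  value _ := ()
  color := id
  column := Prod.fst
  eq_of_cell_of_value _ _ h _ := h

lemma complex_joinBoard [Fintype C] (S : Finset Φ) :
    (joinBoard Φ C).complex (S ×ˢ Finset.univ) S 0 (S ×ˢ Finset.univ) = boundaryJoin C S := by
  ext σ
  simp only [Board.complex, Board.fullColumns, joinBoard, boundaryJoin,
    Set.mem_ofPred_eq, Finset.mem_product, Finset.mem_univ, and_true, and_self, id_eq,
    Set.image_id, Nat.le_zero, Finset.card_eq_zero, Finset.filter_eq_empty_iff]
  refine and_congr_right fun _ => ⟨fun h φ hφ hc => h.2.2 hφ ?_, fun h => ⟨?_, ?_, ?_⟩⟩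
  · rintro ⟨_, c⟩ - rfl
    exact hc c
  · exact Set.injOn_id σ
  · exact fun _ _ _ _ h => congrArg Prod.fst h
  · exact fun φ hφ hall => h φ hφ fun c => hall (φ, c) hφ rfl

lemma isAcyclicBelow_boundaryJoin (R : Type*) [CommRing R] [Fintype C] (S : Finset Φ) :
    IsAcyclicBelow R (boundaryJoin C S) ((Fintype.card C - 1) * S.card) := by
  have hacyclic := (joinBoard Φ C).isAcyclicBelow_complex (C := S ×ˢ Finset.univ)
    (U := S ×ˢ Finset.univ) R (Nat.zero_le S.card) fun e he =>
    Board.hasRoom_of_color_injective _ Function.injective_id ⟨e, he, rfl⟩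
  rwa [complex_joinBoard, Finset.card_product, Finset.card_univ, add_zero, mul_comm,
    ← Nat.sub_one_mul] at hacyclic

lemma facetCoeff_eq_zero_of_fiber_subset {x : Chain R (Φ × C)}
    (hx : x ∈ chainsIn R (boundaryJoin C S) m) {A : List (Φ × C)} {φ : Φ} (hφ : φ ∈ S)
    (h : ∀ c, (φ, c) ∈ A) : facetCoeff A x = 0 := by
  by_contra hne
  exact (mem_complex_of_facetCoeff_ne_zero hx hne).2 φ hφ h

/-- `A` lists the vertices of the facet of `boundaryJoin C S` which misses the vertices
`(φ, c φ)`. -/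
def IsFacetList (S : Finset Φ) (c : Φ → C) (A : List (Φ × C)) : Prop :=
  A.Nodup ∧ ∀ v, v ∈ A ↔ v.1 ∈ S ∧ v.2 ≠ c v.1

variable {c c' : Φ → C} {A B : List (Φ × C)}

lemma exists_isFacetList [Finite C] (S : Finset Φ) (c : Φ → C) : ∃ A, IsFacetList S c A :=
  have := Fintype.ofFinite C
  ⟨((S ×ˢ Finset.univ).filter fun v => v.2 ≠ c v.1).toList, Finset.nodup_toList _, by simp⟩

lemma IsFacetList.perm (hA : IsFacetList S c A) (hB : IsFacetList S c' B)
    (h : Set.EqOn c c' S) : A.Perm B := by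
  refine (List.perm_ext_iff_of_nodup hA.1 hB.1).2 fun v => ?_
  rw [hA.2, hB.2]
  exact and_congr_right fun hv => by rw [h hv]

variable [Finite Φ] [Finite C]

lemma IsFacetList.facetCoeff_boundary_eq_zero (hA : IsFacetList S c A) {x : Chain R (Φ × C)}
    (hx : x ∈ chainsIn R (boundaryJoin C S) m) : facetCoeff A (boundary x) = 0 := by
  have := Fintype.ofFinite (Φ × C)
  rw [facetCoeff_boundary]
  refine Finset.sum_eq_zero fun v _ => ?_
  by_contra hne
  have hvS : v.1 ∈ S := (mem_complex_of_facetCoeff_ne_zero hx hne).1 v List.mem_cons_self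
  have hv : v.2 = c v.1 := by
    by_contra hvc
    exact (List.nodup_cons.1 (nodup_of_facetCoeff_ne_zero hne)).1 ((hA.2 v).2 ⟨hvS, hvc⟩)
  refine hne (facetCoeff_eq_zero_of_fiber_subset hx hvS fun a => ?_)
  rw [List.mem_cons, hA.2, Prod.ext_iff]
  grind

/-- Boundaries of the faces which miss two vertices of the fiber over `φ` and one vertex of every
other fiber relate the two facets containing such a face. -/
lemma IsFacetList.exists_facetCoeff_eq_mul_update (hA : IsFacetList S c A) {φ : Φ} (hφ : φ ∈ S)
    {a : C} (ha : a ≠ c φ) (hB : IsFacetList S (Function.update c φ a) B) :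
    ∃ s : R, ∀ m, ∀ x ∈ chainsIn R (boundaryJoin C S) m, boundary x = 0 →
      facetCoeff B x = s * facetCoeff A x := by
  have := Fintype.ofFinite (Φ × C)
  set G := A.erase (φ, a) with hG
  have mem_G (v : Φ × C) : v ∈ G ↔ v ≠ (φ, a) ∧ v.1 ∈ S ∧ v.2 ≠ c v.1 := by
    rw [hG, hA.1.mem_erase_iff, hA.2]
  have hpermA : A.Perm ((φ, a) :: G) := List.perm_cons_erase ((hA.2 _).2 ⟨hφ, ha⟩)
  have hpermB : ((φ, c φ) :: G).Perm B := by
    refine (List.perm_ext_iff_of_nodup (List.nodup_cons.2 ⟨?_, hA.1.erase _⟩) hB.1).2 fun v => ?_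
    · exact fun h => ((mem_G _).1 h).2.2 rfl
    · rw [List.mem_cons, mem_G, hB.2, Prod.ext_iff, Ne, Prod.ext_iff]
      by_cases hv : v.1 = φ
      · grind [Function.update_self]
      · grind [Function.update_of_ne]
  obtain ⟨s, hs⟩ := exists_facetCoeff_eq_mul_of_perm R hpermA
  obtain ⟨t, ht⟩ := exists_facetCoeff_eq_mul_of_perm R hpermB
  refine ⟨t * -s, fun m x hx hbd => ?_⟩
  have hsum : ∑ v, facetCoeff (v :: G) x =
      facetCoeff ((φ, a) :: G) x + facetCoeff ((φ, c φ) :: G) x := by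
    refine Fintype.sum_eq_add (φ, a) (φ, c φ) (by simp [ha]) fun v hv => ?_
    by_contra hne
    have hvS : v.1 ∈ S := (mem_complex_of_facetCoeff_ne_zero hx hne).1 v List.mem_cons_self
    have hvG : v ∉ G := (List.nodup_cons.1 (nodup_of_facetCoeff_ne_zero hne)).1
    refine hne (facetCoeff_eq_zero_of_fiber_subset hx hvS fun b => ?_)
    simp only [List.mem_cons, mem_G, ne_eq, Prod.ext_iff] at hv hvG ⊢
    grind
  rw [← facetCoeff_boundary, hbd, map_zero, hs] at hsum
  rw [ht, eq_neg_of_add_eq_zero_right hsum.symm, mul_neg, mul_neg, neg_mul, mul_assoc]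

lemma IsFacetList.exists_facetCoeff_eq_mul (R : Type*) [CommRing R] (hA : IsFacetList S c A)
    (hB : IsFacetList S c' B) :
    ∃ s : R, ∀ m, ∀ x ∈ chainsIn R (boundaryJoin C S) m, boundary x = 0 →
      facetCoeff B x = s * facetCoeff A x := by
  suffices H : ∀ (T : Finset Φ) (c : Φ → C) (A : List (Φ × C)), IsFacetList S c A →
      (∀ φ ∈ S, φ ∉ T → c φ = c' φ) → ∃ s : R, ∀ m, ∀ x ∈ chainsIn R (boundaryJoin C S) m,
        boundary x = 0 → facetCoeff B x = s * facetCoeff A x from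
    H S c A hA fun φ hφ hφ' => absurd hφ hφ'
  intro T
  induction T using Finset.induction_on with
  | empty =>
    intro c A hA h
    obtain ⟨s, hs⟩ :=
      exists_facetCoeff_eq_mul_of_perm R (hA.perm hB fun φ hφ => h φ hφ (Finset.notMem_empty φ))
    exact ⟨s, fun m x _ _ => hs x⟩
  | insert φ T _ ih =>
    intro c A hA h
    by_cases hφ : φ ∈ S ∧ c' φ ≠ c φ
    · obtain ⟨D, hD⟩ := exists_isFacetList S (Function.update c φ (c' φ))
      obtain ⟨s, hs⟩ := hA.exists_facetCoeff_eq_mul_update (R := R) hφ.1 hφ.2 hD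
      obtain ⟨t, ht⟩ := ih _ D hD fun ψ hψ hψT => by grind [Function.update_apply]
      exact ⟨t * s, fun m x hx hbd => by rw [ht m x hx hbd, hs m x hx hbd, mul_assoc]⟩
    · exact ih c A hA fun ψ hψ hψT => by grind

end BoundaryJoin

/-! ### Graded actions on labels -/

/-- Commuting permutations of order `p` of a set of labels, one for each generator `k : κ`. The
generator `k` preserves the levels of labels and fixes the labels of level at most `k`. -/
structure LabelAction (p : ℕ) (Φ κ : Type*) [LE κ] where
  /-- The level of a label. -/
  level : Φ → κ
  /-- The action of a generator. -/
  act : κ → Equiv.Perm Φ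
  act_eq_self : ∀ k φ, level φ ≤ k → act k φ = φ
  level_act : ∀ k φ, level (act k φ) = level φ
  comm : ∀ k l φ, act k (act l φ) = act l (act k φ)
  act_pow : ∀ k, act k ^ p = 1

namespace LabelAction

variable {p : ℕ} {Φ κ R : Type*} [LE κ] [CommRing R] (A : LabelAction p Φ κ) {S : Finset Φ}
  {m n : ℕ} {gs : List κ}

lemma level_act_symm (k : κ) (φ : Φ) : A.level ((A.act k).symm φ) = A.level φ := by
  rw [← A.level_act k, Equiv.apply_symm_apply]

/-- The action on pairs `(φ, c)`: the generator `k` acts on labels, and moreover rotates the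
coordinate `c` over the labels of level `k`. -/
noncomputable def shift (k : κ) : Equiv.Perm (Φ × ZMod p) where
  toFun v := (A.act k v.1, v.2 + if A.level v.1 = k then 1 else 0)
  invFun v := ((A.act k).symm v.1, v.2 - if A.level v.1 = k then 1 else 0)
  left_inv v := by simp [A.level_act]
  right_inv v := by simp [A.level_act_symm]

lemma shift_apply (k : κ) (v : Φ × ZMod p) :
    A.shift k v = (A.act k v.1, v.2 + if A.level v.1 = k then 1 else 0) := rfl

lemma shift_comm (k l : κ) (v : Φ × ZMod p) :
    A.shift k (A.shift l v) = A.shift l (A.shift k v) := by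
  simp only [shift_apply, A.level_act, A.comm k l]
  rw [add_right_comm]

lemma shift_pow_apply (k : κ) (n : ℕ) (v : Φ × ZMod p) :
    (A.shift k ^ n) v = ((A.act k ^ n) v.1, v.2 + if A.level v.1 = k then (n : ZMod p) else 0) := by
  induction n generalizing v with
  | zero => simp
  | succ n ih =>
    rw [pow_succ, Equiv.Perm.mul_apply, ih, shift_apply, A.level_act, pow_succ,
      Equiv.Perm.mul_apply]
    split_ifs <;> simp [add_comm, add_left_comm]

lemma shift_pow_eq_one (k : κ) : A.shift k ^ p = 1 :=
  Equiv.ext fun v => by simp [A.shift_pow_apply, A.act_pow]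

/-- The action on chains. -/
noncomputable def onChains (k : κ) : Module.End R (Chain R (Φ × ZMod p)) := mapChain (A.shift k)

lemma isCyclicAction :
    IsCyclicAction p (boundary : Module.End R (Chain R (Φ × ZMod p))) A.onChains where
  pow_eq_one k := by
    rw [onChains, mapChain_pow, ← Equiv.Perm.coe_pow, A.shift_pow_eq_one]
    exact mapChain_id
  comm k l x := by
    rw [onChains, onChains, mapChain_mapChain, mapChain_mapChain]
    congr 2
    exact funext fun v => A.shift_comm k l v
  comm_differential k x := (mapChain_boundary _ x).symm

lemma onChains_mem {k : κ} (hS : ∀ φ, A.act k φ ∈ S ↔ φ ∈ S) {x : Chain R (Φ × ZMod p)}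
    (hx : x ∈ chainsIn R (boundaryJoin (ZMod p) S) m) :
    A.onChains k x ∈ chainsIn R (boundaryJoin (ZMod p) S) m := by
  have hjoin : ∀ σ ∈ boundaryJoin (ZMod p) S, A.shift k '' σ ∈ boundaryJoin (ZMod p) S := by
    refine fun σ hσ => ⟨?_, fun φ hφ hall => ?_⟩
    · rintro _ ⟨v, hv, rfl⟩
      exact (hS _).2 (hσ.1 v hv)
    · obtain ⟨ψ, rfl⟩ := (A.act k).surjective φ
      refine hσ.2 ψ ((hS ψ).1 hφ) fun c => ?_
      rw [← (A.shift k).injective.mem_set_image]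
      exact hall _
  exact mapChain_mem_chainsIn hjoin hx

lemma isFacetList_map_shift (k : κ) {c : Φ → ZMod p} {F : List (Φ × ZMod p)} [Fintype Φ]
    (hF : IsFacetList Finset.univ c F) :
    IsFacetList Finset.univ (fun φ => c ((A.act k).symm φ) + if A.level φ = k then 1 else 0)
      (F.map (A.shift k)) := by
  refine ⟨hF.1.map (A.shift k).injective, fun v => ?_⟩
  obtain ⟨w, rfl⟩ := (A.shift k).surjective v
  rw [List.mem_map_of_injective (A.shift k).injective, hF.2, shift_apply]
  simp [A.level_act]

variable [Fintype Φ] {F : List (Φ × ZMod p)} {c : Φ → ZMod p}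

/-- The cycles of length `m` in the join of the boundaries of all the simplices. -/
noncomputable def joinCycles (p : ℕ) (Φ : Type*) [Fintype Φ] (m : ℕ) :
    Submodule (ZMod p) (Chain (ZMod p) (Φ × ZMod p)) :=
  chainsIn (ZMod p) (boundaryJoin (ZMod p) Finset.univ) m ⊓ LinearMap.ker boundary

lemma onChains_mem_joinCycles (k : κ) {z : Chain (ZMod p) (Φ × ZMod p)}
    (hz : z ∈ joinCycles p Φ m) : A.onChains k z ∈ joinCycles p Φ m := by
  refine ⟨A.onChains_mem (by simp) hz.1, LinearMap.mem_ker.2 ?_⟩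
  rw [A.isCyclicAction.comm_differential, LinearMap.mem_ker.1 hz.2, map_zero]

variable [Fact p.Prime]

/-- The sign by which a generator acts on facet coefficients of cycles is a `p`-th root of unity in
`ZMod p`, hence trivial. -/
lemma facetCoeff_onChains (hF : IsFacetList Finset.univ c F) (k : κ)
    {z : Chain (ZMod p) (Φ × ZMod p)} (hz : z ∈ joinCycles p Φ m) :
    facetCoeff F (A.onChains k z) = facetCoeff F z := by
  obtain ⟨s, hs⟩ := (A.isFacetList_map_shift k hF).exists_facetCoeff_eq_mul (ZMod p) hF
  have hstep {z : Chain (ZMod p) (Φ × ZMod p)} (hz : z ∈ joinCycles p Φ m) :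
      facetCoeff F (A.onChains k z) = s * facetCoeff F z := by
    have hTz := A.onChains_mem_joinCycles k hz
    rw [hs m _ hTz.1 hTz.2, onChains, facetCoeff_map (A.shift k).injective]
  have hpow (n : ℕ) : (A.onChains k ^ n) z ∈ joinCycles p Φ m ∧
      facetCoeff F ((A.onChains k ^ n) z) = s ^ n * facetCoeff F z := by
    induction n with
    | zero => simpa using hz
    | succ n ih =>
      rw [pow_succ', Module.End.mul_apply]
      exact ⟨A.onChains_mem_joinCycles k ih.1, by rw [hstep ih.1, ih.2, pow_succ', mul_assoc]⟩
  have hp := (hpow p).2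
  rwa [A.isCyclicAction.pow_eq_one, Module.End.one_apply, ZMod.pow_card, ← hstep hz,
    eq_comm] at hp

lemma facetCoeff_periodicDiff (hF : IsFacetList Finset.univ c F) (k : κ)
    {z : Chain (ZMod p) (Φ × ZMod p)} (hz : z ∈ joinCycles p Φ m) (i : ℕ) :
    facetCoeff F (periodicDiff p (A.onChains k) i z) = 0 := by
  rw [map_periodicDiff_of_mem (S' := 1) (fun _ => A.onChains_mem_joinCycles k)
    (fun _ hx => A.facetCoeff_onChains hF k hx) i hz]
  exact periodicDiff_of_fixed (R := ZMod p) rfl i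

/-- Systems of chains in `boundaryJoin (ZMod p) S` which lift the empty simplex. -/
abbrev IsJoinSystem (gs : List κ) (S : Finset Φ) (n : ℕ)
    (x : List ℕ → Chain (ZMod p) (Φ × ZMod p)) : Prop :=
  IsSystem p boundary A.onChains gs (chainsIn (ZMod p) (boundaryJoin (ZMod p) S)) 0 n
    (concentrated (simplex [])) x

theorem facetCoeff_obstruction_eq (hF : IsFacetList Finset.univ c F)
    {x x' : List ℕ → Chain (ZMod p) (Φ × ZMod p)}
    (hx : A.IsJoinSystem gs Finset.univ ((p - 1) * Fintype.card Φ) x)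
    (hx' : A.IsJoinSystem gs Finset.univ ((p - 1) * Fintype.card Φ) x') {I : List ℕ}
    (hl : I.length = gs.length) (hI : I.sum = (p - 1) * Fintype.card Φ) :
    facetCoeff F (totalDiff p A.onChains gs x I) =
      facetCoeff F (totalDiff p A.onChains gs x' I) := by
  refine hx.obstruction_eq hx' A.isCyclicAction
    (fun k _ m x hx => A.onChains_mem (by simp) hx) ?_ _
    (fun z hz hbd k _ i => A.facetCoeff_periodicDiff hF k ⟨hz, hbd⟩ i) hl hI
  have := isAcyclicBelow_boundaryJoin (C := ZMod p) (ZMod p) (Finset.univ : Finset Φ)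
  rwa [ZMod.card, Finset.card_univ] at this

end LabelAction

/-! ### A system with nonzero obstruction -/

lemma periodicDiff_add_sub_one {p : ℕ} [Fact p.Prime] {M : Type*} [AddCommGroup M]
    [Module (ZMod p) M] (S : Module.End (ZMod p) M) (i : ℕ) :
    periodicDiff p S (i + (p - 1)) = periodicDiff p S i := by
  rcases (Fact.out : p.Prime).eq_two_or_odd' with rfl | hp
  · have hdiff : ∑ t ∈ Finset.range 2, S ^ t = S - 1 := by
      ext x
      simp [Finset.sum_range_succ, ZModModule.sub_eq_add, add_comm]
    simp only [periodicDiff, hdiff, ite_self]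
  · exact periodicDiff_add_even S (Nat.Odd.sub_odd hp odd_one) i

lemma simplex_nil_mem_boundaryJoin {R Φ C : Type*} [CommRing R] [Nonempty C] (S : Finset Φ) :
    (simplex [] : Chain R (Φ × C)) ∈ chainsIn R (boundaryJoin C S) 0 :=
  simplex_nil_mem_chainsIn ⟨by simp, by simp⟩

namespace LabelAction

variable {p : ℕ} {Φ κ : Type*} [LinearOrder κ] (A : LabelAction p Φ κ)

lemma shift_level (φ : Φ) (c : ZMod p) : A.shift (A.level φ) (φ, c) = (φ, c + 1) := by
  simp [shift_apply, A.act_eq_self _ _ le_rfl]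

lemma shift_of_level_lt {l : κ} {φ : Φ} (hl : A.level φ < l) (c : ZMod p) :
    A.shift l (φ, c) = (φ, c) := by
  simp [shift_apply, A.act_eq_self _ _ hl.le, hl.ne]

lemma act_mem_erase_iff {l : κ} {φ : Φ} {S : Finset Φ} (hl : A.level φ ≤ l)
    (hS : ∀ ψ, A.act l ψ ∈ S ↔ ψ ∈ S) (ψ : Φ) : A.act l ψ ∈ S.erase φ ↔ ψ ∈ S.erase φ := by
  rw [mem_erase, mem_erase, hS, ← A.act_eq_self l φ hl, (A.act l).injective.ne_iff,
    A.act_eq_self l φ hl]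

lemma onChains_simplex_nil {R : Type*} [CommRing R] (k : κ) :
    A.onChains k (simplex [] : Chain R (Φ × ZMod p)) = simplex [] := by
  simp [onChains]

end LabelAction

namespace PeriodicCap

variable {p : ℕ} {Φ κ : Type*} {φ : Φ} (cap : PeriodicCap p φ)
  (β : List ℕ → Chain (ZMod p) (Φ × ZMod p))

/-- The family which is `cap.chain` in the first `p - 1` degrees of the first generator, and `β`,
multiplied by the obstruction of the cap, from degree `p - 1` on. -/
noncomputable def extend : List ℕ → Chain (ZMod p) (Φ × ZMod p)
  | [] => 0
  | i :: J => if i < p - 1 then concentrated (cap.chain i) J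
      else cap.top (β ((i - (p - 1)) :: J))

lemma extend_of_lt {i : ℕ} (hi : i < p - 1) (J : List ℕ) :
    cap.extend β (i :: J) = concentrated (cap.chain i) J := if_pos hi

lemma extend_add (j : ℕ) (J : List ℕ) :
    cap.extend β ((j + (p - 1)) :: J) = cap.top (β (j :: J)) := by
  rw [extend, if_neg (by omega), Nat.add_sub_cancel]

variable [LinearOrder κ] (A : LabelAction p Φ κ) {l : κ} {gs : List κ}

lemma onChains_chain (hl : A.level φ < l) (i : ℕ) :
    A.onChains l (cap.chain i) = cap.chain i := by
  refine map_eq_of_mem_supportedOn (A.onChains l) LinearMap.id ?_ (cap.chain_mem i)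
  rintro L ⟨-, hL⟩
  have hfix : L.map (A.shift l) = L.map id := List.map_congr_left fun v hv => by
    obtain ⟨_, c⟩ := v
    obtain rfl := hL _ hv
    exact A.shift_of_level_lt hl c
  rw [LabelAction.onChains, mapChain_simplex, hfix, List.map_id, LinearMap.id_apply]

lemma onChains_top (hl : A.level φ ≤ l) (y : Chain (ZMod p) (Φ × ZMod p)) :
    A.onChains l (cap.top y) = cap.top (A.onChains l y) := by
  rcases hl.eq_or_lt with rfl | hl
  · exact cap.mapChain_top _ 1 (A.shift_level φ) y
  · exact cap.mapChain_top _ 0 (fun c => by rw [A.shift_of_level_lt hl, add_zero]) y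

variable [Fact p.Prime]

lemma boundary_extend_of_lt (hgs : ∀ l ∈ gs, A.level φ < l) {i : ℕ} (hi : i < p - 1)
    (J : List ℕ) : boundary (cap.extend β (i :: J)) = concentrated (simplex []) (i :: J) +
      totalDiff p A.onChains (A.level φ :: gs) (cap.extend β) (i :: J) := by
  have htail : totalDiff p A.onChains gs (fun J' => cap.extend β (i :: J')) J = 0 := by
    rw [totalDiff_congr fun J' _ => cap.extend_of_lt β hi J']
    exact totalDiff_concentrated (fun l hl => cap.onChains_chain A (hgs l hl) i) J
  rw [totalDiff_cons_cons, htail, smul_zero, add_zero, cap.extend_of_lt β hi, concentrated_cons]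
  cases i with
  | zero =>
    rw [if_pos rfl, if_pos rfl, add_zero, concentrated, apply_ite boundary,
      cap.boundary_chain_zero, map_zero, concentrated]
  | succ i =>
    rw [if_neg i.succ_ne_zero, if_neg i.succ_ne_zero, zero_add, Nat.add_sub_cancel,
      cap.extend_of_lt β (by omega), concentrated, concentrated, apply_ite boundary,
      cap.boundary_chain_succ _ (A.shift_level φ) i hi, map_zero, apply_ite (periodicDiff _ _ _),
      map_zero, LabelAction.onChains]

lemma rhs_extend_add (hgs : ∀ l ∈ gs, A.level φ < l) (j : ℕ) (J : List ℕ) :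
    concentrated (simplex []) ((j + (p - 1)) :: J) +
        totalDiff p A.onChains (A.level φ :: gs) (cap.extend β) ((j + (p - 1)) :: J) =
      cap.top (concentrated (simplex []) (j :: J) +
        totalDiff p A.onChains (A.level φ :: gs) β (j :: J)) := by
  have hp := (Fact.out : p.Prime).two_le
  have hsign : (-1 : ZMod p) ^ (p - 1) = 1 :=
    ZMod.pow_card_sub_one_eq_one (neg_ne_zero.2 one_ne_zero)
  have htail : totalDiff p A.onChains gs (fun J' => cap.extend β ((j + (p - 1)) :: J')) J =
      cap.top (totalDiff p A.onChains gs (fun J' => β (j :: J')) J) := by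
    simp only [extend_add]
    exact (map_totalDiff _ fun _ _ l hl i => map_periodicDiff
      (fun y => (cap.onChains_top A (hgs l hl).le y).symm) i _).symm
  have hhead : periodicDiff p (A.onChains (A.level φ)) (j + (p - 1))
        (cap.extend β ((j + (p - 1) - 1) :: J)) =
      cap.top (concentrated (simplex []) (j :: J) + if j = 0 then 0 else
        periodicDiff p (A.onChains (A.level φ)) j (β ((j - 1) :: J))) := by
    cases j with
    | zero =>
      rw [concentrated_cons, if_pos rfl, if_pos rfl, add_zero, zero_add,
        cap.extend_of_lt β (by omega), concentrated, concentrated, apply_ite (periodicDiff _ _ _),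
        apply_ite cap.top, map_zero, map_zero, LabelAction.onChains, Nat.sub_sub,
        cap.periodicDiff_chain _ (A.shift_level φ)]
    | succ j =>
      rw [concentrated_cons, if_neg j.succ_ne_zero, if_neg j.succ_ne_zero, zero_add,
        periodicDiff_add_sub_one, show j + 1 + (p - 1) - 1 = j + (p - 1) by omega, extend_add,
        Nat.add_sub_cancel]
      exact (map_periodicDiff (fun y => (cap.onChains_top A le_rfl y).symm) _ _).symm
  rw [totalDiff_cons_cons, totalDiff_cons_cons, concentrated_cons, if_neg (by omega), zero_add,
    if_neg (by omega), hhead, htail, pow_add, hsign, mul_one, ← map_smul, ← map_add, add_assoc]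

lemma not_fiber_subset_of_length_lt {L : List (Φ × ZMod p)} (hL : L.length < p) :
    ¬ ∀ c, (φ, c) ∈ L := fun h => by
  have hinj : (fun c : ZMod p => (φ, c)).Injective := fun _ _ => congrArg Prod.snd
  have hsub : Finset.univ.image (fun c : ZMod p => (φ, c)) ⊆ L.toFinset := by
    simpa [Finset.subset_iff] using h
  have hcard := (card_le_card hsub).trans L.toFinset_card_le
  rw [Finset.card_image_of_injective _ hinj, Finset.card_univ, ZMod.card] at hcard
  omega

variable {S : Finset Φ} (hφ : φ ∈ S)

include hφ

lemma chain_mem_boundaryJoin {i : ℕ} (hi : i < p - 1) :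
    cap.chain i ∈ chainsIn (ZMod p) (boundaryJoin (ZMod p) S) (i + 1) := by
  refine supportedOn_mono ?_ (cap.chain_mem i)
  rintro L ⟨hlen, hL⟩
  exact ⟨hlen, fun v hv => hL v hv ▸ hφ, fun _ _ => not_fiber_subset_of_length_lt (by omega)⟩

lemma top_mem_boundaryJoin {m : ℕ} {y : Chain (ZMod p) (Φ × ZMod p)}
    (hy : y ∈ chainsIn (ZMod p) (boundaryJoin (ZMod p) (S.erase φ)) m) :
    cap.top y ∈ chainsIn (ZMod p) (boundaryJoin (ZMod p) S) (m + (p - 1)) := by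
  have hp := (Fact.out : p.Prime).two_le
  refine supportedOn_mono ?_ (cap.top_mem _ y hy)
  rintro _ ⟨L, L', rfl, hlen, hL, hlen', hL', hfiber⟩
  refine ⟨by rw [List.length_append, hlen, hlen', add_comm], fun v hv => ?_, fun ψ hψ hall => ?_⟩
  · rcases List.mem_append.1 hv with hv | hv
    · exact hL v hv ▸ hφ
    · exact Finset.mem_of_mem_erase (hL' v hv)
  · by_cases hψφ : ψ = φ
    · refine not_fiber_subset_of_length_lt (φ := ψ) (L := L) (by omega) fun c => ?_
      exact (List.mem_append.1 (hall c)).resolve_right fun hc =>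
        Finset.ne_of_mem_erase (hL' _ hc) hψφ
    · refine hfiber ψ (mem_erase.2 ⟨hψφ, hψ⟩) fun c => ?_
      exact (List.mem_append.1 (hall c)).resolve_left fun hc => hψφ (hL _ hc)

lemma isFacetList_fiberFacet_append {F : List (Φ × ZMod p)}
    (hF : IsFacetList (S.erase φ) (fun _ => -1) F) :
    IsFacetList S (fun _ => -1) (fiberFacet p φ ++ F) := by
  refine ⟨nodup_fiberFacet.append hF.1 fun v hv hvF => ?_, fun v => ?_⟩
  · exact Finset.ne_of_mem_erase ((hF.2 v).1 hvF).1 (mem_fiberFacet.1 hv).1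
  · rw [List.mem_append, mem_fiberFacet, hF.2, mem_erase, ← or_and_right]
    refine and_congr_left fun _ => ?_
    by_cases hv : v.1 = φ <;> simp [hv, hφ]

lemma isJoinSystem_extend (hgs : ∀ l ∈ gs, A.level φ < l)
    (hβ : A.IsJoinSystem (A.level φ :: gs) (S.erase φ) ((p - 1) * (S.erase φ).card) β) :
    A.IsJoinSystem (A.level φ :: gs) S ((p - 1) * S.card) (cap.extend β) := by
  intro I hl hI
  obtain ⟨i, J, rfl⟩ := List.exists_cons_of_length_eq_add_one hl
  rw [← Finset.card_erase_add_one hφ, Nat.mul_succ, List.sum_cons] at hI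
  by_cases hi : i < p - 1
  · refine ⟨?_, cap.boundary_extend_of_lt β A hgs hi J⟩
    rw [cap.extend_of_lt β hi, concentrated]
    split_ifs with hJ
    · rw [List.sum_cons, hJ]
      exact cap.chain_mem_boundaryJoin hφ hi
    · exact Submodule.zero_mem _
  · obtain ⟨j, rfl⟩ := Nat.exists_eq_add_of_le' (not_lt.1 hi)
    obtain ⟨hmem, hbd⟩ := hβ (j :: J) hl (by rw [List.sum_cons]; omega)
    rw [cap.rhs_extend_add β A hgs, cap.extend_add, cap.boundary_top, hbd]
    refine ⟨?_, rfl⟩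
    have htop := cap.top_mem_boundaryJoin hφ hmem
    rwa [List.sum_cons, show j + J.sum + 0 + 1 + (p - 1) = j + (p - 1) + J.sum + 0 + 1 by omega,
      ← List.sum_cons] at htop

omit hφ

lemma facetCoeff_fiberFacet_append_top {F : List (Φ × ZMod p)} (hF : ∀ v ∈ F, v.1 ≠ φ)
    {y : Chain (ZMod p) (Φ × ZMod p)} (hy : y ∈ supportedOn (ZMod p) fun L => ∀ v ∈ L, v.1 ≠ φ) :
    facetCoeff (fiberFacet p φ ++ F) (cap.top y) = cap.coeff * facetCoeff F y := by
  change contractAll (fiberFacet p φ ++ F) (cap.top y) [] = cap.coeff * contractAll F y []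
  rw [contractAll_append, ← avoid_apply_nil (B := {v | v.1 = φ}),
    avoid_contractAll (B := {v : Φ × ZMod p | v.1 = φ}) hF,
    cap.avoid_contractAll_top y hy, map_smul, Finsupp.smul_apply, smul_eq_mul]

end PeriodicCap

namespace LabelAction

variable {p : ℕ} {Φ κ : Type*} [LinearOrder κ] (A : LabelAction p Φ κ) {gs : List κ} {k : κ}
  {S : Finset Φ} {φ : Φ} [Fact p.Prime]

/-- Some system in `boundaryJoin (ZMod p) S` cannot be extended to the degree of the facets, since
its obstruction has a nonzero facet coefficient. -/
def HasNonzeroObstruction (gs : List κ) (S : Finset Φ) : Prop :=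
  ∃ x I F, A.IsJoinSystem gs S ((p - 1) * S.card) x ∧ I.length = gs.length ∧
    I.sum = (p - 1) * S.card ∧ IsFacetList S (fun _ => -1) F ∧
    facetCoeff F (concentrated (simplex []) I + totalDiff p A.onChains gs x I) ≠ 0

lemma isTotalCycle_simplex_nil (gs : List κ) (S : Finset Φ) (n : ℕ) :
    IsTotalCycle p boundary A.onChains gs (chainsIn (ZMod p) (boundaryJoin (ZMod p) S)) 0 n
      (concentrated (simplex [])) :=
  isTotalCycle_concentrated (fun l _ => A.onChains_simplex_nil l) (simplex_nil_mem_boundaryJoin S)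
    boundary_simplex_nil

lemma HasNonzeroObstruction.cons (h : A.HasNonzeroObstruction gs S) (k : κ)
    (hS : ∀ l ∈ k :: gs, ∀ ψ, A.act l ψ ∈ S ↔ ψ ∈ S) : A.HasNonzeroObstruction (k :: gs) S := by
  obtain ⟨β, I, F, hβ, hl, hI, hF, hne⟩ := h
  have hexact := isAcyclicBelow_boundaryJoin (C := ZMod p) (ZMod p) S
  rw [ZMod.card] at hexact
  have hlower (I' I : List ℕ) (hI : IsPredecessor I' I) (h0 : ∃ J, I = 0 :: J) :
      ∃ J, I' = 0 :: J := by
    obtain ⟨J, rfl⟩ := h0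
    cases hI.1 with
    | cons h0 _ => exact ⟨_, by rw [Nat.le_zero.1 h0]⟩
  obtain ⟨x, hxβ, hx⟩ := exists_isSystem_extending (e := 0)
    (W := chainsIn (ZMod p) (boundaryJoin (ZMod p) S)) A.isCyclicAction
    (fun l hl m y hy => A.onChains_mem (hS l hl) hy) hexact (A.isTotalCycle_simplex_nil _ S _)
    {I | ∃ J, I = 0 :: J} hlower (fun I => β I.tail) <| by
      rintro _ ⟨J, rfl⟩ hl hJ
      rw [totalDiff_zero_cons, concentrated_cons, if_pos rfl, List.sum_cons, zero_add]
      exact hβ J (by simpa using hl) (by simpa using hJ)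
  refine ⟨x, 0 :: I, F, hx, by simp [hl], by simp [hI], hF, ?_⟩
  rwa [totalDiff_zero_cons, concentrated_cons, if_pos rfl,
    totalDiff_congr fun J _ => hxβ ⟨J, rfl⟩]

lemma HasNonzeroObstruction.of_erase (hφ : φ ∈ S) (hgs : ∀ l ∈ gs, A.level φ < l)
    (hS : ∀ l ∈ A.level φ :: gs, ∀ ψ, A.act l ψ ∈ S.erase φ ↔ ψ ∈ S.erase φ)
    (h : A.HasNonzeroObstruction (A.level φ :: gs) (S.erase φ)) :
    A.HasNonzeroObstruction (A.level φ :: gs) S := by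
  obtain ⟨β, I, F, hβ, hl, hI, hF, hne⟩ := h
  obtain ⟨cap⟩ := nonempty_periodicCap p φ
  obtain ⟨j, J, rfl⟩ := List.exists_cons_of_length_eq_add_one hl
  refine ⟨cap.extend β, (j + (p - 1)) :: J, fiberFacet p φ ++ F,
    cap.isJoinSystem_extend β A hφ hgs hβ, hl, ?_,
    PeriodicCap.isFacetList_fiberFacet_append hφ hF, ?_⟩
  · rw [← Finset.card_erase_add_one hφ, Nat.mul_succ, ← hI, List.sum_cons, List.sum_cons,
      add_right_comm]
  · have hmem := hβ.rhs_mem (fun l hl m y hy => A.onChains_mem (hS l hl) hy) hl hI.le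
      (A.isTotalCycle_simplex_nil _ _ _ _ hl (Nat.lt_succ_self _)).1
    rw [cap.rhs_extend_add β A hgs, cap.facetCoeff_fiberFacet_append_top
      (fun v hv => Finset.ne_of_mem_erase ((hF.2 v).1 hv).1)
      (supportedOn_mono (fun L hL v hv => Finset.ne_of_mem_erase (hL.2.1 v hv)) hmem)]
    exact mul_ne_zero cap.coeff_ne_zero hne

theorem hasNonzeroObstruction (hgs : gs.Pairwise (· < ·)) (hlevel : ∀ φ ∈ S, A.level φ ∈ gs)
    (hS : ∀ l ∈ gs, ∀ φ, A.act l φ ∈ S ↔ φ ∈ S) : A.HasNonzeroObstruction gs S := by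
  induction gs generalizing S with
  | nil =>
    obtain rfl : S = ∅ := Finset.eq_empty_of_forall_notMem fun φ hφ => by simpa using hlevel φ hφ
    refine ⟨0, [], [], fun I _ hI => by simp at hI, rfl, by simp, ⟨List.nodup_nil, by simp⟩, ?_⟩
    simp [totalDiff_nil_right, concentrated, facetCoeff, contractAll, simplex]
  | cons k gs ih =>
    rw [List.pairwise_cons] at hgs
    induction hn : (S.filter fun φ => A.level φ = k).card generalizing S with
    | zero =>
      rw [Finset.card_eq_zero, Finset.filter_eq_empty_iff] at hn
      exact (ih hgs.2 (fun φ hφ => (List.mem_cons.1 (hlevel φ hφ)).resolve_left (hn hφ))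
        fun l hl => hS l (List.mem_cons_of_mem _ hl)).cons A k hS
    | succ n ihn =>
      obtain ⟨φ, hφ⟩ := Finset.card_pos.1 (n.succ_pos.trans_eq hn.symm)
      obtain ⟨hφS, rfl⟩ := mem_filter.1 hφ
      have hle (l) (hl : l ∈ A.level φ :: gs) : A.level φ ≤ l := by
        rcases List.mem_cons.1 hl with rfl | hl
        exacts [le_rfl, (hgs.1 l hl).le]
      have hS' (l) (hl : l ∈ A.level φ :: gs) := A.act_mem_erase_iff (hle l hl) (hS l hl)
      refine .of_erase A hφS hgs.1 hS' (ihn ?_ hS' ?_)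
      · exact fun ψ hψ => hlevel ψ (Finset.mem_of_mem_erase hψ)
      · rw [Finset.filter_erase, Finset.card_erase_of_mem hφ, hn, Nat.add_sub_cancel]

/-- A system cannot reach the degree of the facets: its obstruction would be a boundary. -/
theorem not_isJoinSystem [Fintype Φ] (hgs : gs.Pairwise (· < ·)) (hlevel : ∀ φ, A.level φ ∈ gs)
    (x : List ℕ → Chain (ZMod p) (Φ × ZMod p)) :
    ¬ A.IsJoinSystem gs Finset.univ ((p - 1) * Fintype.card Φ + 1) x := by
  intro hx
  obtain ⟨x', I, F, hx', hl, hI, hF, hne⟩ := A.hasNonzeroObstruction (S := Finset.univ) hgs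
    (fun φ _ => hlevel φ) (by simp)
  rw [Finset.card_univ] at hx' hI
  obtain ⟨hmem, hbd⟩ := hx I hl (by omega)
  rw [map_add, ← A.facetCoeff_obstruction_eq hF (fun I hl hI => hx I hl (by omega)) hx' hl hI,
    ← map_add, ← hbd, hF.facetCoeff_boundary_eq_zero hmem] at hne
  exact hne rfl

end LabelAction

/-! ### Barycentric subdivision -/

section Subdivision

variable {R : Type*} [CommRing R]

section Ordered

variable {V N : Type*} [AddCommGroup N] [Module R N]

lemma simplex_mem_chainsIn_univ (l : List V) :
    (simplex l : Chain R V) ∈ chainsIn R Set.univ l.length :=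
  simplex_mem_supportedOn ⟨rfl, Set.mem_univ _⟩

lemma linearMap_ext_boundary {f g : Chain R V →ₗ[R] N} (h_nil : f (simplex []) = g (simplex []))
    (h_boundary : ∀ l ≠ [], f (boundary (simplex l)) = g (boundary (simplex l)) →
      f (simplex l) = g (simplex l)) : f = g := by
  have hlength (m : ℕ) : ∀ x ∈ chainsIn R (Set.univ : Set (Set V)) m, f x = g x := by
    induction m with
    | zero =>
      refine fun x hx => map_eq_of_mem_supportedOn _ _ ?_ hx
      rintro l ⟨hl, -⟩
      rw [List.length_eq_zero_iff.1 hl, h_nil]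
    | succ m ih =>
      refine fun x hx => map_eq_of_mem_supportedOn _ _ ?_ hx
      rintro l ⟨hl, -⟩
      exact h_boundary l (by rintro rfl; simp at hl)
        (ih _ (boundary_mem_chainsIn isLowerSet_univ (hl ▸ simplex_mem_chainsIn_univ l)))
  exact linearMap_ext_simplex fun l => hlength _ _ (simplex_mem_chainsIn_univ l)

end Ordered

section Module

variable {E E' : Type*} [AddCommGroup E] [Module ℝ E] [AddCommGroup E'] [Module ℝ E']

/-- The barycenter of a list of points, counted with multiplicity. -/
noncomputable def barycenter (l : List E) : E := (l.length : ℝ)⁻¹ • l.sum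

/-- The barycentric subdivision of chains of lists of length `n`. -/
noncomputable def subdivideLength (R : Type*) [CommRing R] {E : Type*} [AddCommGroup E]
    [Module ℝ E] : ℕ → Chain R E →ₗ[R] Chain R E
  | 0 => LinearMap.id
  | n + 1 => Finsupp.linearCombination R fun l =>
      cone (barycenter l) (subdivideLength R n (boundary (simplex l)))

/-- Barycentric subdivision of affine ordered chains: a simplex is sent to the cone from its
barycenter over the subdivision of its boundary. -/
noncomputable def subdivision (R : Type*) [CommRing R] {E : Type*} [AddCommGroup E]
    [Module ℝ E] : Chain R E →ₗ[R] Chain R E :=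
  Finsupp.linearCombination R fun l => subdivideLength R l.length (simplex l)

lemma subdivision_eq_subdivideLength {m : ℕ} {x : Chain R E} (hx : x ∈ chainsIn R Set.univ m) :
    subdivision R x = subdivideLength R m x := by
  refine map_eq_of_mem_supportedOn _ _ ?_ hx
  rintro l ⟨rfl, -⟩
  simp [subdivision]

@[simp] lemma subdivision_simplex_nil :
    subdivision R (simplex [] : Chain R E) = simplex [] := by
  simp [subdivision, subdivideLength]

lemma subdivision_simplex {l : List E} (hl : l ≠ []) :
    subdivision R (simplex l) = cone (barycenter l) (subdivision R (boundary (simplex l))) := by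
  obtain ⟨n, hn⟩ := Nat.exists_eq_succ_of_ne_zero (mt List.length_eq_zero_iff.1 hl)
  have hx := simplex_mem_chainsIn_univ (R := R) l
  rw [hn] at hx
  rw [subdivision_eq_subdivideLength hx,
    subdivision_eq_subdivideLength (boundary_mem_chainsIn isLowerSet_univ hx)]
  simp [subdivideLength]

lemma boundary_subdivision (x : Chain R E) :
    boundary (subdivision R x) = subdivision R (boundary x) := by
  have : boundary ∘ₗ subdivision R = subdivision (E := E) R ∘ₗ boundary := by
    refine linearMap_ext_boundary (by simp) fun l hl ih => ?_
    rw [LinearMap.comp_apply, LinearMap.comp_apply, boundary_boundary, map_zero] at ih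
    rw [LinearMap.comp_apply, LinearMap.comp_apply, subdivision_simplex hl, boundary_cone, ih,
      map_zero, sub_zero]
  simpa using LinearMap.congr_fun this x

lemma barycenter_map (g : E →ₗ[ℝ] E') (l : List E) : barycenter (l.map g) = g (barycenter l) := by
  simp [barycenter, map_list_sum]

lemma mapChain_subdivision (g : E →ₗ[ℝ] E') (x : Chain R E) :
    mapChain g (subdivision R x) = subdivision R (mapChain g x) := by
  have : mapChain g ∘ₗ subdivision R = subdivision R ∘ₗ mapChain g := by
    refine linearMap_ext_boundary (by simp) fun l hl ih => ?_
    simp only [LinearMap.comp_apply, mapChain_boundary, mapChain_simplex] at ih ⊢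
    rw [subdivision_simplex hl, mapChain_cone, ih, ← barycenter_map,
      ← subdivision_simplex (by simpa using hl)]
  simpa using LinearMap.congr_fun this x

lemma barycenter_eq_sum (l : List E) :
    barycenter l = ∑ i : Fin l.length, (l.length : ℝ)⁻¹ • l.get i := by
  rw [← Finset.smul_sum, ← List.sum_ofFn, List.ofFn_get, barycenter]

lemma barycenter_mem {C : Set E} (hC : Convex ℝ C) {l : List E} (hl : l ≠ [])
    (h : ∀ v ∈ l, v ∈ C) : barycenter l ∈ C := by
  rw [barycenter_eq_sum]
  exact hC.sum_mem (fun _ _ => by positivity) (by simp [hl]) fun i _ => h _ (l.get_mem i)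

end Module

section Metric

variable {E : Type*} [PseudoMetricSpace E]

/-- The subsets of `C` with pairwise distances at most `δ`. -/
def smallSets (C : Set E) (δ : ℝ) : Set (Set E) := {σ | σ ⊆ C ∧ ∀ x ∈ σ, ∀ y ∈ σ, dist x y ≤ δ}

variable {C : Set E} {δ : ℝ}

lemma isLowerSet_smallSets : IsLowerSet (smallSets C δ) :=
  fun _ _ hle h => ⟨hle.trans h.1, fun x hx y hy => h.2 x (hle hx) y (hle hy)⟩

lemma insert_mem_smallSets (hδ : 0 ≤ δ) {v : E} (hv : v ∈ C) {σ : Set E}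
    (hσ : σ ∈ smallSets (C ∩ Metric.closedBall v δ) δ) : insert v σ ∈ smallSets C δ := by
  refine ⟨Set.insert_subset hv fun x hx => (hσ.1 hx).1, ?_⟩
  rintro x (rfl | hx) y (rfl | hy)
  · simpa using hδ
  · exact dist_comm x y ▸ (hσ.1 hy).2
  · exact (hσ.1 hx).2
  · exact hσ.2 x hx y hy

end Metric

section Normed

variable {E : Type*} [NormedAddCommGroup E] [NormedSpace ℝ E]

lemma dist_barycenter_le {l : List E} {δ : ℝ} {v : E} (hv : v ∈ l) (h : ∀ x ∈ l, dist x v ≤ δ) :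
    dist v (barycenter l) ≤ (1 - (l.length : ℝ)⁻¹) * δ := by
  have hl : l ≠ [] := List.ne_nil_of_mem hv
  have hpos : 0 < (l.length : ℝ) := by exact_mod_cast List.length_pos_iff.2 hl
  obtain ⟨j, hj⟩ := List.mem_iff_get.1 hv
  have hconvex : dist (barycenter l) v ≤
      ∑ i : Fin l.length, (l.length : ℝ)⁻¹ * dist (l.get i) v := by
    rw [barycenter_eq_sum]
    exact (convexOn_dist v convex_univ).map_sum_le (fun _ _ => by positivity)
      (by simp [hl]) fun _ _ => Set.mem_univ _
  calc dist v (barycenter l)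
      ≤ (l.length : ℝ)⁻¹ * ∑ i : Fin l.length, dist (l.get i) v := by
        rwa [dist_comm, Finset.mul_sum]
    _ = (l.length : ℝ)⁻¹ * ∑ i ∈ Finset.univ.erase j, dist (l.get i) v := by
        rw [Finset.sum_erase _ (by rw [hj, dist_self])]
    _ ≤ (l.length : ℝ)⁻¹ * ((Finset.univ.erase j).card • δ) := by
        gcongr
        exact Finset.sum_le_card_nsmul _ _ _ fun i _ => h _ (l.get_mem i)
    _ = (1 - (l.length : ℝ)⁻¹) * δ := by
        rw [Finset.card_erase_of_mem (Finset.mem_univ j), Finset.card_univ, Fintype.card_fin,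
          nsmul_eq_mul, Nat.cast_pred (List.length_pos_iff.2 hl)]
        field_simp

variable {C : Set E} {δ : ℝ} {m M : ℕ}

lemma subdivision_mem_smallSets (hm : m ≤ M) (hδ : 0 ≤ δ) (hC : Convex ℝ C) {x : Chain R E}
    (hx : x ∈ chainsIn R (smallSets C δ) m) :
    subdivision R x ∈ chainsIn R (smallSets C ((1 - (M : ℝ)⁻¹) * δ)) m := by
  induction m generalizing C x with
  | zero =>
    refine map_mem_of_mem_supportedOn _ _ ?_ hx
    rintro l ⟨hl, -⟩
    obtain rfl := List.length_eq_zero_iff.1 hl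
    rw [subdivision_simplex_nil]
    exact simplex_nil_mem_chainsIn ⟨Set.empty_subset _, by simp⟩
  | succ m ih =>
    refine map_mem_of_mem_supportedOn _ _ ?_ hx
    rintro l ⟨hl, hlC⟩
    set η := (1 - (M : ℝ)⁻¹) * δ
    have hM : (1 : ℝ) ≤ M := by exact_mod_cast Nat.one_le_of_lt hm
    have hη : 0 ≤ η := mul_nonneg (sub_nonneg.2 (inv_le_one_of_one_le₀ hM)) hδ
    have hne : l ≠ [] := by rintro rfl; simp at hl
    have hball : ∀ v ∈ l, v ∈ Metric.closedBall (barycenter l) η := fun v hv => by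
      refine (dist_barycenter_le hv fun x hx => hlC.2 x hx v hv).trans ?_
      rw [hl]
      exact mul_le_mul_of_nonneg_right (by gcongr) hδ
    have hlball : {v | v ∈ l} ∈ smallSets (C ∩ Metric.closedBall (barycenter l) η) δ :=
      ⟨fun v hv => ⟨hlC.1 hv, hball v hv⟩, hlC.2⟩
    rw [subdivision_simplex hne]
    refine map_mem_of_mem_supportedOn (cone _) _ ?_ <| ih (by omega)
      (hC.inter (convex_closedBall _ _))
      (boundary_mem_chainsIn isLowerSet_smallSets (simplex_mem_supportedOn ⟨hl, hlball⟩))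
    rintro l' ⟨hl', hsmall⟩
    have hset : {v | v ∈ barycenter l :: l'} = insert (barycenter l) {v | v ∈ l'} := by ext; simp
    rw [cone_simplex]
    exact simplex_mem_supportedOn ⟨by simp [hl'],
      hset ▸ insert_mem_smallSets hη (barycenter_mem hC hne hlC.1) hsmall⟩

lemma subdivision_pow_mem_smallSets (hM : 0 < M) (hm : m ≤ M) (hδ : 0 ≤ δ) (hC : Convex ℝ C)
    {x : Chain R E} (hx : x ∈ chainsIn R (smallSets C δ) m) (n : ℕ) :
    (subdivision R ^ n) x ∈ chainsIn R (smallSets C ((1 - (M : ℝ)⁻¹) ^ n * δ)) m := by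
  have hM1 : (1 : ℝ) ≤ M := by exact_mod_cast hM
  have hfactor : 0 ≤ 1 - (M : ℝ)⁻¹ := sub_nonneg.2 (inv_le_one_of_one_le₀ hM1)
  induction n with
  | zero => simpa using hx
  | succ n ih =>
    rw [pow_succ' (subdivision R), Module.End.mul_apply, pow_succ' (1 - _), mul_assoc]
    exact subdivision_mem_smallSets hm (by positivity) hC ih

end Normed

end Subdivision

/-! ### Geometric realization -/

section Realization

variable {W : Type*} [Fintype W] {K : Set (Set W)} {σ : Set W}

/-- The closed face of the standard simplex spanned by a set of vertices. -/
def closedFace (σ : Set W) : Set (W → ℝ) := {x ∈ stdSimplex ℝ W | ∀ w ∉ σ, x w = 0}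

/-- The geometric realization of the complex `K` inside the standard simplex. -/
def realization (K : Set (Set W)) : Set (W → ℝ) := {x ∈ stdSimplex ℝ W | {w | x w ≠ 0} ∈ K}

lemma convex_closedFace (σ : Set W) : Convex ℝ (closedFace σ) := by
  intro x hx y hy a b ha hb hab
  refine ⟨convex_stdSimplex ℝ W hx.1 hy.1 ha hb hab, fun w hw => ?_⟩
  simp [hx.2 w hw, hy.2 w hw]

lemma single_mem_closedFace {w : W} (hw : w ∈ σ) : Pi.single w 1 ∈ closedFace σ :=
  ⟨single_mem_stdSimplex ℝ w, fun _ hv => Pi.single_eq_of_ne (ne_of_mem_of_not_mem hw hv).symm 1⟩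

lemma closedFace_subset_realization (hK : IsLowerSet K) (hσ : σ ∈ K) :
    closedFace σ ⊆ realization K :=
  fun _ hx => ⟨hx.1, hK (fun w hw => not_not.1 fun h => hw (hx.2 w h)) hσ⟩

lemma isCompact_closedFace (σ : Set W) : IsCompact (closedFace σ) := by
  have : closedFace σ = stdSimplex ℝ W ∩ ⋂ w ∈ σᶜ, {x | x w = 0} := by
    ext x
    simp [closedFace]
  rw [this]
  exact (isCompact_stdSimplex ℝ W).inter_right
    (isClosed_biInter fun w _ => isClosed_eq (continuous_apply w) continuous_const)

lemma isCompact_realization (hK : IsLowerSet K) : IsCompact (realization K) := by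
  have : realization K = ⋃ σ ∈ K, closedFace σ := by
    ext x
    simp only [Set.mem_iUnion]
    constructor
    · exact fun hx => ⟨_, hx.2, hx.1, fun w hw => not_not.1 hw⟩
    · rintro ⟨σ, hσ, hx⟩
      exact closedFace_subset_realization hK hσ hx
  rw [this]
  exact (Set.toFinite K).isCompact_biUnion fun σ _ => isCompact_closedFace σ

end Realization

section Action

attribute [local instance] arrowAddAction

variable {G W : Type*} [AddGroup G] [AddAction G W] {K : Set (Set W)}

/-- No nonzero element of `G` moves a vertex to a vertex of a common simplex of `K`. -/
def IsFreeOn (G : Type*) {W : Type*} [AddGroup G] [AddAction G W] (K : Set (Set W)) : Prop :=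
  ∀ σ ∈ K, ∀ w ∈ σ, ∀ g : G, g +ᵥ w ∈ σ → g = 0

lemma vadd_fun_apply (g : G) (x : W → ℝ) (w : W) : (g +ᵥ x) w = x (-g +ᵥ w) := rfl

lemma vadd_single_one (g : G) (w : W) :
    g +ᵥ (Pi.single w 1 : W → ℝ) = Pi.single (g +ᵥ w) 1 := by
  ext v
  rw [vadd_fun_apply, Pi.single_apply, Pi.single_apply]
  simp only [neg_vadd_eq_iff]

lemma vadd_mem_realization [Fintype W] (hinv : ∀ g : G, ∀ σ ∈ K, (g +ᵥ ·) '' σ ∈ K) (g : G)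
    {x : W → ℝ} (hx : x ∈ realization K) : g +ᵥ x ∈ realization K := by
  refine ⟨⟨fun w => hx.1.1 _, ?_⟩, ?_⟩
  · rw [← hx.1.2]
    exact Equiv.sum_comp (AddAction.toPerm (-g)) x
  · convert hinv g _ hx.2
    ext w
    constructor
    · exact fun h => ⟨-g +ᵥ w, h, vadd_neg_vadd g w⟩
    · rintro ⟨v, hv, rfl⟩
      simpa [vadd_fun_apply] using hv

lemma IsFreeOn.eq_zero_of_vadd_eq [Fintype W] (hfree : IsFreeOn G K) {g : G} {x : W → ℝ}
    (hx : x ∈ realization K) (h : g +ᵥ x = x) : g = 0 := by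
  obtain ⟨w, hw⟩ : ∃ w, x w ≠ 0 := by
    by_contra! hzero
    simpa [hzero] using hx.1.2
  refine neg_eq_zero.1 (hfree _ hx.2 w hw (-g) ?_)
  rwa [Set.mem_ofPred_eq, ← vadd_fun_apply g x w, h]

lemma exists_equivariant_selection {X Λ : Type*} [AddAction G X] [AddAction G Λ] [Nonempty Λ]
    {S : Set X} (hS : ∀ g : G, ∀ x ∈ S, g +ᵥ x ∈ S)
    (hfree : ∀ x ∈ S, ∀ g : G, g +ᵥ x = x → g = 0) {P : Λ → X → Prop}
    (hP : ∀ (g : G) l x, P l x → P (g +ᵥ l) (g +ᵥ x)) (hex : ∀ x ∈ S, ∃ l, P l x) :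
    ∃ lam : X → Λ, (∀ x ∈ S, P (lam x) x) ∧ ∀ g : G, ∀ x ∈ S, lam (g +ᵥ x) = g +ᵥ lam x := by
  let rep (x : X) : X := (Quotient.mk (AddAction.orbitRel G X) x).out
  have hrep (x : X) : ∃ g : G, g +ᵥ rep x = x :=
    AddAction.orbitRel_apply.1 <|
      (AddAction.orbitRel G X).symm (Quotient.mk_out (s := AddAction.orbitRel G X) x)
  have hrep_vadd (g : G) (x : X) : rep (g +ᵥ x) = rep x :=
    congrArg Quotient.out (Quotient.sound (AddAction.orbitRel_apply.2 ⟨g, rfl⟩))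
  choose γ hγ using hrep
  have hrep_mem (x : X) (hx : x ∈ S) : rep x ∈ S := by
    rw [← neg_vadd_eq_iff.2 (hγ x).symm]
    exact hS _ x hx
  have hγ_vadd (g : G) (x : X) (hx : x ∈ S) : γ (g +ᵥ x) = g + γ x := by
    have : γ (g +ᵥ x) +ᵥ rep x = (g + γ x) +ᵥ rep x := by
      rw [add_vadd, hγ, ← hrep_vadd g, hγ]
    refine (neg_add_eq_zero.1 (hfree _ (hrep_mem x hx) _ ?_)).symm
    rw [add_vadd, this, neg_vadd_vadd]
  choose! pick hpick using hex
  refine ⟨fun x => γ x +ᵥ pick (rep x), fun x hx => ?_, fun g x hx => ?_⟩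
  · simpa only [hγ] using hP (γ x) _ _ (hpick _ (hrep_mem x hx))
  · simp only [hrep_vadd, hγ_vadd g x hx, add_vadd]

end Action

section RealizedSubdivision

attribute [local instance] arrowAddAction

variable {R : Type*} [CommRing R] {W : Type*}

/-- The `n`-fold barycentric subdivision of the realization of abstract simplices in `W → ℝ`. -/
noncomputable def realizedSubdivision (R : Type*) [CommRing R] {W : Type*} (n : ℕ) :
    Chain R W →ₗ[R] Chain R (W → ℝ) :=
  (subdivision R ^ n : Module.End R _) ∘ₗ mapChain fun w => Pi.single w 1

lemma realizedSubdivision_succ (n : ℕ) (x : Chain R W) :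
    realizedSubdivision R (n + 1) x = subdivision R (realizedSubdivision R n x) := by
  simp only [realizedSubdivision, LinearMap.comp_apply, pow_succ', Module.End.mul_apply]

@[simp] lemma realizedSubdivision_simplex_nil (n : ℕ) :
    realizedSubdivision R n (simplex [] : Chain R W) = simplex [] := by
  induction n with
  | zero => simp [realizedSubdivision]
  | succ n ih => rw [realizedSubdivision_succ, ih, subdivision_simplex_nil]

lemma boundary_realizedSubdivision (n : ℕ) (x : Chain R W) :
    boundary (realizedSubdivision R n x) = realizedSubdivision R n (boundary x) := by
  induction n with
  | zero => simp [realizedSubdivision, mapChain_boundary]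
  | succ n ih => rw [realizedSubdivision_succ, realizedSubdivision_succ, boundary_subdivision, ih]

lemma realizedSubdivision_vadd {G : Type*} [AddGroup G] [AddAction G W] (n : ℕ) (g : G)
    (x : Chain R W) :
    realizedSubdivision R n (mapChain (g +ᵥ ·) x) =
      mapChain (g +ᵥ ·) (realizedSubdivision R n x) := by
  induction n with
  | zero =>
    simp only [realizedSubdivision, pow_zero, LinearMap.comp_apply, Module.End.one_apply,
      mapChain_mapChain]
    congr 2
    exact funext fun w => (vadd_single_one g w).symm
  | succ n ih =>
    rw [realizedSubdivision_succ, realizedSubdivision_succ, ih]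
    exact (mapChain_subdivision (LinearMap.funLeft ℝ ℝ (-g +ᵥ ·)) _).symm

lemma smallSets_mono {E : Type*} [PseudoMetricSpace E] {C C' : Set E} {δ δ' : ℝ} (hC : C ⊆ C')
    (hδ : δ ≤ δ') : smallSets C δ ⊆ smallSets C' δ' :=
  fun _ h => ⟨h.1.trans hC, fun x hx y hy => (h.2 x hx y hy).trans hδ⟩

lemma exists_realizedSubdivision_mem_smallSets [Fintype W] {K : Set (Set W)} (hK : IsLowerSet K)
    {δ : ℝ} (hδ : 0 < δ) (M : ℕ) :
    ∃ n, ∀ m ≤ M, ∀ x ∈ chainsIn R K m,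
      realizedSubdivision R n x ∈ chainsIn R (smallSets (realization K) δ) m := by
  obtain ⟨B, hB⟩ := Metric.isBounded_iff.1 (isCompact_stdSimplex ℝ W).isBounded
  have hfactor : 1 - ((M + 1 : ℕ) : ℝ)⁻¹ < 1 := sub_lt_self _ (by positivity)
  obtain ⟨n, hn⟩ := exists_pow_lt_of_lt_one (show 0 < δ / (|B| + 1) by positivity) hfactor
  rw [lt_div_iff₀ (by positivity)] at hn
  have hnonneg : 0 ≤ 1 - ((M + 1 : ℕ) : ℝ)⁻¹ :=
    sub_nonneg.2 (inv_le_one_of_one_le₀ (by simp))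
  have hsmall : (1 - ((M + 1 : ℕ) : ℝ)⁻¹) ^ n * |B| ≤ δ :=
    (mul_le_mul_of_nonneg_left (by simp) (by positivity)).trans hn.le
  refine ⟨n, fun m hm x hx => map_mem_of_mem_supportedOn _ _ ?_ hx⟩
  rintro l ⟨hl, hlK⟩
  have hvertex : ∀ v ∈ l.map fun w => (Pi.single w 1 : W → ℝ), v ∈ closedFace {w | w ∈ l} := by
    simpa using fun w hw => single_mem_closedFace (σ := {w | w ∈ l}) hw
  have hface : mapChain (fun w => (Pi.single w 1 : W → ℝ)) (simplex l : Chain R W) ∈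
      chainsIn R (smallSets (closedFace {w | w ∈ l}) |B|) m := by
    rw [mapChain_simplex]
    exact simplex_mem_supportedOn ⟨by simpa using hl, hvertex, fun x hx y hy =>
      (hB (hvertex x hx).1 (hvertex y hy).1).trans (le_abs_self B)⟩
  exact chainsIn_mono (smallSets_mono (closedFace_subset_realization hK hlK) hsmall)
    (subdivision_pow_mem_smallSets M.succ_pos (hm.trans M.le_succ) (abs_nonneg B)
      (convex_closedFace _) hface n)

end RealizedSubdivision

/-! ### From test functions to chain maps -/

section Labelling

attribute [local instance] arrowAddAction

variable {Φ C : Type*} [Fintype C]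

lemma exists_pos_le_of_sum_eq_zero [Finite Φ] {X : Type*} [TopologicalSpace X] {S : Set X}
    (hS : IsCompact S) {D : Φ × C → X → ℝ} (hD : ∀ l, ContinuousOn (D l) S)
    (hsum : ∀ φ, ∀ x ∈ S, ∑ c, D (φ, c) x = 0) (hne : ∀ x ∈ S, ∃ l, D l x ≠ 0) :
    ∃ η > 0, ∀ x ∈ S, ∃ l, η ≤ D l x := by
  have := Fintype.ofFinite Φ
  rcases isEmpty_or_nonempty (Φ × C) with hempty | hnonempty
  · exact ⟨1, one_pos, fun x hx => (hempty.false (hne x hx).choose).elim⟩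
  have hpos : ∀ x ∈ S, 0 < Finset.univ.sup' Finset.univ_nonempty fun l => D l x := by
    intro x hx
    rw [Finset.lt_sup'_iff]
    by_contra! hle
    obtain ⟨⟨φ, c⟩, hl⟩ := hne x hx
    exact hl ((Finset.sum_eq_zero_iff_of_nonpos fun c _ => hle (φ, c) (Finset.mem_univ _)).1
      (hsum φ x hx) c (Finset.mem_univ c))
  obtain ⟨η, hη, hle⟩ := hS.exists_forall_le'
    (ContinuousOn.finset_sup'_apply Finset.univ_nonempty fun l _ => hD l) hpos
  exact ⟨η, hη, fun x hx => by simpa [Finset.le_sup'_iff] using hle x hx⟩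

-- A small set whose labels fill a column `{φ} × C` would make every `D (φ, c)` positive at a
-- common point, although they sum to zero.
lemma exists_image_smallSets_mem_boundaryJoin [Fintype Φ] [Nonempty C] {X : Type*}
    [PseudoMetricSpace X] {S : Set X} (hS : IsCompact S) {D : Φ × C → X → ℝ}
    (hD : ∀ l, ContinuousOn (D l) S)
    (hsum : ∀ φ, ∀ x ∈ S, ∑ c, D (φ, c) x = 0) {lam : X → Φ × C} {η : ℝ} (hη : 0 < η)
    (hlam : ∀ x ∈ S, η ≤ D (lam x) x) :
    ∃ δ > 0, ∀ σ ∈ smallSets S δ, lam '' σ ∈ boundaryJoin C Finset.univ := by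
  obtain ⟨δ, hδ, hclose⟩ := Metric.uniformContinuousOn_iff_le.1
    (hS.uniformContinuousOn_of_continuous (continuousOn_pi.2 hD)) (η / 2) (half_pos hη)
  refine ⟨δ, hδ, fun σ hσ => ⟨fun _ _ => Finset.mem_univ _, fun φ _ hfull => ?_⟩⟩
  obtain ⟨x, hx, -⟩ := hfull (Classical.arbitrary C)
  have hpos (c : C) : 0 < D (φ, c) x := by
    obtain ⟨y, hy, hyc⟩ := hfull c
    have hdist := (dist_le_pi_dist _ _ (φ, c)).trans
      (hclose y (hσ.1 hy) x (hσ.1 hx) (hσ.2 y hy x hx))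
    have hy_le := hlam y (hσ.1 hy)
    rw [hyc] at hy_le
    linarith [(abs_le.1 hdist).2]
  exact (Finset.sum_pos (fun c _ => hpos c) Finset.univ_nonempty).ne' (hsum φ x (hσ.1 hx))

theorem exists_equivariant_chainMap {R : Type*} [CommRing R] {G W : Type*} [AddGroup G]
    [AddAction G W] [AddAction G (Φ × C)] [Fintype W] [Fintype Φ] [Nonempty Φ] [Nonempty C]
    {K : Set (Set W)} (hK : IsLowerSet K) (hinv : ∀ g : G, ∀ σ ∈ K, (g +ᵥ ·) '' σ ∈ K)
    (hfree : IsFreeOn G K) {D : Φ × C → (W → ℝ) → ℝ}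
    (hD : ∀ l, ContinuousOn (D l) (realization K))
    (hsum : ∀ φ, ∀ x ∈ realization K, ∑ c, D (φ, c) x = 0)
    (heq : ∀ (g : G) l x, D (g +ᵥ l) (g +ᵥ x) = D l x)
    (hne : ∀ x ∈ realization K, ∃ l, D l x ≠ 0) (M : ℕ) :
    ∃ Ψ : Chain R W →ₗ[R] Chain R (Φ × C), Ψ (simplex []) = simplex [] ∧
      (∀ x, Ψ (boundary x) = boundary (Ψ x)) ∧ ∀ m ≤ M, ∀ x ∈ chainsIn R K m,
        Ψ x ∈ chainsIn R (boundaryJoin C Finset.univ) m ∧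
          ∀ g : G, Ψ (mapChain (g +ᵥ ·) x) = mapChain (g +ᵥ ·) (Ψ x) := by
  have hcompact := isCompact_realization hK
  obtain ⟨η, hη, hηle⟩ := exists_pos_le_of_sum_eq_zero hcompact hD hsum hne
  obtain ⟨lam, hlam, hlam_vadd⟩ := exists_equivariant_selection (G := G)
    (fun g x hx => vadd_mem_realization hinv g hx) (fun x hx g => hfree.eq_zero_of_vadd_eq hx)
    (fun g l x h => h.trans_eq (heq g l x).symm) hηle
  obtain ⟨δ, hδ, hsimplicial⟩ := exists_image_smallSets_mem_boundaryJoin hcompact hD hsum hη hlam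
  obtain ⟨n, hn⟩ := exists_realizedSubdivision_mem_smallSets (R := R) hK hδ M
  refine ⟨mapChain lam ∘ₗ realizedSubdivision R n, by simp, fun x => ?_, fun m hm x hx =>
    ⟨mapChain_mem_chainsIn hsimplicial (hn m hm x hx), fun g => ?_⟩⟩
  · simp only [LinearMap.comp_apply, ← boundary_realizedSubdivision, mapChain_boundary]
  · simp only [LinearMap.comp_apply, realizedSubdivision_vadd, mapChain_mapChain]
    exact mapChain_congr_of_mem_chainsIn (fun σ hσ y hy => hlam_vadd g y (hσ.1 hy)) (hn m hm x hx)

end Labelling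

/-! ### Test functions on the `p`-ary tree -/

/-- The inner nodes of `J` copies of the `p`-ary tree whose leaves are the elements of `(ℤ/p)^ν`: a
node at level `ℓ` prescribes the entries of a leaf before position `ℓ`. -/
structure ForestNode (p ν : ℕ) (J : Type*) where
  /-- The tree containing the node. -/
  tree : J
  /-- The position of the entry in which the subtrees below the node differ. -/
  level : Fin ν
  /-- The prescribed entries. -/
  entry : {k : Fin ν // k < level} → ZMod p

namespace ForestNode

variable {p ν : ℕ} {J : Type*}

/-- The leaf `i` lies below the node `t`. -/
def IsAbove (t : ForestNode p ν J) (i : Fin ν → ZMod p) : Prop := ∀ k, i k.1 = t.entry k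

/-- Forest nodes as dependent triples. -/
def equivProd (p ν : ℕ) (J : Type*) :
    ForestNode p ν J ≃ J × Σ ℓ : Fin ν, ({k : Fin ν // k < ℓ} → ZMod p) where
  toFun t := (t.tree, ⟨t.level, t.entry⟩)
  invFun t := ⟨t.1, t.2.1, t.2.2⟩

noncomputable instance [NeZero p] [Fintype J] : Fintype (ForestNode p ν J) :=
  Fintype.ofEquiv _ (equivProd p ν J).symm

lemma sub_one_mul_card [NeZero p] [Fintype J] :
    (p - 1) * Fintype.card (ForestNode p ν J) = (p ^ ν - 1) * Fintype.card J := by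
  have hcard : Fintype.card (ForestNode p ν J) =
      Fintype.card J * ∑ ℓ ∈ Finset.range ν, p ^ ℓ := by
    rw [Fintype.card_congr (equivProd p ν J), Fintype.card_prod, Fintype.card_sigma,
      Finset.sum_range]
    congr! 2 with ℓ
    rw [Fintype.card_fun, ZMod.card, Fintype.card_subtype, Finset.filter_gt_eq_Iio, Fin.card_Iio]
  rw [hcard, mul_left_comm, mul_comm (p - 1), geom_sum_mul_of_one_le NeZero.one_le, mul_comm]

noncomputable instance : AddAction (Fin ν → ZMod p) (ForestNode p ν J) where
  vadd g t := ⟨t.tree, t.level, fun k => t.entry k + g k⟩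
  zero_vadd t := congrArg (mk t.tree t.level) (funext fun k => add_zero (t.entry k))
  add_vadd g h t := congrArg (mk t.tree t.level)
    (funext fun k => (congrArg (t.entry k + ·) (add_comm (g k) (h k))).trans (add_assoc _ _ _).symm)

lemma vadd_def (g : Fin ν → ZMod p) (t : ForestNode p ν J) :
    g +ᵥ t = ⟨t.tree, t.level, fun k => t.entry k + g k⟩ := rfl

lemma level_vadd (g : Fin ν → ZMod p) (t : ForestNode p ν J) : (g +ᵥ t).level = t.level := rfl

lemma isAbove_vadd_add_iff {g i : Fin ν → ZMod p} {t : ForestNode p ν J} :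
    (g +ᵥ t).IsAbove (i + g) ↔ t.IsAbove i := by
  simp only [IsAbove, vadd_def, Pi.add_apply, add_left_inj]

/-- The action on the pairs `(t, c)`, where `c` selects a child of the node `t`. -/
noncomputable instance : AddAction (Fin ν → ZMod p) (ForestNode p ν J × ZMod p) where
  vadd g l := (g +ᵥ l.1, l.2 + g l.1.level)
  zero_vadd l := Prod.ext (zero_vadd _ l.1) (add_zero l.2)
  add_vadd g h l := Prod.ext (add_vadd g h l.1)
    ((congrArg (l.2 + ·) (add_comm (g _) (h _))).trans (add_assoc _ _ _).symm)

lemma vadd_prod_def (g : Fin ν → ZMod p) (l : ForestNode p ν J × ZMod p) :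
    g +ᵥ l = (g +ᵥ l.1, l.2 + g l.1.level) := rfl

/-- The action of the standard generators of `(ℤ/p)^ν`. -/
noncomputable def labelAction (p ν : ℕ) (J : Type*) :
    LabelAction p (ForestNode p ν J) (Fin ν) where
  level := level
  act k := AddAction.toPerm (Pi.single k 1 : Fin ν → ZMod p)
  act_eq_self := by
    rintro k ⟨j, ℓ, t⟩ (hk : ℓ ≤ k)
    have hlt (k' : {k' // k' < ℓ}) : (Pi.single k 1 : Fin ν → ZMod p) k' = 0 :=
      Pi.single_eq_of_ne (k'.2.trans_le hk).ne 1
    simp [vadd_def, hlt]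
  level_act _ _ := rfl
  comm k l t := by simp only [AddAction.toPerm_apply, vadd_vadd, add_comm]
  act_pow k := by
    have hp : p • (Pi.single k 1 : Fin ν → ZMod p) = 0 := by ext; simp
    have := map_nsmul (AddAction.toPermHom (Fin ν → ZMod p) (ForestNode p ν J)) p (Pi.single k 1)
    rw [hp, map_zero] at this
    exact this.symm

lemma labelAction_shift (k : Fin ν) :
    ⇑((labelAction p ν J).shift k) = ((Pi.single k 1 : Fin ν → ZMod p) +ᵥ ·) := by
  funext l
  rw [LabelAction.shift_apply, vadd_prod_def, Pi.single_apply]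
  congr!

/-- The total weight of the leaves below the child `l.2` of the node `l.1`, minus the mean over all
the children of `l.1`. -/
noncomputable def imbalance [NeZero p] (f : J → (Fin ν → ZMod p) → ℝ)
    (l : ForestNode p ν J × ZMod p) : ℝ :=
  ∑ i, if l.1.IsAbove i then
    ((if i l.1.level = l.2 then 1 else 0) - (p : ℝ)⁻¹) * f l.1.tree i else 0

lemma sum_imbalance [NeZero p] (f : J → (Fin ν → ZMod p) → ℝ) (t : ForestNode p ν J) :
    ∑ c, imbalance f (t, c) = 0 := by
  have hp : (p : ℝ) ≠ 0 := NeZero.ne _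
  simp only [imbalance]
  rw [Finset.sum_comm]
  refine Finset.sum_eq_zero fun i _ => ?_
  split_ifs
  · rw [← Finset.sum_mul, Finset.sum_sub_distrib]
    simp [ZMod.card, hp]
  · exact Finset.sum_const_zero

lemma imbalance_vadd [NeZero p] (f : J → (Fin ν → ZMod p) → ℝ) (g : Fin ν → ZMod p)
    (l : ForestNode p ν J × ZMod p) :
    imbalance f (g +ᵥ l) = imbalance (fun j i => f j (i + g)) l := by
  unfold imbalance
  rw [← Equiv.sum_comp (Equiv.addRight g)]
  simp only [Equiv.coe_addRight, vadd_prod_def, isAbove_vadd_add_iff, level_vadd, Pi.add_apply,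
    add_left_inj]
  rfl

lemma continuous_imbalance [NeZero p] (l : ForestNode p ν J × ZMod p) :
    Continuous fun f : J → (Fin ν → ZMod p) → ℝ => imbalance f l := by
  refine continuous_finsetSum _ fun i _ => ?_
  split_ifs <;> fun_prop

/-- The total weight of the leaves which agree with `i` before position `n`. -/
noncomputable def prefixSum [NeZero p] (f : (Fin ν → ZMod p) → ℝ) (n : ℕ)
    (i : Fin ν → ZMod p) : ℝ :=
  ∑ a, if ∀ k : Fin ν, (k : ℕ) < n → a k = i k then f a else 0

lemma prefixSum_card [NeZero p] (f : (Fin ν → ZMod p) → ℝ) (i : Fin ν → ZMod p) :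
    prefixSum f ν i = f i := by
  simp only [prefixSum, Fin.is_lt, forall_const, ← funext_iff, Finset.sum_ite_eq',
    Finset.mem_univ, if_true]

lemma imbalance_eq_prefixSum_sub [NeZero p] (f : J → (Fin ν → ZMod p) → ℝ) (j : J) (ℓ : Fin ν)
    (i : Fin ν → ZMod p) : imbalance f (⟨j, ℓ, fun k => i k⟩, i ℓ) =
      prefixSum (f j) (ℓ + 1) i - (p : ℝ)⁻¹ * prefixSum (f j) ℓ i := by
  have habove (a : Fin ν → ZMod p) : IsAbove (⟨j, ℓ, fun k => i k⟩ : ForestNode p ν J) a ↔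
      ∀ k : Fin ν, (k : ℕ) < ℓ → a k = i k := ⟨fun h k hk => h ⟨k, hk⟩, fun h k => h k k.2⟩
  have hsucc (a : Fin ν → ZMod p) : (∀ k : Fin ν, (k : ℕ) < ℓ + 1 → a k = i k) ↔
      (∀ k : Fin ν, (k : ℕ) < ℓ → a k = i k) ∧ a ℓ = i ℓ := by
    simp only [Nat.lt_succ_iff_lt_or_eq, or_imp, forall_and, ← Fin.ext_iff, forall_eq]
  simp only [imbalance, prefixSum, habove, hsucc, ite_and]
  rw [Finset.mul_sum, ← Finset.sum_sub_distrib]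
  refine Finset.sum_congr rfl fun a _ => ?_
  split_ifs <;> simp_all [sub_mul]

lemma eq_of_imbalance_eq_zero [NeZero p] {f : J → (Fin ν → ZMod p) → ℝ}
    (h : ∀ l, imbalance f l = 0) (j : J) (i i' : Fin ν → ZMod p) : f j i = f j i' := by
  have hprefix (n : ℕ) (hn : n ≤ ν) : prefixSum (f j) n i = prefixSum (f j) n i' := by
    induction n with
    | zero => simp [prefixSum]
    | succ n ih =>
      have hsucc (i : Fin ν → ZMod p) :
          prefixSum (f j) (n + 1) i = (p : ℝ)⁻¹ * prefixSum (f j) n i :=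
        sub_eq_zero.1 ((imbalance_eq_prefixSum_sub f j ⟨n, hn⟩ i).symm.trans (h _))
      rw [hsucc, hsucc, ih (by omega)]
  rw [← prefixSum_card (f j), hprefix ν le_rfl, prefixSum_card]

end ForestNode

section CommonValue

attribute [local instance] arrowAddAction

variable {p ν : ℕ} [Fact p.Prime] {W J : Type*} [AddAction (Fin ν → ZMod p) W]
  {K : Set (Set W)}

lemma isCyclicAction_vadd {G R : Type*} [AddCommGroup G] [CommRing R] [AddAction G W] {p : ℕ}
    {ι : Type*} {g : ι → G} (hg : ∀ i, p • g i = 0) :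
    IsCyclicAction p (boundary : Module.End R (Chain R W)) fun i => mapChain (g i +ᵥ ·) where
  pow_eq_one i := by
    have hiter (n : ℕ) : (g i +ᵥ ·)^[n] = ((n • g i +ᵥ ·) : W → W) := by
      funext w
      exact vadd_iterate_apply (g i) n w
    rw [mapChain_pow, hiter, hg]
    simp only [zero_vadd]
    exact mapChain_id
  comm i j x := by
    simp only [mapChain_mapChain, Function.comp_def, vadd_vadd, add_comm]
  comm_differential i x := (mapChain_boundary _ x).symm

theorem exists_isSystem_vadd (h0 : ∅ ∈ K)
    (hinv : ∀ g : Fin ν → ZMod p, ∀ σ ∈ K, (g +ᵥ ·) '' σ ∈ K) {n : ℕ}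
    (hacyclic : IsAcyclicBelow (ZMod p) K n) (gs : List (Fin ν)) :
    ∃ x, IsSystem p boundary (fun k => mapChain ((Pi.single k 1 : Fin ν → ZMod p) +ᵥ ·)) gs
      (chainsIn (ZMod p) K) 0 n (concentrated (simplex [])) x :=
  exists_isSystem (isCyclicAction_vadd fun k => by ext; simp)
    (fun _ _ _ _ hx => mapChain_mem_chainsIn (hinv _) hx) hacyclic
    (isTotalCycle_concentrated (fun _ _ => mapChain_simplex _ _) (simplex_nil_mem_chainsIn h0)
      (by simp))

theorem exists_forall_eq [Fintype W] [Fintype J] [Nonempty J] (hν : ν ≠ 0) (hK : IsLowerSet K)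
    (h0 : ∅ ∈ K) (hinv : ∀ g : Fin ν → ZMod p, ∀ σ ∈ K, (g +ᵥ ·) '' σ ∈ K)
    (hfree : IsFreeOn (Fin ν → ZMod p) K)
    (hacyclic : IsAcyclicBelow (ZMod p) K ((p ^ ν - 1) * Fintype.card J + 1))
    {w : (W → ℝ) → J → (Fin ν → ZMod p) → ℝ} (hcont : ContinuousOn w (realization K))
    (hw : ∀ (g : Fin ν → ZMod p) x j i, w (g +ᵥ x) j (i + g) = w x j i) :
    ∃ x ∈ realization K, ∀ j i i', w x j i = w x j i' := by
  by_contra! hcon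
  have hne : ∀ x ∈ realization K, ∃ l, ForestNode.imbalance (w x) l ≠ 0 := by
    intro x hx
    by_contra! hzero
    obtain ⟨j, i, i', hne⟩ := hcon x hx
    exact hne (ForestNode.eq_of_imbalance_eq_zero hzero j i i')
  rw [← ForestNode.sub_one_mul_card] at hacyclic
  set n := (p - 1) * Fintype.card (ForestNode p ν J)
  have : Nonempty (ForestNode p ν J) :=
    ⟨⟨Classical.arbitrary J, ⟨0, Nat.pos_of_ne_zero hν⟩, fun _ => 0⟩⟩
  obtain ⟨Ψ, hΨ_nil, hΨ_boundary, hΨ⟩ := exists_equivariant_chainMap (R := ZMod p) hK hinv hfree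
    (D := fun l x => ForestNode.imbalance (w x) l)
    (fun l => (ForestNode.continuous_imbalance l).comp_continuousOn hcont)
    (fun t x _ => ForestNode.sum_imbalance (w x) t)
    (fun g l x => by simp only [ForestNode.imbalance_vadd, hw]) hne (n + 1)
  obtain ⟨x, hx⟩ := exists_isSystem_vadd h0 hinv hacyclic (List.finRange ν)
  refine (ForestNode.labelAction p ν J).not_isJoinSystem (List.pairwise_lt_finRange ν)
    (fun _ => List.mem_finRange _) (fun I => Ψ (x I)) fun I hl hI => ?_
  obtain ⟨hxI, hboundary⟩ := hx I hl hI
  refine ⟨(hΨ _ (by omega) _ hxI).1, ?_⟩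
  rw [← hΨ_boundary, hboundary, map_add]
  congr 1
  · rw [concentrated, concentrated]
    split_ifs
    exacts [hΨ_nil, map_zero Ψ]
  · refine map_totalDiff Ψ fun I' hI' k _ i => map_periodicDiff_of_mem
      (N := chainsIn (ZMod p) K (I'.sum + 0 + 1))
      (fun _ hy => mapChain_mem_chainsIn (hinv _) hy) (fun y hy => ?_) i
      (hx I' (hI'.length_eq.trans hl) (by have := hI'.2; omega)).1
    rw [(hΨ _ (by have := hI'.2; omega) y hy).2, LabelAction.onChains,
      ForestNode.labelAction_shift]

end CommonValue

/-! ### Common image points -/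

section Homogenize

variable {V E : Type*} [Fintype V] [NormedAddCommGroup E] [NormedSpace ℝ E]

/-- The homogeneous extension of degree one of a map on the standard simplex to the nonnegative
orthant. It vanishes at the origin, where it rescales the junk value `f 0` by zero. -/
noncomputable def homogenize (f : (V → ℝ) → E) (y : V → ℝ) : E :=
  (∑ v, y v) • f ((∑ v, y v)⁻¹ • y)

lemma inv_sum_smul_mem_stdSimplex {y : V → ℝ} (hy : 0 ≤ y) (hsum : ∑ v, y v ≠ 0) :
    (∑ v, y v)⁻¹ • y ∈ stdSimplex ℝ V := by
  refine ⟨fun v => mul_nonneg (inv_nonneg.2 (Finset.sum_nonneg fun v _ => hy v)) (hy v), ?_⟩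
  simp only [Pi.smul_apply, smul_eq_mul, ← Finset.mul_sum, inv_mul_cancel₀ hsum]

lemma continuousOn_homogenize {f : (V → ℝ) → E} (hf : ContinuousOn f (stdSimplex ℝ V)) :
    ContinuousOn (homogenize f) {y | 0 ≤ y} := by
  have hcont : Continuous fun y : V → ℝ => ∑ v, y v := by fun_prop
  intro y hy
  by_cases hsum : ∑ v, y v = 0
  · obtain ⟨b, hb⟩ := ((isCompact_stdSimplex ℝ V).image_of_continuousOn hf).isBounded.exists_norm_le
    have hbound : ∀ z ∈ {y : V → ℝ | 0 ≤ y}, ‖f ((∑ v, z v)⁻¹ • z)‖ ≤ max b ‖f 0‖ := by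
      intro z hz
      by_cases hz0 : ∑ v, z v = 0
      · simp [hz0]
      · exact (hb _ ⟨_, inv_sum_smul_mem_stdSimplex hz hz0, rfl⟩).trans (le_max_left _ _)
    rw [ContinuousWithinAt, homogenize, hsum, zero_smul]
    refine Filter.Tendsto.zero_smul_isBoundedUnder_le (hsum ▸ hcont.continuousWithinAt)
      (Filter.isBoundedUnder_of_eventually_le (a := max b ‖f 0‖) ?_)
    filter_upwards [self_mem_nhdsWithin] with z hz using hbound z hz
  · rw [← continuousWithinAt_inter ((isOpen_ne.preimage hcont).mem_nhds hsum)]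
    exact hcont.continuousWithinAt.smul <|
      (hf _ (inv_sum_smul_mem_stdSimplex hy hsum)).comp (f := fun z : V → ℝ => (∑ v, z v)⁻¹ • z)
        ((hcont.continuousAt.inv₀ hsum).continuousWithinAt.smul continuousWithinAt_id)
        fun z hz => inv_sum_smul_mem_stdSimplex hz.1 hz.2

end Homogenize

section Pieces

/-- A piece `(v, i) : V × G` is a vertex `v` used in the face with index `i`; the group `G` of face
indices acts on pieces by translation. -/
instance {V G : Type*} [AddCommGroup G] : AddAction G (V × G) where
  vadd g w := (w.1, w.2 + g)
  zero_vadd w := Prod.ext rfl (add_zero w.2)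
  add_vadd g h w := Prod.ext rfl ((congrArg (w.2 + ·) (add_comm g h)).trans (add_assoc _ _ _).symm)

lemma isFreeOn_of_injOn_fst {V G : Type*} [AddCommGroup G] {K : Set (Set (V × G))}
    (h : ∀ σ ∈ K, Set.InjOn Prod.fst σ) : IsFreeOn G K := fun σ hσ _ hw _ hgw =>
  add_eq_left.1 (congrArg Prod.snd (h σ hσ hgw hw rfl))

attribute [local instance] arrowAddAction in
theorem exists_common_image {p ν : ℕ} [Fact p.Prime] (hν : ν ≠ 0) {V E : Type*} [Fintype V]
    [NormedAddCommGroup E] [NormedSpace ℝ E] [FiniteDimensional ℝ E]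
    {K : Set (Set (V × (Fin ν → ZMod p)))} (hK : IsLowerSet K) (h0 : ∅ ∈ K)
    (hinv : ∀ g : Fin ν → ZMod p, ∀ σ ∈ K, (g +ᵥ ·) '' σ ∈ K)
    (hfst : ∀ σ ∈ K, Set.InjOn Prod.fst σ)
    (hacyclic : IsAcyclicBelow (ZMod p) K ((p ^ ν - 1) * (Module.finrank ℝ E + 1) + 1))
    {f : (V → ℝ) → E} (hf : ContinuousOn f (stdSimplex ℝ V)) :
    ∃ σ ∈ K, ∃ y, ∀ i, y ∈ f '' closedFace {v | (v, i) ∈ σ} := by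
  let coord := (Module.finBasis ℝ E).equivFunL
  let face (x : V × (Fin ν → ZMod p) → ℝ) (i : Fin ν → ZMod p) (v : V) : ℝ := x (v, i)
  let w (x : V × (Fin ν → ZMod p) → ℝ) : Option (Fin (Module.finrank ℝ E)) →
      (Fin ν → ZMod p) → ℝ
    | none, i => ∑ v, face x i v
    | some b, i => coord (homogenize f (face x i)) b
  have hw : ∀ (g : Fin ν → ZMod p) x j i, w (g +ᵥ x) j (i + g) = w x j i := by
    have hface (g : Fin ν → ZMod p) x i : face (g +ᵥ x) (i + g) = face x i :=
      funext fun v => congrArg x (Prod.ext rfl (add_neg_cancel_right i g))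
    rintro g x (_ | b) i <;> simp only [w, hface]
  have hcont : ContinuousOn w (realization K) := by
    refine continuousOn_pi.2 fun j => continuousOn_pi.2 fun i => ?_
    have hface : Continuous fun x => face x i := by fun_prop
    rcases j with _ | b
    · exact Continuous.continuousOn (by fun_prop)
    · refine (((continuous_apply b).comp coord.continuous).comp_continuousOn
        (continuousOn_homogenize hf)).comp hface.continuousOn fun x hx v => hx.1.1 _
  obtain ⟨x, hx, hxw⟩ := exists_forall_eq hν hK h0 hinv (isFreeOn_of_injOn_fst hfst)
    (by rwa [Fintype.card_option, Fintype.card_fin]) hcont hw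
  have hsum i : ∑ v, face x i v = ∑ v, face x 0 v := hxw none i 0
  have hne : ∑ v, face x 0 v ≠ 0 := by
    intro hzero
    have hone := hx.1.2
    rw [Fintype.sum_prod_type_right,
      Finset.sum_eq_zero fun i _ => (hsum i).trans hzero] at hone
    exact zero_ne_one hone
  refine ⟨_, hx.2, f ((∑ v, face x 0 v)⁻¹ • face x 0), fun i =>
    ⟨(∑ v, face x i v)⁻¹ • face x i, ⟨?_, ?_⟩, ?_⟩⟩
  · exact inv_sum_smul_mem_stdSimplex (fun v => hx.1.1 _) (hsum i ▸ hne)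
  · intro v hv
    have hzero : face x i v = 0 := not_not.1 hv
    rw [Pi.smul_apply, hzero, smul_zero]
  · have := coord.injective (funext fun b => hxw (some b) i 0)
    rw [homogenize, homogenize, hsum i] at this
    rw [hsum i]
    exact smul_right_injective E hne this

end Pieces

section BalancedComplex

variable {V ι G : Type*} [Fintype G] {color : V → ι} {s : ℕ} {σ : Set (V × G)}

/-- The indices of the faces which meet every color class. -/
noncomputable def fullFaces (color : V → ι) (σ : Set (V × G)) : Finset G :=
  {i | ∀ c, ∃ v, (v, i) ∈ σ ∧ color v = c}

lemma mem_fullFaces {i : G} : i ∈ fullFaces color σ ↔ ∀ c, ∃ v, (v, i) ∈ σ ∧ color v = c :=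
  Finset.mem_filter_univ i

/-- The sets of pieces describing pairwise disjoint rainbow faces, at most `s` of which meet every
color class. -/
def balancedComplex (G : Type*) [Fintype G] (color : V → ι) (s : ℕ) : Set (Set (V × G)) :=
  {σ | Set.InjOn (Prod.map color id) σ ∧ Set.InjOn Prod.fst σ ∧ (fullFaces color σ).card ≤ s}

lemma empty_mem_balancedComplex [Nonempty ι] : ∅ ∈ balancedComplex G color s :=
  ⟨Set.injOn_empty _, Set.injOn_empty _, by simp [fullFaces]⟩

lemma isLowerSet_balancedComplex : IsLowerSet (balancedComplex G color s) := by
  rintro τ σ hle ⟨hcell, hfst, hfull⟩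
  refine ⟨hcell.mono hle, hfst.mono hle, (card_le_card ?_).trans hfull⟩
  exact fun i hi => mem_fullFaces.2 fun c =>
    (mem_fullFaces.1 hi c).imp fun _ h => ⟨hle h.1, h.2⟩

lemma vadd_image_mem_balancedComplex [AddCommGroup G] (g : G) (hσ : σ ∈ balancedComplex G color s) :
    (g +ᵥ ·) '' σ ∈ balancedComplex G color s := by
  obtain ⟨hcell, hfst, hfull⟩ := hσ
  refine ⟨?_, ?_, le_trans ?_ hfull⟩
  · rintro _ ⟨x, hx, rfl⟩ _ ⟨y, hy, rfl⟩ h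
    rw [hcell hx hy (Prod.ext (congrArg Prod.fst h :) (add_right_cancel (congrArg Prod.snd h :)))]
  · rintro _ ⟨x, hx, rfl⟩ _ ⟨y, hy, rfl⟩ h
    rw [hfst hx hy h]
  · refine Finset.card_le_card_of_injOn (· - g) (fun i hi => ?_) sub_left_injective.injOn
    refine mem_fullFaces.2 fun c => ?_
    obtain ⟨v, ⟨w, hw, hwv⟩, hv⟩ := mem_fullFaces.1 hi c
    refine ⟨v, ?_, hv⟩
    obtain ⟨rfl, rfl⟩ : w.1 = v ∧ w.2 + g = i := Prod.mk_inj.1 hwv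
    simpa using hw

variable [Fintype V] [Fintype ι]

/-- The board of pieces `(v, i)`, with cells `(c, i)` for a color `c` and a face index `i`: the
faces are the columns, and a vertex is a value which can be used only once. -/
def pieceBoard (G : Type*) (color : V → ι) : Board (V × G) (ι × G) V ι G where
  cell := Prod.map color id
  value := Prod.fst
  color := Prod.fst
  column := Prod.snd
  eq_of_cell_of_value _ _ hcell hvalue := Prod.ext hvalue (congrArg Prod.snd hcell :)

lemma complex_pieceBoard :
    (pieceBoard G color).complex Finset.univ Finset.univ s Finset.univ =
      balancedComplex G color s := by
  ext σ
  have htoken : Set.InjOn (pieceBoard G color).token σ ↔ Set.InjOn Prod.fst σ :=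
    ⟨fun h x hx y hy hxy => h hx hy (Prod.ext (congrArg color hxy) hxy),
      fun h x hx y hy hxy => h hx hy (congrArg Prod.snd hxy :)⟩
  have hfull : (pieceBoard G color).fullColumns Finset.univ Finset.univ σ = fullFaces color σ := by
    ext i
    simp [Board.fullColumns, fullFaces, pieceBoard]
  simp only [Board.complex, balancedComplex, Set.mem_ofPred_eq, htoken, hfull, Finset.mem_univ,
    and_self, implies_true, true_and]
  rfl

lemma hasRoom_pieceBoard [DecidableEq ι] {c : ι} (i : G)
    (hc : 2 * Fintype.card G ≤ (Finset.univ.filter fun v => color v = c).card + 1) :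
    (pieceBoard G color).HasRoom Finset.univ Finset.univ (c, i) := by
  -- The hole `(_)` stands for the classical decidability instances in `Board.HasRoom`.
  refine (Nat.mul_le_mul_left 2 ?_).trans (hc.trans (Nat.add_le_add_right ?_ 1))
  · exact Finset.card_le_card_of_injOn Prod.snd (fun _ _ => Finset.mem_univ _) fun x hx y hy h =>
      Prod.ext (((@mem_filter _ _ (_) _ _).1 hx).2.trans ((@mem_filter _ _ (_) _ _).1 hy).2.symm) h
  · exact Finset.card_le_card_of_injOn (fun v => (v, i))
      (fun v hv => (@mem_filter _ _ (_) _ _).2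
        ⟨Finset.mem_univ _, congrArg (·, i) (mem_filter.1 hv).2⟩)
      fun _ _ _ _ h => congrArg Prod.fst h

lemma isAcyclicBelow_balancedComplex [DecidableEq ι] (R : Type*) [CommRing R]
    (hs : s ≤ Fintype.card G)
    (hcolor : ∀ c, 2 * Fintype.card G ≤ (Finset.univ.filter fun v => color v = c).card + 1) :
    IsAcyclicBelow R (balancedComplex G color s)
      (Fintype.card ι * Fintype.card G + s - Fintype.card G) := by
  have := (pieceBoard G color).isAcyclicBelow_complex R (C := Finset.univ) (D := Finset.univ)
    (U := Finset.univ) hs fun e _ => hasRoom_pieceBoard e.2 (hcolor e.1)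
  rwa [complex_pieceBoard, Finset.card_univ, Fintype.card_prod] at this

end BalancedComplex

lemma exists_equiv_fin_lt {α : Type*} [Fintype α] {r s : ℕ} (hα : Fintype.card α = r)
    {S : Finset α} (hS : S.card ≤ s) : ∃ e : α ≃ Fin r, ∀ i ∈ S, (e i : ℕ) < s := by
  let e₀ := Fintype.equivFinOfCardEq hα
  let S' := S.map e₀.toEmbedding
  let T : Finset (Fin r) := Finset.univ.filter fun x => (x : ℕ) < S.card
  have hT : S'.card = T.card := by
    rw [Finset.card_map, Fin.card_filter_val_lt, min_eq_right (hα ▸ Finset.card_le_univ S)]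
  let e₁ := (Finset.equivOfCardEq hT).extendSubtype
  refine ⟨e₀.trans e₁, fun i hi => lt_of_lt_of_le ?_ hS⟩
  exact (mem_filter.1 (Equiv.extendSubtype_mem (Finset.equivOfCardEq hT) (e₀ i)
    (Finset.mem_map_of_mem _ hi))).2

theorem exists_balanced_rainbow_faces {p ν k s : ℕ} [Fact p.Prime] (hν : ν ≠ 0)
    {V ι E : Type*} [Fintype V] [Fintype ι] [DecidableEq ι] [NormedAddCommGroup E] [NormedSpace ℝ E]
    [FiniteDimensional ℝ E] (hι : Fintype.card ι = k + 1) (hs : s ≤ p ^ ν)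
    (hdim : (p ^ ν - 1) * (Module.finrank ℝ E + 1) < p ^ ν * k + s)
    {color : V → ι}
    (hcolor : ∀ c, 2 * p ^ ν - 1 ≤ (Finset.univ.filter fun v => color v = c).card)
    {f : (V → ℝ) → E} (hf : ContinuousOn f (stdSimplex ℝ V)) :
    ∃ Δ : Fin (p ^ ν) → Finset V, Pairwise (Function.onFun Disjoint Δ) ∧
      (∀ i, Set.InjOn color (Δ i)) ∧ (∀ i : Fin (p ^ ν), s ≤ i → (Δ i).card ≤ k) ∧
      ∃ y, ∀ i, y ∈ f '' closedFace (Δ i : Set V) := by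
  have hcard : Fintype.card (Fin ν → ZMod p) = p ^ ν := by simp [ZMod.card]
  have : Nonempty ι := Fintype.card_pos_iff.1 (hι ▸ k.succ_pos)
  have hroom c : 2 * Fintype.card (Fin ν → ZMod p) ≤
      (Finset.univ.filter fun v => color v = c).card + 1 := by
    have := hcolor c
    omega
  have hacyclic : IsAcyclicBelow (ZMod p) (balancedComplex (Fin ν → ZMod p) color s)
      ((p ^ ν - 1) * (Module.finrank ℝ E + 1) + 1) := by
    have h := isAcyclicBelow_balancedComplex (G := Fin ν → ZMod p) (ZMod p) (hcard ▸ hs)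
      hroom
    rw [hι, hcard, show (k + 1) * p ^ ν + s - p ^ ν = p ^ ν * k + s by grind] at h
    exact fun m hm => h m (hm.trans_le hdim)
  obtain ⟨σ, ⟨hcell, hfst, hfull⟩, y, hy⟩ := exists_common_image hν isLowerSet_balancedComplex
    empty_mem_balancedComplex (fun g _ => vadd_image_mem_balancedComplex g) (fun _ hσ => hσ.2.1)
    hacyclic hf
  obtain ⟨e, he⟩ := exists_equiv_fin_lt hcard hfull
  let Δ (i : Fin (p ^ ν)) : Finset V := Finset.univ.filter fun v => (v, e.symm i) ∈ σ
  have hrainbow i : Set.InjOn color (Δ i) := fun v hv v' hv' h =>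
    congrArg Prod.fst (hcell (mem_filter.1 hv).2 (mem_filter.1 hv').2 (Prod.ext h rfl) :)
  refine ⟨Δ, fun i j hij => Finset.disjoint_left.2 fun v hi hj => hij ?_, hrainbow,
    fun i hi => ?_, y, fun i => ?_⟩
  · exact e.symm.injective
      (congrArg Prod.snd (hfst (mem_filter.1 hi).2 (mem_filter.1 hj).2 rfl) :)
  · have hnot : e.symm i ∉ fullFaces color σ := fun h => (e.apply_symm_apply i ▸ he _ h).not_ge hi
    rw [← Finset.card_image_of_injOn (hrainbow i), ← Nat.lt_succ_iff, Nat.succ_eq_add_one, ← hι,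
      Finset.card_lt_iff_ne_univ]
    refine fun huniv => hnot (mem_fullFaces.2 fun c => ?_)
    obtain ⟨v, hv, hvc⟩ := Finset.mem_image.1 (huniv ▸ Finset.mem_univ c)
    exact ⟨v, (mem_filter.1 hv).2, hvc⟩
  · simpa [Δ] using hy (e.symm i)
lemma le_of_eq_ceil {r d k s : ℕ} (hr : 0 < r) (hk : (k : ℤ) = ⌈((r : ℚ) - 1) * d / r⌉)
    (hs : (s : ℤ) = ((r : ℤ) - 1) * d - r * ((k : ℤ) - 1)) : s ≤ r := by
  have hle : ((r : ℚ) - 1) * d ≤ (k : ℤ) * r :=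
    (div_le_iff₀ (Nat.cast_pos.2 hr)).1 (hk ▸ Int.le_ceil _)
  have hle' : ((r : ℤ) - 1) * d ≤ k * r := by exact_mod_cast hle
  zify
  linarith

lemma sub_one_mul_add_one_lt {r d k s : ℕ} (hr : 0 < r)
    (hs : (s : ℤ) = ((r : ℤ) - 1) * d - r * ((k : ℤ) - 1)) : (r - 1) * (d + 1) < r * k + s := by
  zify [hr]
  linarith

end BalancedTverberg

/-- **Balanced colored Tverberg theorem** (Theorem 1.7). Let `r = p^ν` be a prime
power, `d ≥ 1`, `k = ⌈(r-1)d/r⌉`, `s = (r-1)d - r(k-1)`, `m = (2r-1)(k+1)`, and let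
`[m] = C₁ ⊎ … ⊎ C_{k+1}` be a coloring with `|Cᵢ| = 2r-1`. Then for every continuous
map `f` from the `(m-1)`-simplex to `ℝ^d` there are `r` pairwise disjoint rainbow
faces `Δ₁, …, Δ_r` with `f(Δ₁) ∩ … ∩ f(Δ_r) ≠ ∅`, such that `|Δᵢ| ≤ k+1` for `i ≤ s`
and `|Δᵢ| ≤ k` for `i > s`. -/
theorem balanced_colored_tverberg (p ν r d k s m : ℕ)
    (hp : p.Prime) (hν : 1 ≤ ν) (hr : r = p ^ ν) (hd : 1 ≤ d)
    (hk : (k : ℤ) = ⌈((r : ℚ) - 1) * d / r⌉)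
    (hs : (s : ℤ) = ((r : ℤ) - 1) * d - r * ((k : ℤ) - 1))
    (hm : m = (2 * r - 1) * (k + 1))
    (C : Fin (k + 1) → Finset (Fin m))
    (hCpart : ∀ v : Fin m, ∃! i, v ∈ C i)
    (hCcard : ∀ i, (C i).card = 2 * r - 1)
    (f : (Fin m → ℝ) → EuclideanSpace ℝ (Fin d))
    (hf : ContinuousOn f (stdSimplex ℝ (Fin m))) :
    ∃ Δ : Fin r → Finset (Fin m),
      (∀ i j, i ≠ j → Disjoint (Δ i) (Δ j)) ∧
      -- each `Δᵢ` is a rainbow face: at most one vertex of each color class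
      (∀ i, ∀ c, ((Δ i) ∩ C c).card ≤ 1) ∧
      -- the balanced cardinality constraints
      (∀ i : Fin r, (i : ℕ) < s → (Δ i).card ≤ k + 1) ∧
      (∀ i : Fin r, s ≤ (i : ℕ) → (Δ i).card ≤ k) ∧
      -- the images of the corresponding geometric faces have a common point
      (∃ y : EuclideanSpace ℝ (Fin d), ∀ i, y ∈ f '' simplexFace m (Δ i)) := by
  subst hr
  have : Fact p.Prime := ⟨hp⟩
  have hr : 0 < p ^ ν := pow_pos hp.pos ν
  choose color hcolor hunique using hCpart
  have hC v c : v ∈ C c ↔ color v = c := ⟨fun h => (hunique v c h).symm, fun h => h ▸ hcolor v⟩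
  have hcard c : 2 * p ^ ν - 1 ≤ (Finset.univ.filter fun v => color v = c).card := by
    simp only [← hC, Finset.filter_univ_mem, hCcard, le_refl]
  obtain ⟨Δ, hdisjoint, hrainbow, hsmall, hcommon⟩ :=
    BalancedTverberg.exists_balanced_rainbow_faces (Nat.one_le_iff_ne_zero.1 hν)
      (Fintype.card_fin (k + 1)) (BalancedTverberg.le_of_eq_ceil hr hk hs)
      (by simpa using BalancedTverberg.sub_one_mul_add_one_lt hr hs) hcard hf
  refine ⟨Δ, fun i j hij => hdisjoint hij, fun i c => Finset.card_le_one.2 fun a ha b hb => ?_,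
    fun i _ => ?_, hsmall, hcommon⟩
  · rw [Finset.mem_inter, hC] at ha hb
    exact hrainbow i ha.1 hb.1 (ha.2.trans hb.2.symm)
  · simpa using Finset.card_le_card_of_injOn color (fun _ _ => Finset.mem_univ _) (hrainbow i)
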